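/- arXiv:1403.2528 — 10 statements merged into one kernel-verified Lean document; each statement's English description precedes it below -/
import Mathlib

section
/- Let m_i, m_e, ν_i, ν_e, e, c > 0 and b ≥ 0 be real numbers; set C_α = m_α²ν_α² + e²b²/c² for α = i, e, and define K_i = (1/C_i)·[[m_iν_i, e b/c],[−e b/c, m_iν_i]] and K_e = (1/C_e)·[[m_eν_e, −e b/c],[e b/c, m_eν_e]]. Then K_e (K_i + K_e)^{-1} K_i = K_i (K_i + K_e)^{-1} K_e = (1/(m_iν_i + m_eν_e)) · I₂, where I₂ is the 2×2 identity matrix. -/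
open Matrix

lemma aux_key (p q w Ci Ce : ℝ) (hp : 0 < p) (hq : 0 < q)
    (hCi : Ci = p ^ 2 + w ^ 2) (hCe : Ce = q ^ 2 + w ^ 2) :
    ((1 / Ce) • !![q, -w; w, q]) * ((1 / Ci) • !![p, w; -w, p] + (1 / Ce) • !![q, -w; w, q])⁻¹
      * ((1 / Ci) • !![p, w; -w, p]) = (1 / (p + q)) • (1 : Matrix (Fin 2) (Fin 2) ℝ) ∧
    ((1 / Ci) • !![p, w; -w, p]) * ((1 / Ci) • !![p, w; -w, p] + (1 / Ce) • !![q, -w; w, q])⁻¹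
      * ((1 / Ce) • !![q, -w; w, q]) = (1 / (p + q)) • (1 : Matrix (Fin 2) (Fin 2) ℝ) := by
  have hi : p ^ 2 + w ^ 2 ≠ 0 := by positivity
  have he : q ^ 2 + w ^ 2 ≠ 0 := by positivity
  have hs : p + q ≠ 0 := by positivity
  subst hCi hCe
  have hinv : ((1 / (p ^ 2 + w ^ 2)) • !![p, w; -w, p]
      + (1 / (q ^ 2 + w ^ 2)) • !![q, -w; w, q])⁻¹
      = (1 / (p + q)) • !![p * q + w ^ 2, (p - q) * w; -((p - q) * w), p * q + w ^ 2] := by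
    apply Matrix.inv_eq_right_inv
    ext i j
    fin_cases i <;> fin_cases j <;> simp [Matrix.mul_apply, Fin.sum_univ_two] <;>
      field_simp <;> ring
  rw [hinv]
  constructor <;>
  · ext i j
    fin_cases i <;> fin_cases j <;> simp [Matrix.mul_apply, Fin.sum_univ_two] <;>
      field_simp <;> ring

/-- The key identity `K_e (K_i+K_e)⁻¹ K_i = K_i (K_i+K_e)⁻¹ K_e = (m_iν_i+m_eν_e)⁻¹ I₂`
in the Darcy-law derivation for the two-fluid Euler–Maxwell system. -/
theorem stmt_2 (mi me νi νe e c b : ℝ)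
    (hmi : 0 < mi) (hme : 0 < me) (hνi : 0 < νi) (hνe : 0 < νe)
    (he : 0 < e) (hc : 0 < c) (hb : 0 ≤ b) :
    let Ci : ℝ := mi ^ 2 * νi ^ 2 + e ^ 2 * b ^ 2 / c ^ 2
    let Ce : ℝ := me ^ 2 * νe ^ 2 + e ^ 2 * b ^ 2 / c ^ 2
    let Ki : Matrix (Fin 2) (Fin 2) ℝ :=
      (1 / Ci) • !![mi * νi, e * b / c; -(e * b / c), mi * νi]
    let Ke : Matrix (Fin 2) (Fin 2) ℝ :=
      (1 / Ce) • !![me * νe, -(e * b / c); e * b / c, me * νe]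
    Ke * (Ki + Ke)⁻¹ * Ki = (1 / (mi * νi + me * νe)) • (1 : Matrix (Fin 2) (Fin 2) ℝ) ∧
      Ki * (Ki + Ke)⁻¹ * Ke = (1 / (mi * νi + me * νe)) • (1 : Matrix (Fin 2) (Fin 2) ℝ) := by
  intro Ci Ce Ki Ke
  exact aux_key (mi * νi) (me * νe) (e * b / c) Ci Ce (by positivity) (by positivity)
    (by simp only [Ci]; ring) (by simp only [Ce]; ring)
end

section
/- Let n > 0, m_i, m_e, ν_i, ν_e, T_i, T_e, e, c > 0 and b ≥ 0 be real numbers; put q_i = e, q_e = −e, and define the real 2×2 matrices A_α = [[−m_αν_α n, (q_α n/c) b],[−(q_α n/c) b, −m_αν_α n]] for α = i, e. Then A_i, A_e and q_i n A_i^{-1} − q_e n A_e^{-1} are invertible, and the matrix G := −q_i n A_i^{-1} (q_i n A_i^{-1} − q_e n A_e^{-1})^{-1} (T_i A_i^{-1} − T_e A_e^{-1}) + T_i A_i^{-1} equals −((T_i + T_e)/(n(m_iν_i + m_eν_e))) · I₂, where I₂ is the 2×2 identity matrix. In particular G is a scalar matrix independent of b. -/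
open Matrix


lemma aux_general (A B : Matrix (Fin 2) (Fin 2) ℝ) (s k Ti Te : ℝ) (hs : s ≠ 0) (hk : k ≠ 0)
    (hA : IsUnit A) (hB : IsUnit B) (hAB : A + B = (-s) • (1 : Matrix (Fin 2) (Fin 2) ℝ)) :
    IsUnit (k • A⁻¹ - (-k) • B⁻¹) ∧
    -((k • A⁻¹) * (k • A⁻¹ - (-k) • B⁻¹)⁻¹ * (Ti • A⁻¹ - Te • B⁻¹)) + Ti • A⁻¹ =
      (-((Ti + Te) / s)) • (1 : Matrix (Fin 2) (Fin 2) ℝ) := by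
  have hA' := (Matrix.isUnit_iff_isUnit_det A).1 hA
  have hB' := (Matrix.isUnit_iff_isUnit_det B).1 hB
  have a1 := Matrix.mul_nonsing_inv A hA'
  have a2 := Matrix.nonsing_inv_mul A hA'
  have b1 := Matrix.mul_nonsing_inv B hB'
  have hBe : B = (-s) • (1 : Matrix (Fin 2) (Fin 2) ℝ) - A := by rw [← hAB]; abel
  have hcomm : A * B = B * A := by
    rw [hBe]; simp [mul_sub, sub_mul]
  generalize A⁻¹ = X at *
  generalize B⁻¹ = Y at *
  have hM : (k • X - (-k) • Y) * ((-(k * s)⁻¹) • (A * B)) = 1 := by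
    have h1 : X * (A * B) = B := by rw [← mul_assoc, a2, one_mul]
    have h2 : Y * (A * B) = A := by
      rw [hcomm, ← mul_assoc, (mul_eq_one_comm.1 b1), one_mul]
    have : (k • X - (-k) • Y) * (A * B) = (-(k * s)) • (1 : Matrix (Fin 2) (Fin 2) ℝ) := by
      rw [sub_mul, smul_mul_assoc, smul_mul_assoc, h1, h2, neg_smul, sub_neg_eq_add,
        ← smul_add, add_comm, hAB, smul_smul]
      congr 1; ring
    rw [mul_smul_comm, this, smul_smul]
    have : -(k * s)⁻¹ * -(k * s) = 1 := by field_simp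
    rw [this, one_smul]
  refine ⟨IsUnit.of_mul_eq_one _ hM, ?_⟩
  rw [Matrix.inv_eq_right_inv hM]
  have h3 : (k • X) * ((-(k * s)⁻¹) • (A * B)) = (-s⁻¹) • B := by
    rw [smul_mul_smul_comm, ← mul_assoc, a2, one_mul]
    congr 1; field_simp
  have h4 : B * X = (-s) • X - 1 := by
    rw [hBe, sub_mul, a1, smul_mul_assoc, one_mul]
  rw [h3, mul_sub, smul_mul_smul_comm, smul_mul_smul_comm, h4, b1]
  ext i j
  simp only [Matrix.add_apply, Matrix.sub_apply, Matrix.neg_apply, Matrix.smul_apply, smul_eq_mul]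
  field_simp
  ring

lemma aux_unit (a t : ℝ) (ha : 0 < a) : IsUnit (!![-a, t; -t, -a] : Matrix (Fin 2) (Fin 2) ℝ) := by
  rw [Matrix.isUnit_iff_isUnit_det, Matrix.det_fin_two_of, isUnit_iff_ne_zero]
  nlinarith [mul_pos ha ha, mul_self_nonneg t]

/-- The velocity coefficient matrix `G` in the Darcy-law derivation is the scalar matrix
`-((T_i+T_e)/(n(m_iν_i+m_eν_e))) I₂`, independent of the background magnetic field `b`. -/
theorem stmt_3 (n mi me νi νe Ti Te e c b : ℝ)
    (hn : 0 < n) (hmi : 0 < mi) (hme : 0 < me) (hνi : 0 < νi) (hνe : 0 < νe)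
    (hTi : 0 < Ti) (hTe : 0 < Te) (he : 0 < e) (hc : 0 < c) (hb : 0 ≤ b) :
    let qi : ℝ := e
    let qe : ℝ := -e
    let Ai : Matrix (Fin 2) (Fin 2) ℝ :=
      !![-(mi * νi * n), (qi * n / c) * b; -((qi * n / c) * b), -(mi * νi * n)]
    let Ae : Matrix (Fin 2) (Fin 2) ℝ :=
      !![-(me * νe * n), (qe * n / c) * b; -((qe * n / c) * b), -(me * νe * n)]
    let M : Matrix (Fin 2) (Fin 2) ℝ := (qi * n) • Ai⁻¹ - (qe * n) • Ae⁻¹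
    IsUnit Ai ∧ IsUnit Ae ∧ IsUnit M ∧
      -(((qi * n) • Ai⁻¹) * M⁻¹ * (Ti • Ai⁻¹ - Te • Ae⁻¹)) + Ti • Ai⁻¹ =
        (-((Ti + Te) / (n * (mi * νi + me * νe)))) • (1 : Matrix (Fin 2) (Fin 2) ℝ) := by
  intro qi qe Ai Ae M
  have hi : IsUnit Ai := aux_unit _ _ (by positivity)
  have hE : IsUnit Ae := aux_unit _ _ (by positivity)
  have hs : n * (mi * νi + me * νe) ≠ 0 := by positivity
  have hk : e * n ≠ 0 := by positivity
  have hsum : Ai + Ae = (-(n * (mi * νi + me * νe))) • (1 : Matrix (Fin 2) (Fin 2) ℝ) := by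
    ext i j
    fin_cases i <;> fin_cases j <;> simp [Ai, Ae, qi, qe] <;> ring
  have h := aux_general Ai Ae _ (e * n) Ti Te hs hk hi hE hsum
  have hM : M = (e * n) • Ai⁻¹ - (-(e * n)) • Ae⁻¹ := by
    simp only [M, qi, qe, neg_mul]
  refine ⟨hi, hE, ?_, ?_⟩
  · rw [hM]; exact h.1
  · rw [hM]; exact h.2
end

section
/- Fix k ∈ ℝ³ and positive constants m_i, m_e, ν_i, ν_e, e, c; put μ₂ = c² m_iν_i m_eν_e /(4π e² (m_iν_i + m_eν_e)). Suppose û_i, û_e, Ê : ℝ → ℂ³ and B̂ : ℝ → ℂ³ is differentiable with k·B̂(t) = 0 for all t, and for all t: −e Ê(t) + m_iν_i û_i(t) = 0, e Ê(t) + m_eν_e û_e(t) = 0, −c (i k)×B̂(t) + 4π e (û_i(t) − û_e(t)) = 0, and B̂'(t) + c (i k)×Ê(t) = 0. Then for all t: Ê(t) = (c/(4π e²))·(m_iν_i m_eν_e/(m_iν_i + m_eν_e)) (i k)×B̂(t), û_i(t) = (c/(4π e))·(m_eν_e/(m_iν_i + m_eν_e)) (i k)×B̂(t), û_e(t) = −(c/(4π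 e))·(m_iν_i/(m_iν_i + m_eν_e)) (i k)×B̂(t), and B̂'(t) = −μ₂ |k|² B̂(t); in particular B̂(t) = e^{−μ₂|k|²t} B̂(0). -/
open Real Complex

/-- Cross product on `ℂ³`. -/
def cross3 (u v : Fin 3 → ℂ) : Fin 3 → ℂ :=
  ![u 1 * v 2 - u 2 * v 1, u 2 * v 0 - u 0 * v 2, u 0 * v 1 - u 1 * v 0]

/-- Fourier-transformed (at frequency `k`) asymptotic transverse electromagnetic
system: the magnetic field obeys the diffusion equation with magnetic diffusion
coefficient `μ₂ = c²m_iν_im_eν_e/(4πe²(m_iν_i+m_eν_e))`, and the velocities and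
electric field are given by the generalized Darcy law. -/
theorem stmt_6 (k : Fin 3 → ℝ) (mi me νi νe e c : ℝ)
    (hmi : 0 < mi) (hme : 0 < me) (hνi : 0 < νi) (hνe : 0 < νe)
    (he : 0 < e) (hc : 0 < c)
    (ui ue E B : ℝ → Fin 3 → ℂ)
    (hB : Differentiable ℝ B)
    (hBorth : ∀ t : ℝ, ∑ j, (k j : ℂ) * B t j = 0)
    (h1 : ∀ (t : ℝ) (j : Fin 3),
      -((e : ℂ) * E t j) + (mi : ℂ) * (νi : ℂ) * ui t j = 0)
    (h2 : ∀ (t : ℝ) (j : Fin 3),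
      (e : ℂ) * E t j + (me : ℂ) * (νe : ℂ) * ue t j = 0)
    (h3 : ∀ (t : ℝ) (j : Fin 3),
      -((c : ℂ) * cross3 (fun i => Complex.I * (k i : ℂ)) (B t) j)
        + 4 * (π : ℂ) * (e : ℂ) * (ui t j - ue t j) = 0)
    (h4 : ∀ (t : ℝ) (j : Fin 3),
      deriv B t j + (c : ℂ) * cross3 (fun i => Complex.I * (k i : ℂ)) (E t) j = 0) :
    let μ₂ : ℝ := c ^ 2 * mi * νi * me * νe / (4 * π * e ^ 2 * (mi * νi + me * νe))
    let ksq : ℝ := ∑ j, (k j) ^ 2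
    (∀ (t : ℝ) (j : Fin 3), E t j =
        ((c / (4 * π * e ^ 2) : ℝ) : ℂ) * ((mi * νi * me * νe / (mi * νi + me * νe) : ℝ) : ℂ) *
          cross3 (fun i => Complex.I * (k i : ℂ)) (B t) j) ∧
      (∀ (t : ℝ) (j : Fin 3), ui t j =
        ((c / (4 * π * e) : ℝ) : ℂ) * ((me * νe / (mi * νi + me * νe) : ℝ) : ℂ) *
          cross3 (fun i => Complex.I * (k i : ℂ)) (B t) j) ∧
      (∀ (t : ℝ) (j : Fin 3), ue t j =
        -(((c / (4 * π * e) : ℝ) : ℂ) * ((mi * νi / (mi * νi + me * νe) : ℝ) : ℂ) *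
          cross3 (fun i => Complex.I * (k i : ℂ)) (B t) j)) ∧
      (∀ (t : ℝ) (j : Fin 3), deriv B t j = -((μ₂ * ksq : ℝ) : ℂ) * B t j) ∧
      (∀ (t : ℝ) (j : Fin 3), B t j = Complex.exp (-((μ₂ * ksq * t : ℝ) : ℂ)) * B 0 j) := by
  intro μ₂ ksq
  have ha : (0:ℝ) < mi * νi := by positivity
  have hb : (0:ℝ) < me * νe := by positivity
  have hmi' : (mi : ℂ) ≠ 0 := by exact_mod_cast hmi.ne'
  have hme' : (me : ℂ) ≠ 0 := by exact_mod_cast hme.ne'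
  have hni' : (νi : ℂ) ≠ 0 := by exact_mod_cast hνi.ne'
  have hne' : (νe : ℂ) ≠ 0 := by exact_mod_cast hνe.ne'
  have he' : (e : ℂ) ≠ 0 := by exact_mod_cast he.ne'
  have hp' : (π : ℂ) ≠ 0 := by exact_mod_cast Real.pi_pos.ne'
  have hs' : (mi : ℂ) * νi + me * νe ≠ 0 := by exact_mod_cast (add_pos ha hb).ne'
  have hE : ∀ (t : ℝ) (j : Fin 3), E t j =
        ((c / (4 * π * e ^ 2) : ℝ) : ℂ) * ((mi * νi * me * νe / (mi * νi + me * νe) : ℝ) : ℂ) *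
          cross3 (fun i => Complex.I * (k i : ℂ)) (B t) j := by
    intro t j
    have a1 := h1 t j
    have a2 := h2 t j
    have a3 := h3 t j
    generalize cross3 (fun i => Complex.I * (k i : ℂ)) (B t) j = X at *
    push_cast
    field_simp
    linear_combination (mi * νi * me * νe : ℂ) * a3 - 4 * π * e * me * νe * a1
      + 4 * π * e * mi * νi * a2
  have hD : ∀ (t : ℝ) (j : Fin 3), deriv B t j = -((μ₂ * ksq : ℝ) : ℂ) * B t j := by
    intro t j
    have a4 := h4 t j
    have ho := hBorth t
    have e0 := hE t 0
    have e1 := hE t 1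
    have e2 := hE t 2
    have hμ : (μ₂ : ℂ) = c * (((c / (4 * π * e ^ 2) : ℝ) : ℂ) *
        ((mi * νi * me * νe / (mi * νi + me * νe) : ℝ) : ℂ)) := by
      simp only [μ₂]
      push_cast
      field_simp
    have hk : (ksq : ℂ) = (k 0 : ℂ) ^ 2 + (k 1 : ℂ) ^ 2 + (k 2 : ℂ) ^ 2 := by
      simp only [ksq, Fin.sum_univ_three]
      push_cast
      ring
    rw [Complex.ofReal_mul, hμ, hk]
    generalize ((c / (4 * π * e ^ 2) : ℝ) : ℂ) *
        ((mi * νi * me * νe / (mi * νi + me * νe) : ℝ) : ℂ) = A at *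
    rw [Fin.sum_univ_three] at ho
    have hI := Complex.I_sq
    fin_cases j <;>
      simp [cross3] at a4 e0 e1 e2 ⊢ <;>
      rw [eq_neg_of_add_eq_zero_left a4]
    · rw [e1, e2]
      linear_combination (-(c:ℂ) * A) * (k 0 * (k 1 * B t 1 + k 2 * B t 2) - (k 1 ^ 2 + k 2 ^ 2) * B t 0) * hI + c * A * k 0 * ho
    · rw [e0, e2]
      linear_combination (-(c:ℂ) * A) * (k 1 * (k 0 * B t 0 + k 2 * B t 2) - (k 0 ^ 2 + k 2 ^ 2) * B t 1) * hI + c * A * k 1 * ho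
    · rw [e0, e1]
      linear_combination (-(c:ℂ) * A) * (k 2 * (k 1 * B t 1 + k 0 * B t 0) - (k 1 ^ 2 + k 0 ^ 2) * B t 2) * hI + c * A * k 2 * ho
  refine ⟨hE, ?_, ?_, hD, ?_⟩
  · intro t j
    have a1 := h1 t j
    rw [hE t j] at a1
    generalize cross3 (fun i => Complex.I * (k i : ℂ)) (B t) j = X at *
    have : ui t j = e * (((c / (4 * π * e ^ 2) : ℝ) : ℂ) *
        ((mi * νi * me * νe / (mi * νi + me * νe) : ℝ) : ℂ) * X) / (mi * νi) := by
      rw [eq_div_iff (mul_ne_zero hmi' hni')]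
      linear_combination a1
    rw [this]
    push_cast
    field_simp
  · intro t j
    have a1 := h2 t j
    rw [hE t j] at a1
    generalize cross3 (fun i => Complex.I * (k i : ℂ)) (B t) j = X at *
    have : ue t j = -(e * (((c / (4 * π * e ^ 2) : ℝ) : ℂ) *
        ((mi * νi * me * νe / (mi * νi + me * νe) : ℝ) : ℂ) * X)) / (me * νe) := by
      rw [eq_div_iff (mul_ne_zero hme' hne')]
      linear_combination a1
    rw [this]
    push_cast
    field_simp
  · intro t j
    generalize μ₂ * ksq = L at *
    have hd : ∀ s : ℝ, HasDerivAt (fun s : ℝ => Complex.exp ((L : ℂ) * (s : ℂ)) * B s j) 0 s := by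
      intro s
      have hb1 : HasDerivAt (fun s => B s j) (deriv B s j) s :=
        (hasDerivAt_pi.1 (hB s).hasDerivAt) j
      have hl : HasDerivAt (fun s : ℝ => (L : ℂ) * (s : ℂ)) ((L : ℂ) * 1) s :=
        (Complex.ofRealCLM.hasDerivAt (x := s)).const_mul (L : ℂ)
      have := hl.cexp.mul hb1
      have hz : Complex.exp ((L : ℂ) * (s : ℂ)) * ((L : ℂ) * 1) * B s j
          + Complex.exp ((L : ℂ) * (s : ℂ)) * deriv B s j = 0 := by
        rw [hD]
        ring
      rw [hz] at this
      exact this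
    have hcst := is_const_of_deriv_eq_zero (fun s => (hd s).differentiableAt)
      (fun s => (hd s).deriv) t 0
    simp only [Complex.ofReal_zero, mul_zero, Complex.exp_zero, one_mul] at hcst
    rw [← hcst, ← mul_assoc, ← Complex.exp_add]
    simp
end

section
/- Let m_i, m_e, ν_i, ν_e, e > 0 be real constants and define the real cubic g(λ) = λ³ + (ν_i + ν_e)λ² + (ν_iν_e + 4π(e²/m_i + e²/m_e))λ + 4π(e²ν_e/m_i + e²ν_i/m_e). Then g(0) > 0, g(−(ν_i + ν_e)) < 0, g is strictly increasing on [0, ∞) and on (−∞, −(ν_i + ν_e)]; consequently g has at least one real root, and every real root σ of g satisfies −(ν_i + ν_e) < σ < 0. -/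
open Real

/-- Elementary properties of the cubic `g` arising as the zero-frequency factor of the
characteristic polynomial of the linearized two-fluid Euler–Maxwell system: it has at
least one real root and every real root lies in `(-(ν_i+ν_e), 0)`. -/
theorem stmt_7 (mi me νi νe e : ℝ)
    (hmi : 0 < mi) (hme : 0 < me) (hνi : 0 < νi) (hνe : 0 < νe) (he : 0 < e) :
    let g : ℝ → ℝ := fun l =>
      l ^ 3 + (νi + νe) * l ^ 2 + (νi * νe + 4 * π * (e ^ 2 / mi + e ^ 2 / me)) * l +
        4 * π * (e ^ 2 * νe / mi + e ^ 2 * νi / me)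
    (0 < g 0 ∧ g (-(νi + νe)) < 0 ∧
      StrictMonoOn g (Set.Ici (0 : ℝ)) ∧ StrictMonoOn g (Set.Iic (-(νi + νe))) ∧
      (∃ σ : ℝ, g σ = 0) ∧
      ∀ σ : ℝ, g σ = 0 → -(νi + νe) < σ ∧ σ < 0) := by
  intro g
  obtain ⟨a, ha⟩ : ∃ a, a = 4 * π * (e ^ 2 / mi) := ⟨_, rfl⟩
  obtain ⟨b, hb⟩ : ∃ b, b = 4 * π * (e ^ 2 / me) := ⟨_, rfl⟩
  have ha0 : 0 < a := by rw [ha]; positivity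
  have hb0 : 0 < b := by rw [hb]; positivity
  have hg : ∀ l, g l = l ^ 3 + (νi + νe) * l ^ 2 + (νi * νe + a + b) * l + (a * νe + b * νi) := by
    intro l
    simp only [g, ha, hb]
    ring
  have hc : Continuous g := by
    simp only [g]
    fun_prop
  clear_value g
  have hS : 0 < νi + νe := by positivity
  have hC : 0 < νi * νe + a + b := by positivity
  have h0 : 0 < g 0 := by
    have : g 0 = a * νe + b * νi := by rw [hg]; ring
    rw [this]; positivity
  have h1 : g (-(νi + νe)) < 0 := by
    have h : g (-(νi + νe)) = -(νi * νe * (νi + νe) + a * νi + b * νe) := by rw [hg]; ring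
    have : 0 < νi * νe * (νi + νe) + a * νi + b * νe := by positivity
    linarith
  have hd : ∀ x y, g y - g x = (y - x) * (x * y + (x * (x + (νi + νe)) + y * (y + (νi + νe)))
      + (νi * νe + a + b)) := by
    intro x y
    rw [hg, hg]; ring
  have m1 : StrictMonoOn g (Set.Ici (0 : ℝ)) := by
    intro x hx y hy hxy
    rw [Set.mem_Ici] at hx hy
    have := hd x y
    have h2 : 0 < y - x := by linarith
    have : 0 < g y - g x := by rw [this]; positivity
    linarith
  have m2 : StrictMonoOn g (Set.Iic (-(νi + νe))) := by
    intro x hx y hy hxy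
    rw [Set.mem_Iic] at hx hy
    have := hd x y
    have h2 : 0 < y - x := by linarith
    have h3 : 0 ≤ x * y := mul_nonneg_of_nonpos_of_nonpos (by linarith) (by linarith)
    have h4 : 0 ≤ x * (x + (νi + νe)) := mul_nonneg_of_nonpos_of_nonpos (by linarith) (by linarith)
    have h5 : 0 ≤ y * (y + (νi + νe)) := mul_nonneg_of_nonpos_of_nonpos (by linarith) (by linarith)
    have : 0 < g y - g x := by rw [this]; positivity
    linarith
  refine ⟨h0, h1, m1, m2, ?_, ?_⟩
  · obtain ⟨σ, -, h⟩ := intermediate_value_Icc (by linarith : -(νi + νe) ≤ 0) hc.continuousOn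
      ⟨h1.le, h0.le⟩
    exact ⟨σ, h⟩
  · intro σ hσ
    constructor
    · by_contra! h
      have := m2.monotoneOn (Set.mem_Iic.2 h) (Set.mem_Iic.2 le_rfl) h
      linarith
    · by_contra! h
      have := m1.monotoneOn (Set.mem_Ici.2 le_rfl) (Set.mem_Ici.2 h) h
      linarith
end

section
/- Let m_i, m_e, ν_i, ν_e, e > 0 be real constants and g(λ) = λ³ + (ν_i + ν_e)λ² + (ν_iν_e + 4π(e²/m_i + e²/m_e))λ + 4π(e²ν_e/m_i + e²ν_i/m_e). Then every complex root σ ∈ ℂ of g satisfies Re σ < 0. -/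
open Real

theorem cubic_hurwitz (a b c : ℝ) (ha : 0 < a) (hb : 0 < b) (hc : 0 < c) (habc : c < a * b)
    (s : ℂ) (h : s ^ 3 + (a : ℂ) * s ^ 2 + (b : ℂ) * s + (c : ℂ) = 0) : s.re < 0 := by
  obtain ⟨x, y⟩ := s
  have hr := congrArg Complex.re h
  have hi := congrArg Complex.im h
  simp [pow_succ] at hr hi
  show x < 0
  by_contra hx
  have hx : 0 ≤ x := not_lt.mp hx
  have hy : y * (3 * x ^ 2 - y ^ 2 + 2 * a * x + b) = 0 := by linear_combination hi
  have h1 : 0 ≤ x ^ 3 := by positivity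
  have h2 : 0 ≤ a * x ^ 2 := by positivity
  have h3 : 0 ≤ b * x := by positivity
  have h4 : 0 ≤ a ^ 2 * x := by positivity
  rcases mul_eq_zero.mp hy with h0 | h0
  · subst h0
    nlinarith
  · have : 8 * x ^ 3 + 8 * (a * x ^ 2) + 2 * (b * x) + 2 * (a ^ 2 * x) + (a * b - c) = 0 := by
      linear_combination -hr + (3 * x + a) * h0
    linarith

/-- Every complex root of the zero-frequency cubic `g` of the linearized two-fluid
Euler–Maxwell system has negative real part. -/
theorem stmt_9 (mi me νi νe e : ℝ)
    (hmi : 0 < mi) (hme : 0 < me) (hνi : 0 < νi) (hνe : 0 < νe) (he : 0 < e) :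
    ∀ σ : ℂ, σ ^ 3 + ((νi + νe : ℝ) : ℂ) * σ ^ 2
        + ((νi * νe + 4 * π * (e ^ 2 / mi + e ^ 2 / me) : ℝ) : ℂ) * σ
        + ((4 * π * (e ^ 2 * νe / mi + e ^ 2 * νi / me) : ℝ) : ℂ) = 0 →
      σ.re < 0 := by
  intro σ h
  refine cubic_hurwitz _ _ _ (by positivity) (by positivity) (by positivity) ?_ σ h
  have h1 : 0 < (νi + νe) * (νi * νe) + 4 * π * (e ^ 2 / mi * νi + e ^ 2 / me * νe) := by
    positivity
  have h2 : (νi + νe) * (νi * νe + 4 * π * (e ^ 2 / mi + e ^ 2 / me))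
      - 4 * π * (e ^ 2 * νe / mi + e ^ 2 * νi / me)
      = (νi + νe) * (νi * νe) + 4 * π * (e ^ 2 / mi * νi + e ^ 2 / me * νe) := by ring
  linarith
end

section
/- Let m_i, m_e, ν_i, ν_e, T_i, T_e, e, c > 0 with q_i = e, q_e = −e. There exist constants κ₁, κ₂ ∈ (0, 1) and λ, c₀, C₀ > 0 such that for every k ∈ ℝ³ and every solution (ρ̂_i, ρ̂_e, û_i, û_e, Ê, B̂) of the Fourier-transformed linearized two-fluid Euler–Maxwell system at frequency k, the functional ℰ(t) = Σ_{α=i,e}(T_α|ρ̂_α(t)|² + m_α|û_α(t)|²) + (1/(4π))(|Ê(t)|² + |B̂(t)|²) + κ₁ (1+|k|²)^{-1} Σ_{α=i,e} m_α Re(û_α(t)·conj(i k ρ̂_α(t))) − κ₁ (1+|k|²)^{-2} |k|² Σ_{α=i,e} (4π m_α q_α/T_α) Re(û_α(t)·conj(Ê(t))) + κ₁κ₂ (1+|k|²)^{-2} Re(Ê(t)·conj(−(i k)×B̂(t))) satisfies: (i) c₀|Û(t)|² ≤ ℰ(t) ≤ C₀|Û(t)|² for all t ≥ 0, and (ii)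 ℰ is differentiable with ℰ'(t) + λ|k|²(1+|k|²)^{-2} ℰ(t) ≤ 0 for all t > 0. -/
open Real Complex ComplexConjugate

/-- Squared Hermitian norm on `ℂ³`. -/
noncomputable def hsq (v : Fin 3 → ℂ) : ℝ := ∑ j, Complex.normSq (v j)

/-- Real part of the Hermitian pairing `∑ u_j conj(v_j)` on `ℂ³`. -/
noncomputable def hre (u v : Fin 3 → ℂ) : ℝ := (∑ j, u j * conj (v j)).re

/-- The vector `i k` with components `i k_j`. -/
def ikv (k : Fin 3 → ℝ) : Fin 3 → ℂ := fun j => Complex.I * (k j : ℂ)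

lemma le_of_sq_le_sq_aux {a b : ℝ} (hb : 0 ≤ b) (h : a ^ 2 ≤ b ^ 2) : a ≤ b :=
  (abs_le_of_sq_le_sq' h hb).2

lemma aux_abs {a b S P : ℝ} (ha : 0 ≤ a) (hb : 0 ≤ b) (h : a + b ≤ S) (hP : P ^ 2 ≤ a * b) :
    |P| ≤ S := by
  have hS : 0 ≤ S := by linarith
  apply abs_le_of_sq_le_sq _ hS
  nlinarith [mul_nonneg ha hb]

lemma aux_mul1 {a b : ℝ} (ha : 0 ≤ a) (hb : 0 ≤ b) (ha1 : a ≤ 1) (hb1 : b ≤ 1) : a * b ≤ 1 := by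
  nlinarith

lemma aux_mulS {a b S : ℝ} (ha1 : a ≤ 1) (hb : 0 ≤ b) (hbS : b ≤ S) : a * b ≤ S := by
  nlinarith

lemma aux_young (a δ : ℝ) (hδ : 0 < δ) : ∃ C : ℝ, 0 ≤ C ∧ ∀ P x y : ℝ, 0 ≤ x → 0 ≤ y →
    P ^ 2 ≤ x * y → a * P ≤ δ * x + C * y := by
  refine ⟨a ^ 2 / (4 * δ), by positivity, ?_⟩
  intro P x y hx hy h
  have h1 : 0 ≤ δ * x + a ^ 2 / (4 * δ) * y := by positivity
  apply le_of_sq_le_sq_aux h1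
  have h2 : 4 * (δ * x) * (a ^ 2 / (4 * δ) * y) = a ^ 2 * (x * y) := by
    field_simp
  nlinarith [sq_nonneg (δ * x - a ^ 2 / (4 * δ) * y), mul_le_mul_of_nonneg_left h (sq_nonneg a)]

lemma aux_b1 (m ν T : ℝ) (hT : 0 < T) (hm : 0 < m) :
    ∃ C : ℝ, 0 ≤ C ∧ ∀ s R U P D : ℝ, 0 ≤ s → 0 ≤ R → 0 ≤ U → P ^ 2 ≤ s * R * U → D ≤ s * U →
      -(T * s * R) + m * D - m * ν * P ≤ -(T / 2 * (s * R)) + m * s * U + C * U := by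
  obtain ⟨C, hC, h⟩ := aux_young (-(m * ν)) (T / 2) (by positivity)
  refine ⟨C, hC, ?_⟩
  intro s R U P D hs hR hU hP hD
  have := h P (s * R) U (by positivity) hU hP
  nlinarith [mul_le_mul_of_nonneg_left hD hm.le]

lemma aux_b2 (a b A η : ℝ) (hA : 0 < A) (hη : 0 < η) :
    ∃ C : ℝ, 0 ≤ C ∧ ∀ s X Y U Q V : ℝ, 0 ≤ s → 0 ≤ X → 0 ≤ Y → 0 ≤ U → Q ^ 2 ≤ U * X →
      V ^ 2 ≤ s * U * Y →
      a * Q + b * V ≤ A / 4 * X + η * Y + C * U + C * s * U := by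
  obtain ⟨C, hC, h⟩ := aux_young a (A / 4) (by positivity)
  obtain ⟨C', hC', h'⟩ := aux_young b η (by positivity)
  refine ⟨C + C', by positivity, ?_⟩
  intro s X Y U Q V hs hX hY hU hQ hV
  have h1 := h Q X U hX hU (by linarith)
  have h2 := h' V Y (s * U) hY (by positivity) (by linarith)
  have : 0 ≤ C' * U := by positivity
  have : 0 ≤ C * s * U := by positivity
  nlinarith

lemma aux_b3 (b c : ℝ) (hc : 0 < c) :
    ∃ C : ℝ, 0 ≤ C ∧ ∀ s Y U V : ℝ, 0 ≤ s → 0 ≤ Y → 0 ≤ U → V ^ 2 ≤ s * U * Y →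
      b * V ≤ c / 8 * (s * Y) + C * U := by
  obtain ⟨C, hC, h⟩ := aux_young b (c / 8) (by positivity)
  refine ⟨C, hC, ?_⟩
  intro s Y U V hs hY hU hV
  exact h V (s * Y) U (by positivity) hU (by linarith)

lemma aux_min (a b : ℝ) (ha : 0 < a) (hb : 0 < b) : ∃ μ : ℝ, 0 < μ ∧ μ ≤ a ∧ μ ≤ b :=
  ⟨min a b, lt_min ha hb, min_le_left _ _, min_le_right _ _⟩

set_option maxHeartbeats 1000000 in
lemma aux_dissip (mi me νi νe Ti Te A gi ge ai ae bi be f c : ℝ)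
    (hmi : 0 < mi) (hme : 0 < me) (hνi : 0 < νi) (hνe : 0 < νe)
    (hTi : 0 < Ti) (hTe : 0 < Te) (hA : 0 < A) (hgi : 0 < gi) (hge : 0 < ge) (hc : 0 < c) :
    ∃ κ₂ : ℝ, 0 < κ₂ ∧ κ₂ < 1 ∧ ∃ κb : ℝ, 0 < κb ∧ ∀ κ₁ : ℝ, 0 < κ₁ → κ₁ ≤ κb →
    ∃ μ : ℝ, 0 < μ ∧ ∀ s Ri Re Ui Ue X Y Pi Pe Qi Qe Vi Ve Z Di De N J1 J2 : ℝ,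
      0 ≤ s → 0 ≤ Ri → 0 ≤ Re → 0 ≤ Ui → 0 ≤ Ue → 0 ≤ X → 0 ≤ Y →
      Pi ^ 2 ≤ s * Ri * Ui → Pe ^ 2 ≤ s * Re * Ue →
      Qi ^ 2 ≤ Ui * X → Qe ^ 2 ≤ Ue * X →
      Vi ^ 2 ≤ s * Ui * Y → Ve ^ 2 ≤ s * Ue * Y →
      Z ^ 2 ≤ Ui * Ue → Di ≤ s * Ui → De ≤ s * Ue → N ≤ s * X → 0 ≤ J1 → 0 ≤ J2 →
      -2 * (mi * νi * Ui + me * νe * Ue)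
      + κ₁ * (1 + s)⁻¹ * (-(Ti * s * Ri) - (Te * s * Re) - J1 + mi * Di + me * De
          - mi * νi * Pi - me * νe * Pe)
      + κ₁ * ((1 + s) ^ 2)⁻¹ * s * (-J2 - A * X + (ai * Qi + bi * Vi) + (ae * Qe + be * Ve)
          + gi * (Ui - Z) + ge * (Ue - Z))
      + κ₁ * κ₂ * ((1 + s) ^ 2)⁻¹ * (-(c * s * Y) + f * Vi + (-f) * Ve + c * N)
      ≤ -(μ * (s / (1 + s) ^ 2) * (Ri + Re + Ui + Ue + X + Y)) := by
  obtain ⟨κ₂, hκ, hκ1, hκA⟩ := aux_min (1 / 2) (A / (4 * c)) (by norm_num) (by positivity)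
  have hκA' : κ₂ * c ≤ A / 4 := by
    rw [le_div_iff₀ (by positivity)] at hκA
    linarith
  refine ⟨κ₂, hκ, by linarith, ?_⟩
  obtain ⟨C1, hC1, h1⟩ := aux_b1 mi νi Ti hTi hmi
  obtain ⟨C2, hC2, h2⟩ := aux_b1 me νe Te hTe hme
  obtain ⟨C3, hC3, h3⟩ := aux_b2 ai bi A (κ₂ * c / 8) hA (by positivity)
  obtain ⟨C4, hC4, h4⟩ := aux_b2 ae be A (κ₂ * c / 8) hA (by positivity)
  obtain ⟨C5, hC5, h5⟩ := aux_b3 f c hc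
  obtain ⟨C6, hC6, h6⟩ := aux_b3 (-f) c hc
  obtain ⟨L1, hL1⟩ : ∃ L1, L1 = mi + C1 + (2 * C3 + 2 * gi + ge) + C5 := ⟨_, rfl⟩
  obtain ⟨L2, hL2⟩ : ∃ L2, L2 = me + C2 + (2 * C4 + 2 * ge + gi) + C6 := ⟨_, rfl⟩
  have hL1p : 0 < L1 := by rw [hL1]; positivity
  have hL2p : 0 < L2 := by rw [hL2]; positivity
  obtain ⟨κb, hκb, hb1, hb2⟩ := aux_min (mi * νi / L1) (me * νe / L2) (by positivity) (by positivity)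
  rw [le_div_iff₀ hL1p] at hb1
  rw [le_div_iff₀ hL2p] at hb2
  refine ⟨κb, hκb, ?_⟩
  intro κ₁ hk hkb
  obtain ⟨μ1, hμ1, l1, l2⟩ := aux_min (mi * νi) (me * νe) (by positivity) (by positivity)
  obtain ⟨μ2, hμ2, l3, l4⟩ := aux_min (κ₁ * Ti / 2) (κ₁ * Te / 2) (by positivity) (by positivity)
  obtain ⟨μ3, hμ3, l5, l6⟩ := aux_min (κ₁ * A / 4) (κ₁ * κ₂ * c / 2) (by positivity) (by positivity)
  obtain ⟨μ4, hμ4, l7, l8⟩ := aux_min μ1 μ2 hμ1 hμ2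
  obtain ⟨μ, hμ, l9, l10⟩ := aux_min μ3 μ4 hμ3 hμ4
  refine ⟨μ, hμ, ?_⟩
  intro s Ri Re Ui Ue X Y Pi Pe Qi Qe Vi Ve Z Di De N J1 J2 hs hRi hRe hUi hUe hX hY
    hPi hPe hQi hQe hVi hVe hZ hDi hDe hN hJ1 hJ2
  have e1 := h1 s Ri Ui Pi Di hs hRi hUi hPi hDi
  have e2 := h2 s Re Ue Pe De hs hRe hUe hPe hDe
  have e3 := h3 s X Y Ui Qi Vi hs hX hY hUi hQi hVi
  have e4 := h4 s X Y Ue Qe Ve hs hX hY hUe hQe hVe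
  have e5 := h5 s Y Ui Vi hs hY hUi hVi
  have e6 := h6 s Y Ue Ve hs hY hUe hVe
  have eZ : -Z ≤ Ui + Ue := by
    exact (neg_le_abs Z).trans (aux_abs hUi hUe le_rfl hZ)
  have eN := mul_le_mul_of_nonneg_left hN hc.le
  have egi := mul_le_mul_of_nonneg_left eZ hgi.le
  have ege := mul_le_mul_of_nonneg_left eZ hge.le
  obtain ⟨y, hy⟩ : ∃ y, y = (1 + s)⁻¹ := ⟨_, rfl⟩
  obtain ⟨x, hx⟩ : ∃ x, x = s * y := ⟨_, rfl⟩
  have hy0 : 0 < y := by rw [hy]; positivity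
  have hx0 : 0 ≤ x := by rw [hx]; positivity
  have hxy : x + y = 1 := by rw [hx, hy]; field_simp; ring
  have hx1 : x ≤ 1 := by linarith
  have hy1 : y ≤ 1 := by linarith
  have hw : s / (1 + s) ^ 2 = x * y := by rw [hx, hy]; field_simp
  have hy2 : ((1 + s) ^ 2)⁻¹ = y ^ 2 := by rw [hy]; simp
  rw [hw, hy2, ← hy]
  have t1 : y * (-(Ti * s * Ri) - (Te * s * Re) - J1 + mi * Di + me * De
          - mi * νi * Pi - me * νe * Pe) ≤ -(Ti / 2 * (x * Ri)) - Te / 2 * (x * Re)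
          + (mi + C1) * Ui + (me + C2) * Ue := by
    have : y * (-(Ti * s * Ri) - (Te * s * Re) - J1 + mi * Di + me * De
          - mi * νi * Pi - me * νe * Pe) ≤ y * (-(Ti / 2 * (s * Ri)) + mi * s * Ui + C1 * Ui
          + (-(Te / 2 * (s * Re)) + me * s * Ue + C2 * Ue)) :=
      mul_le_mul_of_nonneg_left (by linarith) hy0.le
    have q1 : mi * Ui * x ≤ mi * Ui * 1 := mul_le_mul_of_nonneg_left hx1 (by positivity)
    have q2 : me * Ue * x ≤ me * Ue * 1 := mul_le_mul_of_nonneg_left hx1 (by positivity)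
    have q3 : C1 * Ui * y ≤ C1 * Ui * 1 := mul_le_mul_of_nonneg_left hy1 (by positivity)
    have q4 : C2 * Ue * y ≤ C2 * Ue * 1 := mul_le_mul_of_nonneg_left hy1 (by positivity)
    rw [hx] at q1 q2 ⊢
    linarith
  have hxy1 : x * y ≤ 1 := aux_mul1 hx0 hy0.le hx1 hy1
  have hxx1 : x * x ≤ 1 := aux_mul1 hx0 hx0 hx1 hx1
  have hyy1 : y * y ≤ 1 := aux_mul1 hy0.le hy0.le hy1 hy1
  have t2 : y ^ 2 * s * (-J2 - A * X + (ai * Qi + bi * Vi) + (ae * Qe + be * Ve)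
          + gi * (Ui - Z) + ge * (Ue - Z)) ≤ -(A / 2 * (x * y * X)) + κ₂ * c / 4 * (x * y * Y)
          + (2 * C3 + 2 * gi + ge) * Ui + (2 * C4 + 2 * ge + gi) * Ue := by
    have : y ^ 2 * s * (-J2 - A * X + (ai * Qi + bi * Vi) + (ae * Qe + be * Ve)
          + gi * (Ui - Z) + ge * (Ue - Z)) ≤ y ^ 2 * s * (-(A / 2) * X + κ₂ * c / 4 * Y
          + (C3 + 2 * gi + ge) * Ui + (C4 + 2 * ge + gi) * Ue + C3 * s * Ui + C4 * s * Ue) :=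
      mul_le_mul_of_nonneg_left (by linarith) (by positivity)
    have q1 : (C3 + 2 * gi + ge) * Ui * (x * y) ≤ (C3 + 2 * gi + ge) * Ui * 1 :=
      mul_le_mul_of_nonneg_left hxy1 (by positivity)
    have q2 : (C4 + 2 * ge + gi) * Ue * (x * y) ≤ (C4 + 2 * ge + gi) * Ue * 1 :=
      mul_le_mul_of_nonneg_left hxy1 (by positivity)
    have q3 : C3 * Ui * (x * x) ≤ C3 * Ui * 1 := mul_le_mul_of_nonneg_left hxx1 (by positivity)
    have q4 : C4 * Ue * (x * x) ≤ C4 * Ue * 1 := mul_le_mul_of_nonneg_left hxx1 (by positivity)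
    rw [hx] at q1 q2 q3 q4 ⊢
    linarith
  have t3 : y ^ 2 * (-(c * s * Y) + f * Vi + (-f) * Ve + c * N) ≤
      -(3 * c / 4 * (x * y * Y)) + c * (x * y * X) + C5 * Ui + C6 * Ue := by
    have : y ^ 2 * (-(c * s * Y) + f * Vi + (-f) * Ve + c * N) ≤ y ^ 2 * (-(3 * c / 4 * (s * Y))
        + c * (s * X) + C5 * Ui + C6 * Ue) :=
      mul_le_mul_of_nonneg_left (by linarith) (by positivity)
    have q3 : C5 * Ui * (y * y) ≤ C5 * Ui * 1 := mul_le_mul_of_nonneg_left hyy1 (by positivity)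
    have q4 : C6 * Ue * (y * y) ≤ C6 * Ue * 1 := mul_le_mul_of_nonneg_left hyy1 (by positivity)
    rw [hx]
    linarith
  have t1' := mul_le_mul_of_nonneg_left t1 hk.le
  have t2' := mul_le_mul_of_nonneg_left t2 hk.le
  have t3' := mul_le_mul_of_nonneg_left t3 (mul_pos hk hκ).le
  have hxyX : 0 ≤ x * y * X := by positivity
  have hxyY : 0 ≤ x * y * Y := by positivity
  have u1 := mul_le_mul_of_nonneg_right hκA' (mul_nonneg hk.le hxyX)
  have v5 : κ₁ * κ₂ * C5 * Ui ≤ κ₁ * C5 * Ui := by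
    have : κ₂ * (κ₁ * C5 * Ui) ≤ 1 * (κ₁ * C5 * Ui) :=
      mul_le_mul_of_nonneg_right (by linarith) (by positivity)
    linarith
  have v6 : κ₁ * κ₂ * C6 * Ue ≤ κ₁ * C6 * Ue := by
    have : κ₂ * (κ₁ * C6 * Ue) ≤ 1 * (κ₁ * C6 * Ue) :=
      mul_le_mul_of_nonneg_right (by linarith) (by positivity)
    linarith
  have w1 : κ₁ * L1 * Ui ≤ mi * νi * Ui :=
    mul_le_mul_of_nonneg_right ((mul_le_mul_of_nonneg_right hkb hL1p.le).trans hb1) hUi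
  have w2 : κ₁ * L2 * Ue ≤ me * νe * Ue :=
    mul_le_mul_of_nonneg_right ((mul_le_mul_of_nonneg_right hkb hL2p.le).trans hb2) hUe
  have z1 : μ * (x * y) * Ui ≤ mi * νi * Ui := by
    apply mul_le_mul_of_nonneg_right _ hUi
    calc μ * (x * y) ≤ μ * 1 := mul_le_mul_of_nonneg_left hxy1 hμ.le
      _ ≤ _ := by linarith
  have z2 : μ * (x * y) * Ue ≤ me * νe * Ue := by
    apply mul_le_mul_of_nonneg_right _ hUe
    calc μ * (x * y) ≤ μ * 1 := mul_le_mul_of_nonneg_left hxy1 hμ.le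
      _ ≤ _ := by linarith
  have hxyx : x * y ≤ x * 1 := mul_le_mul_of_nonneg_left hy1 hx0
  have z3 : μ * (x * y) * Ri ≤ κ₁ * Ti / 2 * x * Ri := by
    apply mul_le_mul_of_nonneg_right _ hRi
    exact mul_le_mul (by linarith) (by linarith) (by positivity) (by positivity)
  have z4 : μ * (x * y) * Re ≤ κ₁ * Te / 2 * x * Re := by
    apply mul_le_mul_of_nonneg_right _ hRe
    exact mul_le_mul (by linarith) (by linarith) (by positivity) (by positivity)
  have z5 : μ * (x * y * X) ≤ κ₁ * A / 4 * (x * y * X) :=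
    mul_le_mul_of_nonneg_right (by linarith) hxyX
  have z6 : μ * (x * y * Y) ≤ κ₁ * κ₂ * c / 2 * (x * y * Y) :=
    mul_le_mul_of_nonneg_right (by linarith) hxyY
  rw [hL1] at w1
  rw [hL2] at w2
  linarith

set_option maxHeartbeats 1000000 in
lemma aux_equiv (mi me Ti Te p ai ae : ℝ)
    (hmi : 0 < mi) (hme : 0 < me) (hTi : 0 < Ti) (hTe : 0 < Te) (hp : 0 < p) :
    ∃ κb : ℝ, 0 < κb ∧ ∀ κ₁ κ₂ : ℝ, 0 < κ₁ → κ₁ ≤ κb → 0 < κ₂ → κ₂ < 1 →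
    ∃ c₀ C₀ : ℝ, 0 < c₀ ∧ 0 < C₀ ∧ ∀ s Ri Re Ui Ue X Y Pi Pe Qi Qe W : ℝ,
      0 ≤ s → 0 ≤ Ri → 0 ≤ Re → 0 ≤ Ui → 0 ≤ Ue → 0 ≤ X → 0 ≤ Y →
      Pi ^ 2 ≤ s * Ri * Ui → Pe ^ 2 ≤ s * Re * Ue →
      Qi ^ 2 ≤ Ui * X → Qe ^ 2 ≤ Ue * X → W ^ 2 ≤ s * X * Y →
      c₀ * (Ri + Re + Ui + Ue + X + Y) ≤
        (Ti * Ri + Te * Re + mi * Ui + me * Ue) + p * (X + Y)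
          + κ₁ * (1 + s)⁻¹ * (mi * Pi + me * Pe)
          - κ₁ * ((1 + s) ^ 2)⁻¹ * s * (ai * Qi + ae * Qe)
          + κ₁ * κ₂ * ((1 + s) ^ 2)⁻¹ * W ∧
        (Ti * Ri + Te * Re + mi * Ui + me * Ue) + p * (X + Y)
          + κ₁ * (1 + s)⁻¹ * (mi * Pi + me * Pe)
          - κ₁ * ((1 + s) ^ 2)⁻¹ * s * (ai * Qi + ae * Qe)
          + κ₁ * κ₂ * ((1 + s) ^ 2)⁻¹ * W ≤ C₀ * (Ri + Re + Ui + Ue + X + Y) := by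
  obtain ⟨μ1, hμ1, l1, l2⟩ := aux_min mi me hmi hme
  obtain ⟨μ2, hμ2, l3, l4⟩ := aux_min Ti Te hTi hTe
  obtain ⟨μ4, hμ4, l7, l8⟩ := aux_min μ1 μ2 hμ1 hμ2
  obtain ⟨μ, hμ, l9, l10⟩ := aux_min p μ4 hp hμ4
  obtain ⟨L, hL⟩ : ∃ L, L = mi + me + |ai| + |ae| + 1 := ⟨_, rfl⟩
  have hLp : 0 < L := by rw [hL]; positivity
  refine ⟨μ / (2 * L), by positivity, ?_⟩
  intro κ₁ κ₂ hk hkb hκ hκ1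
  rw [le_div_iff₀ (by positivity)] at hkb
  refine ⟨μ / 2, mi + me + Ti + Te + p + μ / 2, by positivity, by positivity, ?_⟩
  intro s Ri Re Ui Ue X Y Pi Pe Qi Qe W hs hRi hRe hUi hUe hX hY hPi hPe hQi hQe hW
  obtain ⟨S, hS⟩ : ∃ S, S = Ri + Re + Ui + Ue + X + Y := ⟨_, rfl⟩
  have hS0 : 0 ≤ S := by rw [hS]; positivity
  obtain ⟨y, hy⟩ : ∃ y, y = (1 + s)⁻¹ := ⟨_, rfl⟩
  obtain ⟨x, hx⟩ : ∃ x, x = s * y := ⟨_, rfl⟩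
  have hy0 : 0 < y := by rw [hy]; positivity
  have hx0 : 0 ≤ x := by rw [hx]; positivity
  have hxy : x + y = 1 := by rw [hx, hy]; field_simp; ring
  have hx1 : x ≤ 1 := by linarith
  have hy1 : y ≤ 1 := by linarith
  have hy2 : ((1 + s) ^ 2)⁻¹ = y ^ 2 := by rw [hy]; simp
  have key : ∀ P a b : ℝ, 0 ≤ a → 0 ≤ b → a + b ≤ S → P ^ 2 ≤ s * a * b → |y * P| ≤ S := by
    intro P a b ha hb hab hP
    apply aux_abs ha hb hab
    have : y ^ 2 * P ^ 2 ≤ y ^ 2 * (s * a * b) := mul_le_mul_of_nonneg_left hP (by positivity)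
    have h2 : y ^ 2 * (s * a * b) = (x * y) * (a * b) := by rw [hx]; ring
    have h3 : (x * y) * (a * b) ≤ 1 * (a * b) :=
      mul_le_mul_of_nonneg_right (aux_mul1 hx0 hy0.le hx1 hy1) (by positivity)
    rw [mul_pow]
    linarith
  have key2 : ∀ P a b : ℝ, 0 ≤ a → 0 ≤ b → a + b ≤ S → P ^ 2 ≤ a * b → |y ^ 2 * s * P| ≤ S := by
    intro P a b ha hb hab hP
    have h1 : |P| ≤ S := aux_abs ha hb hab hP
    have h2 : y ^ 2 * s = x * y := by rw [hx]; ring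
    rw [h2, abs_mul, abs_of_nonneg (by positivity)]
    exact aux_mulS (aux_mul1 hx0 hy0.le hx1 hy1) (abs_nonneg P) h1
  have k1 := key Pi Ri Ui hRi hUi (by linarith) hPi
  have k2 := key Pe Re Ue hRe hUe (by linarith) hPe
  have k3 := key2 Qi Ui X hUi hX (by linarith) hQi
  have k4 := key2 Qe Ue X hUe hX (by linarith) hQe
  have k5 := key W X Y hX hY (by linarith) hW
  have k5' : |κ₂ * y * (y * W)| ≤ S := by
    rw [abs_mul, abs_of_nonneg (by positivity)]
    exact aux_mulS (aux_mul1 hκ.le hy0.le hκ1.le hy1) (abs_nonneg _) k5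
  have m1 : |mi * (y * Pi)| ≤ mi * S := by
    rw [abs_mul, abs_of_pos hmi]; exact mul_le_mul_of_nonneg_left k1 hmi.le
  have m2 : |me * (y * Pe)| ≤ me * S := by
    rw [abs_mul, abs_of_pos hme]; exact mul_le_mul_of_nonneg_left k2 hme.le
  have m3 : |ai * (y ^ 2 * s * Qi)| ≤ |ai| * S := by
    rw [abs_mul]; exact mul_le_mul_of_nonneg_left k3 (abs_nonneg _)
  have m4 : |ae * (y ^ 2 * s * Qe)| ≤ |ae| * S := by
    rw [abs_mul]; exact mul_le_mul_of_nonneg_left k4 (abs_nonneg _)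
  rw [abs_le] at m1 m2 m3 m4 k5'
  obtain ⟨F, hF⟩ : ∃ F, F = mi * (y * Pi) + me * (y * Pe) - ai * (y ^ 2 * s * Qi)
    - ae * (y ^ 2 * s * Qe) + κ₂ * y * (y * W) := ⟨_, rfl⟩
  have hF1 : F ≤ L * S := by rw [hF, hL]; linarith [m1.2, m2.2, m3.1, m4.1, k5'.2]
  have hF2 : -(L * S) ≤ F := by rw [hF, hL]; linarith [m1.1, m2.1, m3.2, m4.2, k5'.1]
  have hLS : κ₁ * L * S ≤ μ / 2 * S := mul_le_mul_of_nonneg_right (by linarith) hS0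
  have g1 : κ₁ * F ≤ μ / 2 * S := by
    have := mul_le_mul_of_nonneg_left hF1 hk.le
    linarith
  have g2 : -(μ / 2 * S) ≤ κ₁ * F := by
    have := mul_le_mul_of_nonneg_left hF2 hk.le
    linarith
  have hE : (Ti * Ri + Te * Re + mi * Ui + me * Ue) + p * (X + Y)
          + κ₁ * (1 + s)⁻¹ * (mi * Pi + me * Pe)
          - κ₁ * ((1 + s) ^ 2)⁻¹ * s * (ai * Qi + ae * Qe)
          + κ₁ * κ₂ * ((1 + s) ^ 2)⁻¹ * W =
      (Ti * Ri + Te * Re + mi * Ui + me * Ue) + p * (X + Y) + κ₁ * F := by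
    rw [hy2, ← hy, hF]; ring
  rw [hE, ← hS]
  have low : μ * S ≤ (Ti * Ri + Te * Re + mi * Ui + me * Ue) + p * (X + Y) := by
    have r1 : μ * Ri ≤ Ti * Ri := mul_le_mul_of_nonneg_right (by linarith) hRi
    have r2 : μ * Re ≤ Te * Re := mul_le_mul_of_nonneg_right (by linarith) hRe
    have r3 : μ * Ui ≤ mi * Ui := mul_le_mul_of_nonneg_right (by linarith) hUi
    have r4 : μ * Ue ≤ me * Ue := mul_le_mul_of_nonneg_right (by linarith) hUe
    have r5 : μ * X ≤ p * X := mul_le_mul_of_nonneg_right (by linarith) hX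
    have r6 : μ * Y ≤ p * Y := mul_le_mul_of_nonneg_right (by linarith) hY
    rw [hS]; linarith
  have up : (Ti * Ri + Te * Re + mi * Ui + me * Ue) + p * (X + Y)
      ≤ (mi + me + Ti + Te + p) * S := by
    have r1 : Ti * Ri ≤ (mi + me + Ti + Te + p) * Ri := mul_le_mul_of_nonneg_right (by linarith) hRi
    have r2 : Te * Re ≤ (mi + me + Ti + Te + p) * Re := mul_le_mul_of_nonneg_right (by linarith) hRe
    have r3 : mi * Ui ≤ (mi + me + Ti + Te + p) * Ui := mul_le_mul_of_nonneg_right (by linarith) hUi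
    have r4 : me * Ue ≤ (mi + me + Ti + Te + p) * Ue := mul_le_mul_of_nonneg_right (by linarith) hUe
    have r5 : p * X ≤ (mi + me + Ti + Te + p) * X := mul_le_mul_of_nonneg_right (by linarith) hX
    have r6 : p * Y ≤ (mi + me + Ti + Te + p) * Y := mul_le_mul_of_nonneg_right (by linarith) hY
    rw [hS]; linarith
  constructor <;> linarith

lemma hre_expand (u v : Fin 3 → ℂ) : hre u v =
    (u 0).re * (v 0).re + (u 0).im * (v 0).im + ((u 1).re * (v 1).re + (u 1).im * (v 1).im)
    + ((u 2).re * (v 2).re + (u 2).im * (v 2).im) := by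
  simp [hre, Fin.sum_univ_three]

lemma hsq_eq (u : Fin 3 → ℂ) : hsq u = hre u u := by
  simp [hre_expand, hsq, Fin.sum_univ_three, Complex.normSq_apply]

lemma hre_comm (u v : Fin 3 → ℂ) : hre u v = hre v u := by
  simp only [hre_expand]; ring

lemma hsq_nonneg (u : Fin 3 → ℂ) : 0 ≤ hsq u :=
  Finset.sum_nonneg fun _ _ => Complex.normSq_nonneg _

lemma hre_neg_right (u v : Fin 3 → ℂ) : hre u (fun j => -(v j)) = -hre u v := by
  simp only [hre_expand, Complex.neg_re, Complex.neg_im]; ring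

lemma hre_sq_le (u v : Fin 3 → ℂ) : hre u v ^ 2 ≤ hsq u * hsq v := by
  rw [hsq_eq, hsq_eq]
  simp only [hre_expand]
  generalize (u 0).re = a1
  generalize (u 0).im = a2
  generalize (u 1).re = a3
  generalize (u 1).im = a4
  generalize (u 2).re = a5
  generalize (u 2).im = a6
  generalize (v 0).re = b1
  generalize (v 0).im = b2
  generalize (v 1).re = b3
  generalize (v 1).im = b4
  generalize (v 2).re = b5
  generalize (v 2).im = b6
  linarith [sq_nonneg (a1 * b2 - a2 * b1), sq_nonneg (a1 * b3 - a3 * b1),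
    sq_nonneg (a1 * b4 - a4 * b1), sq_nonneg (a1 * b5 - a5 * b1), sq_nonneg (a1 * b6 - a6 * b1),
    sq_nonneg (a2 * b3 - a3 * b2), sq_nonneg (a2 * b4 - a4 * b2), sq_nonneg (a2 * b5 - a5 * b2),
    sq_nonneg (a2 * b6 - a6 * b2), sq_nonneg (a3 * b4 - a4 * b3), sq_nonneg (a3 * b5 - a5 * b3),
    sq_nonneg (a3 * b6 - a6 * b3), sq_nonneg (a4 * b5 - a5 * b4), sq_nonneg (a4 * b6 - a6 * b4),
    sq_nonneg (a5 * b6 - a6 * b5)]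

lemma hsq_ikrho (k : Fin 3 → ℝ) (ρ : ℂ) :
    hsq (fun j => Complex.I * (k j : ℂ) * ρ) = (∑ j, k j ^ 2) * Complex.normSq ρ := by
  simp only [hsq_eq, hre_expand, Fin.sum_univ_three, Complex.normSq_apply]
  simp
  ring

lemma hsq_cross (k : Fin 3 → ℝ) (B : Fin 3 → ℂ) :
    hsq (cross3 (ikv k) B) + Complex.normSq (∑ j, (k j : ℂ) * B j) = (∑ j, k j ^ 2) * hsq B := by
  simp only [hsq_eq, hre_expand, Fin.sum_univ_three, Complex.normSq_apply]
  simp [cross3, ikv]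
  ring

lemma cross_symm (k : Fin 3 → ℝ) (E B : Fin 3 → ℂ) :
    hre (cross3 (ikv k) B) E = hre (cross3 (ikv k) E) B := by
  simp only [hre_expand]
  simp [cross3, ikv]
  ring

lemma mom_pair (m T q n : ℝ) (k : Fin 3 → ℝ) (ρ : ℂ) (u u' E v : Fin 3 → ℂ)
    (h : ∀ j : Fin 3, (m : ℂ) * u' j + (T : ℂ) * (Complex.I * (k j : ℂ)) * ρ
          - (q : ℂ) * E j + (m : ℂ) * (n : ℂ) * u j = 0) :
    m * hre u' v = -T * hre (fun j => Complex.I * (k j : ℂ) * ρ) v + q * hre E v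
      - m * n * hre u v := by
  have r := fun j => congrArg Complex.re (h j)
  have i := fun j => congrArg Complex.im (h j)
  simp at r i
  simp only [hre_expand]
  simp
  linear_combination (v 0).re * r 0 + (v 0).im * i 0 + (v 1).re * r 1 + (v 1).im * i 1
    + (v 2).re * r 2 + (v 2).im * i 2

lemma E_pair (c e : ℝ) (C ui ue E' v : Fin 3 → ℂ)
    (h : ∀ j : Fin 3, E' j - (c : ℂ) * C j
          + 4 * (π : ℂ) * ((e : ℂ) * ui j - (e : ℂ) * ue j) = 0) :
    hre E' v = c * hre C v - 4 * π * e * (hre ui v - hre ue v) := by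
  have r := fun j => congrArg Complex.re (h j)
  have i := fun j => congrArg Complex.im (h j)
  simp at r i
  simp only [hre_expand]
  linear_combination (v 0).re * r 0 + (v 0).im * i 0 + (v 1).re * r 1 + (v 1).im * i 1
    + (v 2).re * r 2 + (v 2).im * i 2

lemma B_pair (c : ℝ) (C B' v : Fin 3 → ℂ)
    (h : ∀ j : Fin 3, B' j + (c : ℂ) * C j = 0) :
    hre B' v = -c * hre C v := by
  have r := fun j => congrArg Complex.re (h j)
  have i := fun j => congrArg Complex.im (h j)
  simp at r i
  simp only [hre_expand]
  linear_combination (v 0).re * r 0 + (v 0).im * i 0 + (v 1).re * r 1 + (v 1).im * i 1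
    + (v 2).re * r 2 + (v 2).im * i 2

lemma rho_pair (k : Fin 3 → ℝ) (ρ ρ' : ℂ) (u : Fin 3 → ℂ)
    (h : ρ' + Complex.I * ∑ j, (k j : ℂ) * u j = 0) :
    (ρ' * conj ρ).re = hre u (fun j => Complex.I * (k j : ℂ) * ρ) ∧
    hre u (fun j => Complex.I * (k j : ℂ) * ρ') = Complex.normSq (∑ j, (k j : ℂ) * u j) := by
  have h' : ρ' = -(Complex.I * ∑ j, (k j : ℂ) * u j) := eq_neg_of_add_eq_zero_left h
  subst h'
  simp only [hre_expand, Fin.sum_univ_three, Complex.normSq_apply]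
  constructor
  · simp; ring
  · simp; ring

lemma ku_le (k : Fin 3 → ℝ) (B : Fin 3 → ℂ) :
    Complex.normSq (∑ j, (k j : ℂ) * B j) ≤ (∑ j, k j ^ 2) * hsq B := by
  have := hsq_cross k B
  have := hsq_nonneg (cross3 (ikv k) B)
  linarith

lemma cross_le (k : Fin 3 → ℝ) (B : Fin 3 → ℂ) :
    hsq (cross3 (ikv k) B) ≤ (∑ j, k j ^ 2) * hsq B := by
  have := hsq_cross k B
  have := Complex.normSq_nonneg (∑ j, (k j : ℂ) * B j)
  linarith

lemma gauss_pair (e : ℝ) (k : Fin 3 → ℝ) (ρi ρe : ℂ) (E : Fin 3 → ℂ)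
    (h : Complex.I * ∑ j, (k j : ℂ) * E j = 4 * (π : ℂ) * ((e : ℂ) * ρi - (e : ℂ) * ρe)) :
    e * hre E (fun j => Complex.I * (k j : ℂ) * ρi) - e * hre E (fun j => Complex.I * (k j : ℂ) * ρe)
      = -(4 * π * e ^ 2 * Complex.normSq (ρi - ρe)) := by
  have r := congrArg Complex.re h
  have i := congrArg Complex.im h
  simp [Fin.sum_univ_three] at r i
  simp only [hre_expand, Complex.normSq_apply]
  simp
  linear_combination (-e * (ρi.re - ρe.re)) * r + (-e * (ρi.im - ρe.im)) * i

lemma hasDerivAt_hre {f g : ℝ → Fin 3 → ℂ} {f' g' : Fin 3 → ℂ} {t : ℝ}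
    (hf : ∀ j, HasDerivAt (fun t => f t j) (f' j) t)
    (hg : ∀ j, HasDerivAt (fun t => g t j) (g' j) t) :
    HasDerivAt (fun t => hre (f t) (g t)) (hre f' (g t) + hre (f t) g') t := by
  have h1 : HasDerivAt (fun t => ∑ j, f t j * conj (g t j))
      (∑ j, (f' j * conj (g t j) + f t j * conj (g' j))) t := by
    apply HasDerivAt.fun_sum
    intro j _
    exact (hf j).mul (hg j).star
  have h2 := Complex.reCLM.hasFDerivAt.comp_hasDerivAt t h1
  have h3 : HasDerivAt (fun t => hre (f t) (g t))
      (∑ j, (f' j * conj (g t j) + f t j * conj (g' j))).re t := h2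
  refine h3.congr_deriv ?_
  simp [hre, Finset.sum_add_distrib]

lemma hasDerivAt_normSq {f : ℝ → ℂ} {f' : ℂ} {t : ℝ} (hf : HasDerivAt f f' t) :
    HasDerivAt (fun t => Complex.normSq (f t)) (2 * (f' * conj (f t)).re) t := by
  have h1 : HasDerivAt (fun t => f t * conj (f t)) (f' * conj (f t) + f t * conj f') t :=
    hf.mul hf.star
  have h2 := Complex.reCLM.hasFDerivAt.comp_hasDerivAt t h1
  have h3 : HasDerivAt (fun t => (f t * conj (f t)).re)
      (f' * conj (f t) + f t * conj f').re t := h2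
  have h4 : (fun t => Complex.normSq (f t)) = fun t => (f t * conj (f t)).re := by
    ext t; simp [Complex.mul_conj]
  rw [h4]
  refine h3.congr_deriv ?_
  simp; ring

lemma hasDerivAt_hsq {f : ℝ → Fin 3 → ℂ} {f' : Fin 3 → ℂ} {t : ℝ}
    (hf : ∀ j, HasDerivAt (fun t => f t j) (f' j) t) :
    HasDerivAt (fun t => hsq (f t)) (2 * hre f' (f t)) t := by
  have := hasDerivAt_hre hf hf
  simp only [hsq_eq]
  refine this.congr_deriv ?_
  rw [hre_comm (f t)]; ring

lemma hasDerivAt_cross (k : Fin 3 → ℝ) {f : ℝ → Fin 3 → ℂ} {f' : Fin 3 → ℂ} {t : ℝ}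
    (hf : ∀ j, HasDerivAt (fun t => f t j) (f' j) t) (j : Fin 3) :
    HasDerivAt (fun t => cross3 (ikv k) (f t) j) (cross3 (ikv k) f' j) t := by
  fin_cases j
  · exact ((hf 2).const_mul (ikv k 1)).sub ((hf 1).const_mul (ikv k 2))
  · exact ((hf 0).const_mul (ikv k 2)).sub ((hf 2).const_mul (ikv k 0))
  · exact ((hf 1).const_mul (ikv k 0)).sub ((hf 0).const_mul (ikv k 1))


/-- Existence of a time-frequency Lyapunov functional, equivalent to `|Û|²` and
satisfying the Lyapunov differential inequality with dissipation rate
`λ|k|²/(1+|k|²)²`, for the Fourier-transformed linearized two-fluid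
Euler–Maxwell system. -/
theorem stmt_11 (mi me νi νe Ti Te e c : ℝ)
    (hmi : 0 < mi) (hme : 0 < me) (hνi : 0 < νi) (hνe : 0 < νe)
    (hTi : 0 < Ti) (hTe : 0 < Te) (he : 0 < e) (hc : 0 < c) :
    ∃ κ₁ κ₂ lam c₀ C₀ : ℝ,
      0 < κ₁ ∧ κ₁ < 1 ∧ 0 < κ₂ ∧ κ₂ < 1 ∧ 0 < lam ∧ 0 < c₀ ∧ 0 < C₀ ∧
      ∀ (k : Fin 3 → ℝ) (ρi ρe : ℝ → ℂ) (ui ue E B : ℝ → Fin 3 → ℂ),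
        Differentiable ℝ ρi → Differentiable ℝ ρe →
        Differentiable ℝ ui → Differentiable ℝ ue →
        Differentiable ℝ E → Differentiable ℝ B →
        (∀ t : ℝ, deriv ρi t + Complex.I * ∑ j, (k j : ℂ) * ui t j = 0) →
        (∀ t : ℝ, deriv ρe t + Complex.I * ∑ j, (k j : ℂ) * ue t j = 0) →
        (∀ (t : ℝ) (j : Fin 3), (mi : ℂ) * deriv ui t j
          + (Ti : ℂ) * (Complex.I * (k j : ℂ)) * ρi t
          - (e : ℂ) * E t j + (mi : ℂ) * (νi : ℂ) * ui t j = 0) →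
        (∀ (t : ℝ) (j : Fin 3), (me : ℂ) * deriv ue t j
          + (Te : ℂ) * (Complex.I * (k j : ℂ)) * ρe t
          + (e : ℂ) * E t j + (me : ℂ) * (νe : ℂ) * ue t j = 0) →
        (∀ (t : ℝ) (j : Fin 3), deriv E t j - (c : ℂ) * cross3 (ikv k) (B t) j
          + 4 * (π : ℂ) * ((e : ℂ) * ui t j - (e : ℂ) * ue t j) = 0) →
        (∀ (t : ℝ) (j : Fin 3), deriv B t j + (c : ℂ) * cross3 (ikv k) (E t) j = 0) →
        (∀ t : ℝ, Complex.I * ∑ j, (k j : ℂ) * E t j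
          = 4 * (π : ℂ) * ((e : ℂ) * ρi t - (e : ℂ) * ρe t)) →
        (∀ t : ℝ, Complex.I * ∑ j, (k j : ℂ) * B t j = 0) →
        (let ksq : ℝ := ∑ j, (k j) ^ 2
         let En : ℝ → ℝ := fun t =>
           (Ti * Complex.normSq (ρi t) + Te * Complex.normSq (ρe t)
              + mi * hsq (ui t) + me * hsq (ue t))
           + (1 / (4 * π)) * (hsq (E t) + hsq (B t))
           + κ₁ * (1 + ksq)⁻¹ *
               (mi * hre (ui t) (fun j => Complex.I * (k j : ℂ) * ρi t)
                 + me * hre (ue t) (fun j => Complex.I * (k j : ℂ) * ρe t))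
           - κ₁ * ((1 + ksq) ^ 2)⁻¹ * ksq *
               ((4 * π * mi * e / Ti) * hre (ui t) (E t)
                 + (4 * π * me * (-e) / Te) * hre (ue t) (E t))
           + κ₁ * κ₂ * ((1 + ksq) ^ 2)⁻¹ *
               hre (E t) (fun j => -(cross3 (ikv k) (B t) j))
         let Usq : ℝ → ℝ := fun t =>
           Complex.normSq (ρi t) + Complex.normSq (ρe t)
             + hsq (ui t) + hsq (ue t) + hsq (E t) + hsq (B t)
         (∀ t : ℝ, 0 ≤ t → c₀ * Usq t ≤ En t ∧ En t ≤ C₀ * Usq t) ∧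
           ∀ t : ℝ, 0 < t → ∃ d : ℝ, HasDerivAt En d t ∧
             d + lam * ksq / (1 + ksq) ^ 2 * En t ≤ 0) := by
  have hπ := Real.pi_pos
  obtain ⟨κ₂, hκ₂, hκ₂1, κb, hκb, hdis⟩ := aux_dissip mi me νi νe Ti Te
    (4 * π * e ^ 2 / Ti + 4 * π * e ^ 2 / Te) ((4 * π * e) ^ 2 * mi / Ti) ((4 * π * e) ^ 2 * me / Te)
    (4 * π * e * mi * νi / Ti) (-(4 * π * e * me * νe / Te))
    (-(4 * π * e * c * mi / Ti)) (4 * π * e * c * me / Te) (4 * π * e) c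
    hmi hme hνi hνe hTi hTe (by positivity) (by positivity) (by positivity) hc
  obtain ⟨κb', hκb', heq⟩ := aux_equiv mi me Ti Te (1 / (4 * π)) (4 * π * mi * e / Ti)
    (4 * π * me * (-e) / Te) hmi hme hTi hTe (by positivity)
  obtain ⟨κ₀, hκ₀, hk1, hk2⟩ := aux_min κb κb' hκb hκb'
  obtain ⟨κ₁, hκ₁, hk3, hk4⟩ := aux_min κ₀ (1 / 2) hκ₀ (by norm_num)
  obtain ⟨μ, hμ, hdis⟩ := hdis κ₁ hκ₁ (by linarith)
  obtain ⟨c₀, C₀, hc₀, hC₀, heq⟩ := heq κ₁ κ₂ hκ₁ (by linarith) hκ₂ hκ₂1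
  refine ⟨κ₁, κ₂, μ / C₀, c₀, C₀, hκ₁, by linarith, hκ₂, hκ₂1, by positivity, hc₀, hC₀, ?_⟩
  intro k ρi ρe ui ue E B dρi dρe dui due dE dB eρi eρe eui eue eE eB gE gB ksq En Usq
  have hks : 0 ≤ ksq := Finset.sum_nonneg fun _ _ => sq_nonneg _
  have cross_bd : ∀ (u B : Fin 3 → ℂ), hre u (cross3 (ikv k) B) ^ 2 ≤ ksq * hsq u * hsq B := by
    intro u B
    have h1 := hre_sq_le u (cross3 (ikv k) B)
    have h2 := mul_le_mul_of_nonneg_left (cross_le k B) (hsq_nonneg u)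
    calc _ ≤ _ := h1
      _ ≤ _ := h2
      _ = _ := by simp only [ksq]; ring
  have rho_bd : ∀ (u : Fin 3 → ℂ) (ρ : ℂ), hre u (fun j => Complex.I * (k j : ℂ) * ρ) ^ 2
      ≤ ksq * Complex.normSq ρ * hsq u := by
    intro u ρ
    have h1 := hre_sq_le u (fun j => Complex.I * (k j : ℂ) * ρ)
    rw [hsq_ikrho] at h1
    calc _ ≤ _ := h1
      _ = _ := by simp only [ksq]; ring
  have hequiv : ∀ t : ℝ, c₀ * Usq t ≤ En t ∧ En t ≤ C₀ * Usq t := by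
    intro t
    refine heq ksq _ _ _ _ _ _ _ _ _ _ _ hks (Complex.normSq_nonneg _) (Complex.normSq_nonneg _)
      (hsq_nonneg _) (hsq_nonneg _) (hsq_nonneg _) (hsq_nonneg _) (rho_bd _ _) (rho_bd _ _)
      (hre_sq_le _ _) (hre_sq_le _ _) ?_
    rw [hre_neg_right, neg_sq]
    exact cross_bd _ _
  refine ⟨fun t _ => hequiv t, ?_⟩
  intro t _
  have Hρi := (dρi t).hasDerivAt
  have Hρe := (dρe t).hasDerivAt
  have Hui := hasDerivAt_pi.1 (dui t).hasDerivAt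
  have Hue := hasDerivAt_pi.1 (due t).hasDerivAt
  have HE := hasDerivAt_pi.1 (dE t).hasDerivAt
  have HB := hasDerivAt_pi.1 (dB t).hasDerivAt
  have HC : ∀ j, HasDerivAt (fun t => -(cross3 (ikv k) (B t) j))
      (-(cross3 (ikv k) (deriv B t) j)) t := fun j => (hasDerivAt_cross k HB j).neg
  have Hki : ∀ j, HasDerivAt (fun t => Complex.I * (k j : ℂ) * ρi t)
      (Complex.I * (k j : ℂ) * deriv ρi t) t := fun j => Hρi.const_mul _
  have Hke : ∀ j, HasDerivAt (fun t => Complex.I * (k j : ℂ) * ρe t)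
      (Complex.I * (k j : ℂ) * deriv ρe t) t := fun j => Hρe.const_mul _
  have HEn := ((((((((hasDerivAt_normSq Hρi).const_mul Ti).add
      ((hasDerivAt_normSq Hρe).const_mul Te)).add
      ((hasDerivAt_hsq Hui).const_mul mi)).add ((hasDerivAt_hsq Hue).const_mul me)).add
      (((hasDerivAt_hsq HE).add (hasDerivAt_hsq HB)).const_mul (1 / (4 * π)))).add
      ((((hasDerivAt_hre Hui Hki).const_mul mi).add
        ((hasDerivAt_hre Hue Hke).const_mul me)).const_mul (κ₁ * (1 + ksq)⁻¹))).sub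
      ((((hasDerivAt_hre Hui HE).const_mul (4 * π * mi * e / Ti)).add
        ((hasDerivAt_hre Hue HE).const_mul (4 * π * me * (-e) / Te))).const_mul
          (κ₁ * ((1 + ksq) ^ 2)⁻¹ * ksq))).add
      ((hasDerivAt_hre HE HC).const_mul (κ₁ * κ₂ * ((1 + ksq) ^ 2)⁻¹))
  refine ⟨_, HEn, ?_⟩
  clear HEn
  have mI := fun v => mom_pair mi Ti e νi k (ρi t) (ui t) (deriv ui t) (E t) v (eui t)
  have mE := fun v => mom_pair me Te (-e) νe k (ρe t) (ue t) (deriv ue t) (E t) v (by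
    intro j
    have := eue t j
    push_cast
    linear_combination this)
  have pE := fun v => E_pair c e (cross3 (ikv k) (B t)) (ui t) (ue t) (deriv E t) v (eE t)
  have pB := fun v => B_pair c (cross3 (ikv k) (E t)) (deriv B t) v (eB t)
  obtain ⟨ri1, ri2⟩ := rho_pair k (ρi t) (deriv ρi t) (ui t) (eρi t)
  obtain ⟨re1, re2⟩ := rho_pair k (ρe t) (deriv ρe t) (ue t) (eρe t)
  have g := gauss_pair e k (ρi t) (ρe t) (E t) (gE t)
  have gB' : ∑ j, (k j : ℂ) * B t j = 0 := by
    have := gB t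
    simpa using this
  have hBB := hsq_cross k (B t)
  rw [gB', map_zero, add_zero, hsq_eq] at hBB
  have key := hdis ksq (Complex.normSq (ρi t)) (Complex.normSq (ρe t)) (hsq (ui t)) (hsq (ue t))
    (hsq (E t)) (hsq (B t))
    (hre (ui t) (fun j => Complex.I * (k j : ℂ) * ρi t))
    (hre (ue t) (fun j => Complex.I * (k j : ℂ) * ρe t))
    (hre (ui t) (E t)) (hre (ue t) (E t))
    (hre (ui t) (cross3 (ikv k) (B t))) (hre (ue t) (cross3 (ikv k) (B t)))
    (hre (ui t) (ue t))
    (Complex.normSq (∑ j, (k j : ℂ) * ui t j)) (Complex.normSq (∑ j, (k j : ℂ) * ue t j))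
    (hsq (cross3 (ikv k) (E t)))
    (4 * π * e ^ 2 * Complex.normSq (ρi t - ρe t))
    (4 * π * (4 * π * e ^ 2 * Complex.normSq (ρi t - ρe t)))
    hks (Complex.normSq_nonneg _) (Complex.normSq_nonneg _)
    (hsq_nonneg _) (hsq_nonneg _) (hsq_nonneg _) (hsq_nonneg _) (rho_bd _ _) (rho_bd _ _)
    (hre_sq_le _ _) (hre_sq_le _ _) (cross_bd _ _) (cross_bd _ _) (hre_sq_le _ _)
    (ku_le _ _) (ku_le _ _) (cross_le _ _)
    (mul_nonneg (by positivity) (Complex.normSq_nonneg _))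
    (mul_nonneg (by positivity) (mul_nonneg (by positivity) (Complex.normSq_nonneg _)))
  have hup : μ / C₀ * ksq / (1 + ksq) ^ 2 * En t
      ≤ μ * (ksq / (1 + ksq) ^ 2) * Usq t := by
    calc μ / C₀ * ksq / (1 + ksq) ^ 2 * En t ≤ μ / C₀ * ksq / (1 + ksq) ^ 2 * (C₀ * Usq t) :=
          mul_le_mul_of_nonneg_left (hequiv t).2 (by positivity)
      _ = _ := by field_simp
  have hUs : Usq t = Complex.normSq (ρi t) + Complex.normSq (ρe t)
             + hsq (ui t) + hsq (ue t) + hsq (E t) + hsq (B t) := rfl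
  rw [← hUs] at key
  refine le_trans (add_le_add (le_of_eq ?_) hup) (le_trans (add_le_add_left key _) (by linarith))
  -- bracket identities
  have i0 : Ti * (2 * (deriv ρi t * conj (ρi t)).re) + Te * (2 * (deriv ρe t * conj (ρe t)).re)
      + mi * (2 * hre (deriv ui t) (ui t)) + me * (2 * hre (deriv ue t) (ue t))
      + 1 / (4 * π) * (2 * hre (deriv E t) (E t) + 2 * hre (deriv B t) (B t))
      = -2 * (mi * νi * hsq (ui t) + me * νe * hsq (ue t)) := by
    have a1 := mI (ui t)
    have a2 := mE (ue t)
    rw [hre_comm (fun j => Complex.I * (k j : ℂ) * ρi t)] at a1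
    rw [hre_comm (fun j => Complex.I * (k j : ℂ) * ρe t)] at a2
    rw [ri1, re1, pE, pB, hsq_eq, hsq_eq, cross_symm k (E t) (B t)]
    rw [hre_comm (E t)] at a1 a2
    have : 1 / (4 * π) * (4 * π) = 1 := by field_simp
    linear_combination 2 * a1 + 2 * a2
      - 2 * e * (hre (ui t) (E t) - hre (ue t) (E t)) * this
  have i1 : mi * (hre (deriv ui t) (fun j => Complex.I * (k j : ℂ) * ρi t)
        + hre (ui t) (fun j => Complex.I * (k j : ℂ) * deriv ρi t))
      + me * (hre (deriv ue t) (fun j => Complex.I * (k j : ℂ) * ρe t)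
        + hre (ue t) (fun j => Complex.I * (k j : ℂ) * deriv ρe t))
      = -(Ti * ksq * Complex.normSq (ρi t)) - (Te * ksq * Complex.normSq (ρe t))
        - 4 * π * e ^ 2 * Complex.normSq (ρi t - ρe t)
        + mi * Complex.normSq (∑ j, (k j : ℂ) * ui t j)
        + me * Complex.normSq (∑ j, (k j : ℂ) * ue t j)
        - mi * νi * hre (ui t) (fun j => Complex.I * (k j : ℂ) * ρi t)
        - me * νe * hre (ue t) (fun j => Complex.I * (k j : ℂ) * ρe t) := by
    have a1 := mI (fun j => Complex.I * (k j : ℂ) * ρi t)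
    have a2 := mE (fun j => Complex.I * (k j : ℂ) * ρe t)
    rw [← hsq_eq, hsq_ikrho] at a1 a2
    rw [ri2, re2]
    linear_combination a1 + a2 + g
  have i2 : (4 * π * mi * e / Ti) * (hre (deriv ui t) (E t) + hre (ui t) (deriv E t))
      + (4 * π * me * (-e) / Te) * (hre (deriv ue t) (E t) + hre (ue t) (deriv E t))
      = -(-(4 * π * (4 * π * e ^ 2 * Complex.normSq (ρi t - ρe t)))
        - (4 * π * e ^ 2 / Ti + 4 * π * e ^ 2 / Te) * hsq (E t)
        + (4 * π * e * mi * νi / Ti * hre (ui t) (E t)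
          + -(4 * π * e * c * mi / Ti) * hre (ui t) (cross3 (ikv k) (B t)))
        + (-(4 * π * e * me * νe / Te) * hre (ue t) (E t)
          + 4 * π * e * c * me / Te * hre (ue t) (cross3 (ikv k) (B t)))
        + (4 * π * e) ^ 2 * mi / Ti * (hsq (ui t) - hre (ui t) (ue t))
        + (4 * π * e) ^ 2 * me / Te * (hsq (ue t) - hre (ui t) (ue t))) := by
    have a1 := mI (E t)
    have a2 := mE (E t)
    rw [hre_comm (ui t) (deriv E t), hre_comm (ue t) (deriv E t), pE, pE,
      hre_comm (cross3 (ikv k) (B t)), hre_comm (cross3 (ikv k) (B t)), hre_comm (ue t) (ui t),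
      ← hsq_eq, ← hsq_eq]
    rw [hre_comm (fun j => Complex.I * (k j : ℂ) * ρi t), ← hsq_eq] at a1
    rw [hre_comm (fun j => Complex.I * (k j : ℂ) * ρe t), ← hsq_eq] at a2
    have q1 : Ti * Ti⁻¹ = 1 := by field_simp
    have q2 : Te * Te⁻¹ = 1 := by field_simp
    simp only [div_eq_mul_inv]
    linear_combination 4 * π * e * Ti⁻¹ * a1 - 4 * π * e * Te⁻¹ * a2 - 4 * π * g
      - 4 * π * e * hre (E t) (fun j => Complex.I * (k j : ℂ) * ρi t) * q1
      + 4 * π * e * hre (E t) (fun j => Complex.I * (k j : ℂ) * ρe t) * q2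
  have i3 : hre (deriv E t) (fun j => -(cross3 (ikv k) (B t) j))
      + hre (E t) (fun j => -(cross3 (ikv k) (deriv B t) j))
      = -(c * ksq * hsq (B t)) + 4 * π * e * hre (ui t) (cross3 (ikv k) (B t))
        + (-(4 * π * e)) * hre (ue t) (cross3 (ikv k) (B t)) + c * hsq (cross3 (ikv k) (E t)) := by
    rw [hre_neg_right, hre_neg_right, pE, hre_comm (E t), cross_symm k (E t) (deriv B t),
      hre_comm (cross3 (ikv k) (E t)), pB, ← hsq_eq (cross3 (ikv k) (E t))]
    linear_combination (-c) * hBB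
  rw [i1, i2, i3]
  linear_combination i0
end

section
/- Let m_i, m_e, ν_i, ν_e, T_i, T_e, e, c > 0 with q_i = e, q_e = −e. There exist constants C, λ > 0 such that for every k ∈ ℝ³, every solution (ρ̂_i, ρ̂_e, û_i, û_e, Ê, B̂) of the Fourier-transformed linearized two-fluid Euler–Maxwell system at frequency k satisfies |Û(t)| ≤ C exp(−λ|k|²t/(1+|k|²)²) |Û(0)| for all t ≥ 0. -/
open Real Complex

noncomputable def rp (x y : ℂ) : ℝ := x.re * y.re + x.im * y.im
noncomputable def ip (a b : Fin 3 → ℂ) : ℝ := ∑ j, rp (a j) (b j)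
noncomputable def gr (k : Fin 3 → ℝ) (r : ℂ) : Fin 3 → ℂ := fun j => Complex.I * (k j : ℂ) * r
noncomputable def dv (k : Fin 3 → ℝ) (a : Fin 3 → ℂ) : ℂ := Complex.I * ∑ j, (k j : ℂ) * a j

lemma ip_self (a : Fin 3 → ℂ) : ip a a = hsq a := by
  simp [ip, hsq, rp, Complex.normSq_apply]

lemma rp_self (a : ℂ) : rp a a = Complex.normSq a := by
  simp [rp, Complex.normSq_apply]

lemma ip_comm (a b : Fin 3 → ℂ) : ip a b = ip b a := by
  simp [ip, rp, mul_comm]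

lemma hsq_nn (a : Fin 3 → ℂ) : 0 ≤ hsq a :=
  Finset.sum_nonneg fun _ _ => Complex.normSq_nonneg _

lemma ip_gr (k : Fin 3 → ℝ) (a : Fin 3 → ℂ) (r : ℂ) : ip a (gr k r) = - rp (dv k a) r := by
  simp [ip, rp, gr, dv, Fin.sum_univ_three]; ring

lemma hsq_gr (k : Fin 3 → ℝ) (r : ℂ) : hsq (gr k r) = (∑ j, (k j)^2) * Complex.normSq r := by
  simp [hsq, gr, Fin.sum_univ_three]; ring

lemma normSq_dv (k : Fin 3 → ℝ) (a : Fin 3 → ℂ) :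
    hsq (cross3 (ikv k) a) = (∑ j, (k j)^2) * hsq a - Complex.normSq (dv k a) := by
  simp [hsq, dv, cross3, ikv, Fin.sum_univ_three, Complex.normSq_apply]; ring

lemma normSq_dv_le (k : Fin 3 → ℝ) (a : Fin 3 → ℂ) :
    Complex.normSq (dv k a) ≤ (∑ j, (k j)^2) * hsq a := by
  have := normSq_dv k a
  have := hsq_nn (cross3 (ikv k) a)
  linarith

lemma hsq_cross_le (k : Fin 3 → ℝ) (a : Fin 3 → ℂ) :
    hsq (cross3 (ikv k) a) ≤ (∑ j, (k j)^2) * hsq a := by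
  have := normSq_dv k a
  have := Complex.normSq_nonneg (dv k a)
  linarith

lemma ip_cross (k : Fin 3 → ℝ) (a b : Fin 3 → ℂ) :
    ip (cross3 (ikv k) a) b = ip a (cross3 (ikv k) b) := by
  simp [ip, rp, cross3, ikv, Fin.sum_univ_three]; ring

lemma ip_abs (a b : Fin 3 → ℂ) (d : ℝ) (hd : 0 < d) :
    |ip a b| ≤ d * hsq a + hsq b / (4 * d) := by
  have key : ∀ x y : ℝ, |x * y| ≤ d * (x*x) + (y*y) / (4*d) := by
    intro x y
    have e1 : d * (x*x) + (y*y) / (4*d) - x*y = (2*d*x - y)^2 / (4*d) := by field_simp; ring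
    have e2 : d * (x*x) + (y*y) / (4*d) + x*y = (2*d*x + y)^2 / (4*d) := by field_simp; ring
    have p1 : 0 ≤ (2*d*x - y)^2 / (4*d) := by positivity
    have p2 : 0 ≤ (2*d*x + y)^2 / (4*d) := by positivity
    rw [abs_le]; constructor <;> linarith
  unfold ip hsq
  rw [Finset.mul_sum, Finset.sum_div, ← Finset.sum_add_distrib]
  refine (Finset.abs_sum_le_sum_abs _ _).trans (Finset.sum_le_sum fun j _ => ?_)
  have h1 := key (a j).re (b j).re
  have h2 := key (a j).im (b j).im
  unfold rp
  rw [Complex.normSq_apply, Complex.normSq_apply]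
  have h3 := abs_add_le ((a j).re * (b j).re) ((a j).im * (b j).im)
  rw [mul_add, add_div]
  linarith

lemma rp_deriv {x y : ℝ → ℂ} {x' y' : ℂ} {t : ℝ} (hx : HasDerivAt x x' t) (hy : HasDerivAt y y' t) :
    HasDerivAt (fun t => rp (x t) (y t)) (rp x' (y t) + rp (x t) y') t := by
  have re : ∀ {z : ℝ → ℂ} {z' : ℂ}, HasDerivAt z z' t → HasDerivAt (fun t => (z t).re) z'.re t :=
    fun h => Complex.reCLM.hasFDerivAt.comp_hasDerivAt t h
  have im : ∀ {z : ℝ → ℂ} {z' : ℂ}, HasDerivAt z z' t → HasDerivAt (fun t => (z t).im) z'.im t :=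
    fun h => Complex.imCLM.hasFDerivAt.comp_hasDerivAt t h
  have := ((re hx).mul (re hy)).add ((im hx).mul (im hy))
  refine this.congr_deriv ?_
  unfold rp; ring

lemma ip_deriv {a b : ℝ → Fin 3 → ℂ} {a' b' : Fin 3 → ℂ} {t : ℝ}
    (ha : HasDerivAt a a' t) (hb : HasDerivAt b b' t) :
    HasDerivAt (fun t => ip (a t) (b t)) (ip a' (b t) + ip (a t) b') t := by
  have := HasDerivAt.fun_sum (u := Finset.univ) fun j _ =>
    rp_deriv (hasDerivAt_pi.1 ha j) (hasDerivAt_pi.1 hb j)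
  refine this.congr_deriv ?_
  unfold ip; rw [Finset.sum_add_distrib]

lemma gr_deriv (k : Fin 3 → ℝ) {r : ℝ → ℂ} {r' : ℂ} {t : ℝ} (h : HasDerivAt r r' t) :
    HasDerivAt (fun t => gr k (r t)) (gr k r') t :=
  hasDerivAt_pi.2 fun _ => h.const_mul _

lemma cross_deriv (k : Fin 3 → ℝ) {r : ℝ → Fin 3 → ℂ} {r' : Fin 3 → ℂ} {t : ℝ}
    (h : HasDerivAt r r' t) :
    HasDerivAt (fun t => cross3 (ikv k) (r t)) (cross3 (ikv k) r') t := by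
  have h' := hasDerivAt_pi.1 h
  refine hasDerivAt_pi.2 fun j => ?_
  fin_cases j
  · exact ((h' 2).const_mul (ikv k 1)).sub ((h' 1).const_mul (ikv k 2))
  · exact ((h' 0).const_mul (ikv k 2)).sub ((h' 2).const_mul (ikv k 0))
  · exact ((h' 1).const_mul (ikv k 0)).sub ((h' 0).const_mul (ikv k 1))

lemma mom_eq (k : Fin 3 → ℝ) (m T q ν : ℝ) (u' u E : Fin 3 → ℂ) (r : ℂ)
    (h : ∀ j, (m : ℂ) * u' j + (T : ℂ) * (Complex.I * (k j : ℂ)) * r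
      - (q : ℂ) * E j + (m : ℂ) * (ν : ℂ) * u j = 0) (w : Fin 3 → ℂ) :
    m * ip u' w = - T * ip (gr k r) w + q * ip E w - m * ν * ip u w := by
  have hr := fun j => congrArg Complex.re (h j)
  have hi := fun j => congrArg Complex.im (h j)
  simp at hr hi
  simp only [ip, rp, gr, Fin.sum_univ_three]
  simp
  linear_combination (w 0).re * hr 0 + (w 1).re * hr 1 + (w 2).re * hr 2
    + (w 0).im * hi 0 + (w 1).im * hi 1 + (w 2).im * hi 2

lemma E_eq (k : Fin 3 → ℝ) (e c : ℝ) (E' B u v : Fin 3 → ℂ)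
    (h : ∀ j, E' j - (c : ℂ) * cross3 (ikv k) B j
          + 4 * (π : ℂ) * ((e : ℂ) * u j - (e : ℂ) * v j) = 0) (w : Fin 3 → ℂ) :
    ip E' w = c * ip (cross3 (ikv k) B) w - 4 * π * e * (ip u w - ip v w) := by
  generalize cross3 (ikv k) B = X at *
  have hr := fun j => congrArg Complex.re (h j)
  have hi := fun j => congrArg Complex.im (h j)
  simp at hr hi
  simp only [ip, rp, Fin.sum_univ_three]
  linear_combination (w 0).re * hr 0 + (w 1).re * hr 1 + (w 2).re * hr 2
    + (w 0).im * hi 0 + (w 1).im * hi 1 + (w 2).im * hi 2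

lemma B_eq (k : Fin 3 → ℝ) (c : ℝ) (B' E : Fin 3 → ℂ)
    (h : ∀ j, B' j + (c : ℂ) * cross3 (ikv k) E j = 0) (w : Fin 3 → ℂ) :
    ip B' w = - c * ip (cross3 (ikv k) E) w := by
  generalize cross3 (ikv k) E = X at *
  have hr := fun j => congrArg Complex.re (h j)
  have hi := fun j => congrArg Complex.im (h j)
  simp at hr hi
  simp only [ip, rp, Fin.sum_univ_three]
  linear_combination (w 0).re * hr 0 + (w 1).re * hr 1 + (w 2).re * hr 2
    + (w 0).im * hi 0 + (w 1).im * hi 1 + (w 2).im * hi 2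

lemma rp_neg_left (x y : ℂ) : rp (-x) y = - rp x y := by simp [rp]; ring

lemma ip_gr_neg (k : Fin 3 → ℝ) (a : Fin 3 → ℂ) :
    ip a (gr k (-(dv k a))) = Complex.normSq (dv k a) := by
  rw [ip_gr, ← rp_self]; simp [rp]; ring

lemma gauss (k : Fin 3 → ℝ) (e : ℝ) (E : Fin 3 → ℂ) (r1 r2 : ℂ)
    (h : dv k E = 4 * (π : ℂ) * ((e : ℂ) * r1 - (e : ℂ) * r2)) :
    ip E (gr k r1) - ip E (gr k r2) = - (4 * π * e * Complex.normSq (r1 - r2)) := by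
  rw [ip_gr, ip_gr, h]; simp [rp, Complex.normSq_apply]; ring

/-- energy -/
noncomputable def En (mi me Ti Te : ℝ) (r1 r2 : ℂ) (u v E B : Fin 3 → ℂ) : ℝ :=
  Ti * rp r1 r1 + Te * rp r2 r2 + mi * ip u u + me * ip v v + (ip E E + ip B B) / (4 * π)

structure PW (mi me νi νe Ti Te e c : ℝ) (k : Fin 3 → ℝ) (r1 r2 : ℂ) (u v E B : Fin 3 → ℂ)
    (r1' r2' : ℂ) (u' v' E' B' : Fin 3 → ℂ) : Prop where
  h1 : r1' = - dv k u
  h2 : r2' = - dv k v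
  hu : ∀ w, mi * ip u' w = - Ti * ip (gr k r1) w + e * ip E w - mi * νi * ip u w
  hv : ∀ w, me * ip v' w = - Te * ip (gr k r2) w + (-e) * ip E w - me * νe * ip v w
  hE : ∀ w, ip E' w = c * ip (cross3 (ikv k) B) w - 4 * π * e * (ip u w - ip v w)
  hB : ∀ w, ip B' w = - c * ip (cross3 (ikv k) E) w
  hg : ip E (gr k r1) - ip E (gr k r2) = - (4 * π * e * Complex.normSq (r1 - r2))
  hb : dv k B = 0

section
variable {mi me νi νe Ti Te e c : ℝ} {k : Fin 3 → ℝ} {r1 r2 : ℂ} {u v E B : Fin 3 → ℂ}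
    {r1' r2' : ℂ} {u' v' E' B' : Fin 3 → ℂ}

lemma rp_comm (a b : ℂ) : rp a b = rp b a := by simp [rp, mul_comm]

lemma dEn_eq (h : PW mi me νi νe Ti Te e c k r1 r2 u v E B r1' r2' u' v' E' B') :
    Ti * (rp r1' r1 + rp r1 r1') + Te * (rp r2' r2 + rp r2 r2') + mi * (ip u' u + ip u u')
      + me * (ip v' v + ip v v')
      + ((ip E' E + ip E E') + (ip B' B + ip B B')) / (4 * π)
    = -2 * (mi * νi * hsq u + me * νe * hsq v) := by
  rw [rp_comm r1 r1', rp_comm r2 r2', ip_comm u u', ip_comm v v', ip_comm E E', ip_comm B B',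
    h.h1, h.h2, rp_neg_left, rp_neg_left, ← ip_gr, ← ip_gr, h.hE, h.hB, ip_cross k B E,
    ip_comm B _]
  have hu := h.hu u
  have hv := h.hv v
  rw [ip_self, ip_comm (gr k _)] at hu hv
  rw [ip_comm u E, ip_comm v E]
  have hpi : π ≠ 0 := Real.pi_ne_zero
  field_simp
  linear_combination 8 * π * hu + 8 * π * hv

lemma dG1_le (hmi : 0 < mi) (hme : 0 < me) (hνi : 0 < νi) (hνe : 0 < νe)
    (hTi : 0 < Ti) (hTe : 0 < Te)
    (h : PW mi me νi νe Ti Te e c k r1 r2 u v E B r1' r2' u' v' E' B')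
    {s : ℝ} (hs : s = ∑ j, (k j)^2) :
    mi * (ip u' (gr k r1) + ip u (gr k r1')) + me * (ip v' (gr k r2) + ip v (gr k r2')) ≤
      - (Ti / 2) * (s * Complex.normSq r1) - (Te / 2) * (s * Complex.normSq r2)
      + ((mi*νi)^2/(2*Ti) + mi * s) * hsq u + ((me*νe)^2/(2*Te) + me * s) * hsq v := by
  have hu := h.hu (gr k r1)
  have hv := h.hv (gr k r2)
  rw [ip_self, hsq_gr, ← hs] at hu hv
  have a1 := ip_gr_neg k u
  have a2 := ip_gr_neg k v
  rw [← h.h1] at a1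
  rw [← h.h2] at a2
  have b1 := mul_le_mul_of_nonneg_left (normSq_dv_le k u) hmi.le
  have b2 := mul_le_mul_of_nonneg_left (normSq_dv_le k v) hme.le
  rw [← hs] at b1 b2
  have c1 := mul_le_mul_of_nonneg_left (neg_le_of_abs_le (ip_abs u (gr k r1) (mi*νi/(2*Ti)) (by positivity)))
    (by positivity : 0 ≤ mi * νi)
  have c2 := mul_le_mul_of_nonneg_left (neg_le_of_abs_le (ip_abs v (gr k r2) (me*νe/(2*Te)) (by positivity)))
    (by positivity : 0 ≤ me * νe)
  rw [hsq_gr, ← hs] at c1 c2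
  have e1 : mi * νi * -(mi * νi / (2 * Ti) * hsq u + s * normSq r1 / (4 * (mi * νi / (2 * Ti))))
    = - ((mi*νi)^2/(2*Ti) * hsq u) - Ti/2 * (s * normSq r1) := by field_simp; ring
  have e2 : me * νe * -(me * νe / (2 * Te) * hsq v + s * normSq r2 / (4 * (me * νe / (2 * Te))))
    = - ((me*νe)^2/(2*Te) * hsq v) - Te/2 * (s * normSq r2) := by field_simp; ring
  rw [e1] at c1
  rw [e2] at c2
  have g : e * ip E (gr k r1) - e * ip E (gr k r2) ≤ 0 := by
    rw [← mul_sub, h.hg]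
    have : 0 ≤ e^2 * (4 * π * Complex.normSq (r1 - r2)) :=
      mul_nonneg (sq_nonneg _) (mul_nonneg (by positivity) (Complex.normSq_nonneg _))
    nlinarith
  rw [a1, a2]
  linarith

lemma dG2_le (hmi : 0 < mi) (hνi : 0 < νi) (hTi : 0 < Ti) (he : 0 < e) (hc : 0 < c)
    (h : PW mi me νi νe Ti Te e c k r1 r2 u v E B r1' r2' u' v' E' B')
    {s : ℝ} (hs : s = ∑ j, (k j)^2) :
    -(mi * (ip u' E + ip u E')) ≤
      - (e / 2) * hsq E + (e/16) * hsq B + Ti^2/e * (s * Complex.normSq r1)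
      + ((mi*νi)^2/e + 5 * π * e * mi + 4*(mi*c)^2/e * s) * hsq u + 4 * π * e * mi * hsq v := by
  have hu := h.hu E
  have hE := h.hE u
  rw [ip_self] at hu hE
  rw [ip_comm u E']
  have c1 := mul_le_mul_of_nonneg_left (le_of_abs_le (ip_abs (gr k r1) E (Ti/e) (by positivity))) hTi.le
  have c2 := mul_le_mul_of_nonneg_left (le_of_abs_le (ip_abs u E (mi*νi/e) (by positivity)))
    (by positivity : 0 ≤ mi * νi)
  have c3 := mul_le_mul_of_nonneg_left (neg_le_of_abs_le (ip_abs (cross3 (ikv k) u) B (4*mi*c/e) (by positivity)))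
    (by positivity : 0 ≤ mi * c)
  have c4 := mul_le_mul_of_nonneg_left (neg_le_of_abs_le (ip_abs v u 1 (by positivity)))
    (by positivity : 0 ≤ 4 * π * e * mi)
  have c5 := mul_le_mul_of_nonneg_left (hsq_cross_le k u) (by positivity : 0 ≤ 4*(mi*c)^2/e)
  rw [hsq_gr, ← hs] at c1
  rw [← hs] at c5
  rw [ip_cross, ip_comm] at c3
  have e1 : Ti * (Ti / e * (s * normSq r1) + hsq E / (4 * (Ti / e))) =
    Ti^2/e * (s * Complex.normSq r1) + e / 4 * hsq E := by field_simp
  have e2 : mi * νi * (mi * νi / e * hsq u + hsq E / (4 * (mi * νi / e))) =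
    (mi*νi)^2/e * hsq u + e / 4 * hsq E := by field_simp
  have e3 : mi * c * -(4 * mi * c / e * hsq (cross3 (ikv k) u) + hsq B / (4 * (4 * mi * c / e))) =
    - (4*(mi*c)^2/e * hsq (cross3 (ikv k) u)) - e / 16 * hsq B := by field_simp; ring
  have e4 : 4 * π * e * mi * -(1 * hsq v + hsq u / (4 * 1)) =
    - (4 * π * e * mi * hsq v) - π * e * mi * hsq u := by ring
  rw [e1] at c1
  rw [e2] at c2
  rw [e3] at c3
  rw [e4] at c4
  rw [hE]
  linarith

lemma dG3_le (he : 0 < e) (hc : 0 < c)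
    (h : PW mi me νi νe Ti Te e c k r1 r2 u v E B r1' r2' u' v' E' B')
    {s : ℝ} (hs : s = ∑ j, (k j)^2) :
    -(ip E' (cross3 (ikv k) B) + ip E (cross3 (ikv k) B')) ≤
      - (c / 2) * (s * hsq B) + c * (s * hsq E) + (4*π*e)^2/c * (hsq u + hsq v) := by
  have hE := h.hE (cross3 (ikv k) B)
  have hB := h.hB (cross3 (ikv k) E)
  rw [← ip_cross k E B', ip_comm _ B', hE, hB, ip_self, ip_self]
  have b1 := normSq_dv k B
  rw [h.hb, ← hs] at b1
  simp only [map_zero, sub_zero] at b1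
  have b2 := mul_le_mul_of_nonneg_left (hsq_cross_le k E) hc.le
  have hpi := Real.pi_pos
  have c1 := mul_le_mul_of_nonneg_left (le_of_abs_le (ip_abs u (cross3 (ikv k) B) (4*π*e/c) (by positivity)))
    (by positivity : 0 ≤ 4 * π * e)
  have c2 := mul_le_mul_of_nonneg_left (neg_le_of_abs_le (ip_abs v (cross3 (ikv k) B) (4*π*e/c) (by positivity)))
    (by positivity : 0 ≤ 4 * π * e)
  rw [b1] at c1 c2
  rw [← hs] at b2
  have e1 : 4 * π * e * (4 * π * e / c * hsq u + s * hsq B / (4 * (4 * π * e / c))) =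
    (4*π*e)^2/c * hsq u + c / 4 * (s * hsq B) := by field_simp
  have e2 : 4 * π * e * -(4 * π * e / c * hsq v + s * hsq B / (4 * (4 * π * e / c))) =
    -((4*π*e)^2/c * hsq v) - c / 4 * (s * hsq B) := by field_simp; ring
  rw [e1] at c1
  rw [e2] at c2
  rw [b1]
  linarith

end

set_option maxHeartbeats 1000000 in
lemma core (τ d C1 C2 C3 e c : ℝ) (hτ : 0 < τ) (hd : 0 < d) (hC1 : 0 < C1) (hC2 : 0 < C2)
    (hC3 : 0 < C3) (he : 0 < e) (hc : 0 < c) :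
    ∃ κ1 κ2 N0 μ : ℝ, 0 < κ1 ∧ 0 < κ2 ∧ 0 < N0 ∧ 0 < μ ∧ ∀ N, N0 ≤ N →
      ∀ s r a x y D0 D1 D2 D3 : ℝ, 0 ≤ s → 0 ≤ r → 0 ≤ a → 0 ≤ x → 0 ≤ y →
      D0 ≤ - d * a → D1 ≤ - τ * (s * r) + C1 * ((1 + s) * a) →
      D2 ≤ - (e / 2) * x + (e / 16) * y + C2 * (s * r + (1 + s) * a) →
      D3 ≤ - (c / 2) * (s * y) + c * (s * x) + C3 * a →
      N * D0 + κ1 / (1 + s) * D1 + κ2 * s / (1 + s)^2 * D2 + 1 / (1 + s)^2 * D3 ≤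
        - μ * (s / (1 + s)^2) * (r + a + x + y) := by
  obtain ⟨κ2, hκ2⟩ : ∃ κ2, κ2 = 4 * c / e := ⟨_, rfl⟩
  have hκ2p : 0 < κ2 := by rw [hκ2]; positivity
  have hκe : κ2 * e = 4 * c := by rw [hκ2]; field_simp
  obtain ⟨κ1, hκ1⟩ : ∃ κ1, κ1 = κ2 * C2 / τ + 1 := ⟨_, rfl⟩
  have hκ1p : 0 < κ1 := by rw [hκ1]; positivity
  have hκτ : κ1 * τ = κ2 * C2 + τ := by rw [hκ1]; field_simp
  obtain ⟨N0, hN0⟩ : ∃ N0, N0 = (κ1 * C1 + κ2 * C2 + C3 + 1) / d := ⟨_, rfl⟩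
  have hN0p : 0 < N0 := by rw [hN0]; positivity
  have hNd : N0 * d = κ1 * C1 + κ2 * C2 + C3 + 1 := by rw [hN0]; field_simp
  obtain ⟨μ, hμ⟩ : ∃ μ, μ = min (min 1 τ) (c / 4) := ⟨_, rfl⟩
  have hμp : 0 < μ := by rw [hμ]; positivity
  have hμ1 : μ ≤ 1 := by rw [hμ]; exact (min_le_left _ _).trans (min_le_left _ _)
  have hμ2 : μ ≤ τ := by rw [hμ]; exact (min_le_left _ _).trans (min_le_right _ _)
  have hμ3 : μ ≤ c / 4 := by rw [hμ]; exact min_le_right _ _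
  refine ⟨κ1, κ2, N0, μ, hκ1p, hκ2p, hN0p, hμp, ?_⟩
  intro N hN s r a x y D0 D1 D2 D3 hs hr ha hx hy h0 h1 h2 h3
  have hs1 : 0 < 1 + s := by linarith
  have eL : N * D0 + κ1 / (1 + s) * D1 + κ2 * s / (1 + s)^2 * D2 + 1 / (1 + s)^2 * D3 =
    (N * (1+s)^2 * D0 + κ1 * (1+s) * D1 + κ2 * s * D2 + D3) / (1+s)^2 := by field_simp
  have eR : - μ * (s / (1 + s)^2) * (r + a + x + y) =
    (- μ * s * (r + a + x + y)) / (1+s)^2 := by field_simp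
  rw [eL, eR]
  apply div_le_div_of_nonneg_right _ (by positivity)
  have g0 : N * (1+s)^2 * D0 ≤ - (N0 * d) * ((1+s)^2 * a) := by
    have i1 : N * (1+s)^2 * D0 ≤ N * (1+s)^2 * (-d * a) :=
      mul_le_mul_of_nonneg_left h0 (by have : 0 < N := by linarith
                                       positivity)
    have i2 : N0 * ((1+s)^2 * (d * a)) ≤ N * ((1+s)^2 * (d * a)) :=
      mul_le_mul_of_nonneg_right hN (by positivity)
    linarith
  have g1 := mul_le_mul_of_nonneg_left h1 (by positivity : 0 ≤ κ1 * (1+s))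
  have g2 := mul_le_mul_of_nonneg_left h2 (by positivity : 0 ≤ κ2 * s)
  rw [hNd] at g0
  have k1 : κ1 * (1 + s) * (-τ * (s * r) + C1 * ((1 + s) * a))
    = -(κ2 * C2 + τ) * ((1+s) * (s * r)) + κ1 * C1 * ((1+s)^2 * a) := by
    rw [← hκτ]; ring
  have k2 : κ2 * s * (-(e / 2) * x + e / 16 * y + C2 * (s * r + (1 + s) * a))
    = -(2 * c) * (s * x) + c / 4 * (s * y) + κ2 * C2 * (s * (s * r)) + κ2 * C2 * (s * (1 + s) * a) := by
    linear_combination (-(s * x) / 2 + s * y / 16) * hκe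
  rw [k1] at g1
  rw [k2] at g2
  have sx : 0 ≤ s * x := by positivity
  have sy : 0 ≤ s * y := by positivity
  have sr : 0 ≤ s * r := by positivity
  have sa : 0 ≤ s * a := by positivity
  have m1 := mul_le_mul_of_nonneg_right hμ1 sa
  have m2 := mul_le_mul_of_nonneg_right hμ2 sr
  have m3 := mul_le_mul_of_nonneg_right hμ3 sx
  have m4 := mul_le_mul_of_nonneg_right hμ3 sy
  have p1 : 0 ≤ (κ2 * C2) * (s * r) := by positivity
  have p2 : 0 ≤ τ * (s * (s * r)) := by positivity
  have p3 : 0 ≤ (κ2 * C2) * ((1 + s) * a) := by positivity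
  have p4 : 0 ≤ C3 * (s * a) := by positivity
  have p5 : 0 ≤ C3 * (s * (s * a)) := by positivity
  have p6 : 0 ≤ s * (s * a) := by positivity
  have p7 : 0 ≤ c * (s * x) := by positivity
  linarith

/-- Lyapunov functional -/
noncomputable def Ly (mi me Ti Te N κ1 κ2 s : ℝ) (k : Fin 3 → ℝ) (r1 r2 : ℂ)
    (u v E B : Fin 3 → ℂ) : ℝ :=
  N * En mi me Ti Te r1 r2 u v E B
    + κ1 / (1 + s) * (mi * ip u (gr k r1) + me * ip v (gr k r2))
    + κ2 * s / (1 + s)^2 * (-(mi * ip u E))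
    + 1 / (1 + s)^2 * (-(ip E (cross3 (ikv k) B)))

noncomputable def US (r1 r2 : ℂ) (u v E B : Fin 3 → ℂ) : ℝ :=
  Complex.normSq r1 + Complex.normSq r2 + hsq u + hsq v + hsq E + hsq B

set_option maxHeartbeats 1000000 in
lemma Ly_bound (mi me Ti Te κ1 κ2 : ℝ) (hmi : 0 < mi) (hme : 0 < me) (hTi : 0 < Ti) (hTe : 0 < Te)
    (hκ1 : 0 < κ1) (hκ2 : 0 < κ2) (N0 : ℝ) :
    ∃ N c2 : ℝ, N0 ≤ N ∧ 0 < c2 ∧ ∀ (k : Fin 3 → ℝ) (r1 r2 : ℂ) (u v E B : Fin 3 → ℂ),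
      US r1 r2 u v E B ≤ Ly mi me Ti Te N κ1 κ2 (∑ j, (k j)^2) k r1 r2 u v E B ∧
      Ly mi me Ti Te N κ1 κ2 (∑ j, (k j)^2) k r1 r2 u v E B ≤ c2 * US r1 r2 u v E B := by
  have hpi := Real.pi_pos
  obtain ⟨e0, he0⟩ : ∃ e0, e0 = min (min Ti Te) (min (min mi me) (1 / (4 * π))) := ⟨_, rfl⟩
  have he0p : 0 < e0 := by rw [he0]; positivity
  have l1 : e0 ≤ Ti := by rw [he0]; simp
  have l2 : e0 ≤ Te := by rw [he0]; simp
  have l3 : e0 ≤ mi := by rw [he0]; simp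
  have l4 : e0 ≤ me := by rw [he0]; simp
  have l5 : e0 ≤ 1 / (4 * π) := by
    rw [he0]; exact (min_le_right _ _).trans (min_le_right _ _)
  obtain ⟨e1, he1⟩ : ∃ e1, e1 = Ti + Te + mi + me + 1 / (4 * π) := ⟨_, rfl⟩
  have hq : 0 < 1 / (4 * π) := by positivity
  have he1p : 0 < e1 := by rw [he1]; positivity
  obtain ⟨M, hM⟩ : ∃ M, M = κ1 * (mi + me) + κ2 * mi + 1 := ⟨_, rfl⟩
  have hMp : 0 < M := by rw [hM]; positivity
  obtain ⟨N, hN⟩ : ∃ N, N = max N0 ((M + 1) / e0) := ⟨_, rfl⟩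
  have hN1 : (M + 1) / e0 ≤ N := by rw [hN]; exact le_max_right _ _
  have hNp : 0 < N := lt_of_lt_of_le (by positivity) hN1
  have hNe : M + 1 ≤ N * e0 := (div_le_iff₀ he0p).1 hN1
  refine ⟨N, N * e1 + M, by rw [hN]; exact le_max_left _ _, by positivity, ?_⟩
  intro k r1 r2 u v E B
  have hs : 0 ≤ ∑ j, (k j)^2 := Finset.sum_nonneg fun _ _ => sq_nonneg _
  have hE1 : En mi me Ti Te r1 r2 u v E B = Ti * normSq r1 + Te * normSq r2 + mi * hsq u
      + me * hsq v + 1 / (4 * π) * hsq E + 1 / (4 * π) * hsq B := by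
    unfold En; simp only [rp_self, ip_self]; ring
  have n1 := Complex.normSq_nonneg r1
  have n2 := Complex.normSq_nonneg r2
  have n3 := hsq_nn u
  have n4 := hsq_nn v
  have n5 := hsq_nn E
  have n6 := hsq_nn B
  have gg1 := ip_abs u (gr k r1) 1 one_pos
  have gg2 := ip_abs v (gr k r2) 1 one_pos
  have gg3 := ip_abs u E 1 one_pos
  have gg4 := ip_abs E (cross3 (ikv k) B) 1 one_pos
  have gg5 := hsq_cross_le k B
  rw [hsq_gr] at gg1 gg2
  unfold Ly
  generalize (∑ j, (k j)^2) = s at *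
  have hU : US r1 r2 u v E B = normSq r1 + normSq r2 + hsq u + hsq v + hsq E + hsq B := rfl
  have hUn : 0 ≤ US r1 r2 u v E B := by rw [hU]; positivity
  have hEl : e0 * US r1 r2 u v E B ≤ En mi me Ti Te r1 r2 u v E B := by
    rw [hE1, hU]; linarith [mul_le_mul_of_nonneg_right l1 n1, mul_le_mul_of_nonneg_right l2 n2,
      mul_le_mul_of_nonneg_right l3 n3, mul_le_mul_of_nonneg_right l4 n4,
      mul_le_mul_of_nonneg_right l5 n5, mul_le_mul_of_nonneg_right l5 n6]
  have hEu : En mi me Ti Te r1 r2 u v E B ≤ e1 * US r1 r2 u v E B := by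
    have t1 : Ti ≤ e1 := by rw [he1]; linarith
    have t2 : Te ≤ e1 := by rw [he1]; linarith
    have t3 : mi ≤ e1 := by rw [he1]; linarith
    have t4 : me ≤ e1 := by rw [he1]; linarith
    have t5 : 1 / (4 * π) ≤ e1 := by rw [he1]; linarith
    rw [hE1, hU]; linarith [mul_le_mul_of_nonneg_right t1 n1, mul_le_mul_of_nonneg_right t2 n2,
      mul_le_mul_of_nonneg_right t3 n3, mul_le_mul_of_nonneg_right t4 n4,
      mul_le_mul_of_nonneg_right t5 n5, mul_le_mul_of_nonneg_right t5 n6]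
  generalize hUU : US r1 r2 u v E B = U at *
  have hs1 : 0 < 1 + s := by linarith
  have sU : 0 ≤ s * U := by positivity
  have b1 : |ip u (gr k r1)| ≤ (1 + s) * U := by
    have : s * normSq r1 ≤ s * U := mul_le_mul_of_nonneg_left (by rw [hU]; linarith) hs
    linarith [mul_nonneg hs n1]
  have b2 : |ip v (gr k r2)| ≤ (1 + s) * U := by
    have : s * normSq r2 ≤ s * U := mul_le_mul_of_nonneg_left (by rw [hU]; linarith) hs
    linarith [mul_nonneg hs n2]
  have b3 : |ip u E| ≤ U := by linarith
  have b4 : |ip E (cross3 (ikv k) B)| ≤ (1 + s) * U := by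
    have : s * hsq B ≤ s * U := mul_le_mul_of_nonneg_left (by rw [hU]; linarith) hs
    linarith [mul_nonneg hs n6]
  have a1 : |κ1 / (1 + s) * (mi * ip u (gr k r1) + me * ip v (gr k r2))| ≤ κ1 * (mi + me) * U := by
    rw [abs_mul, abs_of_pos (by positivity : 0 < κ1 / (1 + s))]
    have : |mi * ip u (gr k r1) + me * ip v (gr k r2)| ≤ (mi + me) * ((1 + s) * U) := by
      refine (abs_add_le _ _).trans ?_
      rw [abs_mul, abs_mul, abs_of_pos hmi, abs_of_pos hme]
      linarith [mul_le_mul_of_nonneg_left b1 hmi.le, mul_le_mul_of_nonneg_left b2 hme.le]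
    refine (mul_le_mul_of_nonneg_left this (by positivity)).trans (le_of_eq ?_)
    field_simp
  have a2 : |κ2 * s / (1 + s)^2 * (-(mi * ip u E))| ≤ κ2 * mi * U := by
    rw [abs_mul, abs_neg, abs_mul, abs_of_pos hmi, abs_of_nonneg (by positivity : 0 ≤ κ2 * s / (1 + s)^2)]
    have q : s / (1 + s)^2 ≤ 1 := by rw [div_le_one (by positivity)]; nlinarith
    calc κ2 * s / (1 + s)^2 * (mi * |ip u E|) = κ2 * mi * (s / (1+s)^2 * |ip u E|) := by ring
      _ ≤ κ2 * mi * (1 * U) := by gcongr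
      _ = κ2 * mi * U := by ring
  have a3 : |1 / (1 + s)^2 * (-(ip E (cross3 (ikv k) B)))| ≤ U := by
    rw [abs_mul, abs_neg, abs_of_pos (by positivity : 0 < 1 / (1 + s)^2)]
    refine (mul_le_mul_of_nonneg_left b4 (by positivity)).trans ?_
    have : 1 / (1 + s)^2 * ((1 + s) * U) = U / (1 + s) := by field_simp
    rw [this, div_le_iff₀ hs1]; linarith
  rw [abs_le] at a1 a2 a3
  have z1 := mul_le_mul_of_nonneg_left hEl hNp.le
  have z2 := mul_le_mul_of_nonneg_left hEu hNp.le
  have z3 := mul_le_mul_of_nonneg_right hNe hUn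
  have z4 : M * U = κ1 * (mi + me) * U + κ2 * mi * U + U := by rw [hM]; ring
  constructor <;> linarith [a1.1, a1.2, a2.1, a2.2, a3.1, a3.2]

lemma gron (L L' : ℝ → ℝ) (a : ℝ) (h : ∀ t, HasDerivAt L (L' t) t) (h' : ∀ t, L' t ≤ - a * L t)
    (t : ℝ) (ht : 0 ≤ t) : L t ≤ Real.exp (-(a * t)) * L 0 := by
  have hd : ∀ t, HasDerivAt (fun t => L t * Real.exp (a * t))
      (L' t * Real.exp (a * t) + L t * (Real.exp (a * t) * a)) t := fun t => by
    have h1 : HasDerivAt (fun t : ℝ => a * t) a t := by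
      simpa using (hasDerivAt_id t).const_mul a
    exact (h t).mul h1.exp
  have anti : Antitone (fun t => L t * Real.exp (a * t)) := by
    apply antitone_of_deriv_nonpos (fun t => (hd t).differentiableAt)
    intro t
    rw [(hd t).deriv]
    have := h' t
    have := Real.exp_pos (a * t)
    nlinarith
  have := anti ht
  simp only [mul_zero, Real.exp_zero, mul_one] at this
  rw [Real.exp_neg, inv_mul_eq_div, le_div_iff₀ (Real.exp_pos _)]
  exact this

set_option maxHeartbeats 1000000 in
lemma diss (mi me νi νe Ti Te e c : ℝ)
    (hmi : 0 < mi) (hme : 0 < me) (hνi : 0 < νi) (hνe : 0 < νe)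
    (hTi : 0 < Ti) (hTe : 0 < Te) (he : 0 < e) (hc : 0 < c) :
    ∃ κ1 κ2 N0 μ : ℝ, 0 < κ1 ∧ 0 < κ2 ∧ 0 < N0 ∧ 0 < μ ∧ ∀ N, N0 ≤ N →
      ∀ (k : Fin 3 → ℝ) (r1 r2 : ℂ) (u v E B : Fin 3 → ℂ)
      (r1' r2' : ℂ) (u' v' E' B' : Fin 3 → ℂ),
      PW mi me νi νe Ti Te e c k r1 r2 u v E B r1' r2' u' v' E' B' →
      N * (Ti * (rp r1' r1 + rp r1 r1') + Te * (rp r2' r2 + rp r2 r2') + mi * (ip u' u + ip u u')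
        + me * (ip v' v + ip v v')
        + ((ip E' E + ip E E') + (ip B' B + ip B B')) / (4 * π))
      + κ1 / (1 + (∑ j, (k j)^2)) * (mi * (ip u' (gr k r1) + ip u (gr k r1'))
        + me * (ip v' (gr k r2) + ip v (gr k r2')))
      + κ2 * (∑ j, (k j)^2) / (1 + (∑ j, (k j)^2))^2 * (-(mi * (ip u' E + ip u E')))
      + 1 / (1 + (∑ j, (k j)^2))^2 *
        (-(ip E' (cross3 (ikv k) B) + ip E (cross3 (ikv k) B'))) ≤
      - μ * ((∑ j, (k j)^2) / (1 + (∑ j, (k j)^2))^2) * US r1 r2 u v E B := by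
  have hpi := Real.pi_pos
  obtain ⟨τ, hτ⟩ : ∃ τ, τ = min Ti Te / 2 := ⟨_, rfl⟩
  have hτ1 : τ ≤ Ti / 2 := by rw [hτ]; linarith [min_le_left Ti Te]
  have hτ2 : τ ≤ Te / 2 := by rw [hτ]; linarith [min_le_right Ti Te]
  obtain ⟨d, hd⟩ : ∃ d, d = min (mi * νi) (me * νe) := ⟨_, rfl⟩
  have hd1 : d ≤ mi * νi := by rw [hd]; exact min_le_left _ _
  have hd2 : d ≤ me * νe := by rw [hd]; exact min_le_right _ _
  have hτp : 0 < τ := by rw [hτ]; positivity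
  have hdp : 0 < d := by rw [hd]; positivity
  obtain ⟨p1, hp1⟩ : ∃ p, p = (mi*νi)^2/(2*Ti) := ⟨_, rfl⟩
  obtain ⟨p2, hp2⟩ : ∃ p, p = (me*νe)^2/(2*Te) := ⟨_, rfl⟩
  obtain ⟨p3, hp3⟩ : ∃ p, p = Ti^2/e := ⟨_, rfl⟩
  obtain ⟨p4, hp4⟩ : ∃ p, p = (mi*νi)^2/e := ⟨_, rfl⟩
  obtain ⟨p5, hp5⟩ : ∃ p, p = π * e * mi := ⟨_, rfl⟩
  obtain ⟨p6, hp6⟩ : ∃ p, p = 4*(mi*c)^2/e := ⟨_, rfl⟩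
  have q1 : 0 < p1 := by rw [hp1]; positivity
  have q2 : 0 < p2 := by rw [hp2]; positivity
  have q3 : 0 < p3 := by rw [hp3]; positivity
  have q4 : 0 < p4 := by rw [hp4]; positivity
  have q5 : 0 < p5 := by rw [hp5]; positivity
  have q6 : 0 < p6 := by rw [hp6]; positivity
  obtain ⟨κ1, κ2, N0, μ, h1, h2, h3, h4, H⟩ := core τ d (p1 + p2 + mi + me)
    (p3 + p4 + 5 * p5 + p6) ((4*π*e)^2/c) e c hτp hdp
    (by positivity) (by positivity) (by positivity) he hc
  refine ⟨κ1, κ2, N0, μ, h1, h2, h3, h4, ?_⟩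
  intro N hN k r1 r2 u v E B r1' r2' u' v' E' B' h
  obtain ⟨s, hs⟩ : ∃ s, s = ∑ j, (k j)^2 := ⟨_, rfl⟩
  have hsn : 0 ≤ s := by rw [hs]; exact Finset.sum_nonneg fun _ _ => sq_nonneg _
  have d0 := dEn_eq h
  have d1 := dG1_le hmi hme hνi hνe hTi hTe h hs
  have d2 := dG2_le hmi hνi hTi he hc h hs
  have d3 := dG3_le he hc h hs
  rw [← hs]
  rw [← hp1, ← hp2] at d1
  have r5 : 5 * π * e * mi = 5 * p5 := by rw [hp5]; ring
  have r6 : 4 * π * e * mi = 4 * p5 := by rw [hp5]; ring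
  rw [← hp3, ← hp4, ← hp6, r5, r6] at d2
  have n1 := Complex.normSq_nonneg r1
  have n2 := Complex.normSq_nonneg r2
  have n3 := hsq_nn u
  have n4 := hsq_nn v
  have n5 := hsq_nn E
  have n6 := hsq_nn B
  have eU : US r1 r2 u v E B = (normSq r1 + normSq r2) + (hsq u + hsq v) + hsq E + hsq B := by
    unfold US; ring
  rw [eU]
  clear hp1 hp2 hp3 hp4 hp5 hp6 r5 r6 eU
  generalize normSq r1 = P at *
  generalize normSq r2 = Q at *
  generalize hsq u = a at *
  generalize hsq v = b at *
  generalize hsq E = x at *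
  generalize hsq B = y at *
  refine H N hN s (P + Q) (a + b) x y _ _ _ _ hsn (by positivity) (by positivity) n5 n6 ?_ ?_ ?_ d3
  · rw [d0]
    nlinarith [mul_le_mul_of_nonneg_right hd1 n3, mul_le_mul_of_nonneg_right hd2 n4,
      mul_nonneg hdp.le n3, mul_nonneg hdp.le n4]
  · refine d1.trans ?_
    have i1 := mul_le_mul_of_nonneg_right hτ1 (mul_nonneg hsn n1)
    have i2 := mul_le_mul_of_nonneg_right hτ2 (mul_nonneg hsn n2)
    have i3 : 0 ≤ (p2 + me) * a + p1 * (s * a) + p2 * (s * a) + me * (s * a) + mi * a := by positivity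
    have i4 : 0 ≤ (p1 + mi) * b + p1 * (s * b) + p2 * (s * b) + mi * (s * b) + me * b := by positivity
    linarith
  · refine d2.trans ?_
    have i1 : 0 ≤ (p4 + 5 * p5 + p6) * (s * P) + (p3 + p4 + 5 * p5 + p6) * (s * Q) := by positivity
    have i2 : 0 ≤ (p3 + p6) * a + (p3 + p4 + 5 * p5) * (s * a) := by positivity
    have i3 : 0 ≤ (p3 + p4 + p5 + p6) * b + (p3 + p4 + 5 * p5 + p6) * (s * b) := by positivity
    linarith

/-- Pointwise time-frequency decay estimate
`|Û(t)| ≤ C exp(−λ|k|²t/(1+|k|²)²)|Û(0)|` for the Fourier-transformed linearized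
two-fluid Euler–Maxwell system. -/
theorem stmt_12 (mi me νi νe Ti Te e c : ℝ)
    (hmi : 0 < mi) (hme : 0 < me) (hνi : 0 < νi) (hνe : 0 < νe)
    (hTi : 0 < Ti) (hTe : 0 < Te) (he : 0 < e) (hc : 0 < c) :
    ∃ C lam : ℝ, 0 < C ∧ 0 < lam ∧
      ∀ (k : Fin 3 → ℝ) (ρi ρe : ℝ → ℂ) (ui ue E B : ℝ → Fin 3 → ℂ),
        Differentiable ℝ ρi → Differentiable ℝ ρe →
        Differentiable ℝ ui → Differentiable ℝ ue →
        Differentiable ℝ E → Differentiable ℝ B →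
        (∀ t : ℝ, deriv ρi t + Complex.I * ∑ j, (k j : ℂ) * ui t j = 0) →
        (∀ t : ℝ, deriv ρe t + Complex.I * ∑ j, (k j : ℂ) * ue t j = 0) →
        (∀ (t : ℝ) (j : Fin 3), (mi : ℂ) * deriv ui t j
          + (Ti : ℂ) * (Complex.I * (k j : ℂ)) * ρi t
          - (e : ℂ) * E t j + (mi : ℂ) * (νi : ℂ) * ui t j = 0) →
        (∀ (t : ℝ) (j : Fin 3), (me : ℂ) * deriv ue t j
          + (Te : ℂ) * (Complex.I * (k j : ℂ)) * ρe t
          + (e : ℂ) * E t j + (me : ℂ) * (νe : ℂ) * ue t j = 0) →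
        (∀ (t : ℝ) (j : Fin 3), deriv E t j - (c : ℂ) * cross3 (ikv k) (B t) j
          + 4 * (π : ℂ) * ((e : ℂ) * ui t j - (e : ℂ) * ue t j) = 0) →
        (∀ (t : ℝ) (j : Fin 3), deriv B t j + (c : ℂ) * cross3 (ikv k) (E t) j = 0) →
        (∀ t : ℝ, Complex.I * ∑ j, (k j : ℂ) * E t j
          = 4 * (π : ℂ) * ((e : ℂ) * ρi t - (e : ℂ) * ρe t)) →
        (∀ t : ℝ, Complex.I * ∑ j, (k j : ℂ) * B t j = 0) →
        (let ksq : ℝ := ∑ j, (k j) ^ 2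
         let Usq : ℝ → ℝ := fun t =>
           Complex.normSq (ρi t) + Complex.normSq (ρe t)
             + hsq (ui t) + hsq (ue t) + hsq (E t) + hsq (B t)
         ∀ t : ℝ, 0 ≤ t → Real.sqrt (Usq t) ≤
           C * Real.exp (-(lam * ksq * t) / (1 + ksq) ^ 2) * Real.sqrt (Usq 0)) := by
  obtain ⟨κ1, κ2, N0, μ, h1, h2, h3, h4, H⟩ :=
    diss mi me νi νe Ti Te e c hmi hme hνi hνe hTi hTe he hc
  obtain ⟨N, c2, hN, hc2, HB⟩ := Ly_bound mi me Ti Te κ1 κ2 hmi hme hTi hTe h1 h2 N0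
  refine ⟨Real.sqrt c2, μ / (2 * c2), Real.sqrt_pos.2 hc2, by positivity, ?_⟩
  intro k ρi ρe ui ue E B dρi dρe dui due dE dB e1 e2 e3 e4 e5 e6 e7 e8 ksq Usq t ht
  have hks : 0 ≤ ksq := Finset.sum_nonneg fun _ _ => sq_nonneg _
  have pw : ∀ t, PW mi me νi νe Ti Te e c k (ρi t) (ρe t) (ui t) (ue t) (E t) (B t)
      (deriv ρi t) (deriv ρe t) (deriv ui t) (deriv ue t) (deriv E t) (deriv B t) := fun t =>
    { h1 := eq_neg_of_add_eq_zero_left (e1 t)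
      h2 := eq_neg_of_add_eq_zero_left (e2 t)
      hu := mom_eq k mi Ti e νi _ _ _ _ (e3 t)
      hv := mom_eq k me Te (-e) νe _ _ _ _ (fun j => by
        have := e4 t j
        push_cast
        linear_combination this)
      hE := E_eq k e c _ _ _ _ (e5 t)
      hB := B_eq k c _ _ (e6 t)
      hg := gauss k e _ _ _ (e7 t)
      hb := e8 t }
  obtain ⟨a, ha⟩ : ∃ a, a = μ / c2 * (ksq / (1 + ksq)^2) := ⟨_, rfl⟩
  have hL := fun t : ℝ => by
    have a1 := (dρi t).hasDerivAt
    have a2 := (dρe t).hasDerivAt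
    have a3 := (dui t).hasDerivAt
    have a4 := (due t).hasDerivAt
    have a5 := (dE t).hasDerivAt
    have a6 := (dB t).hasDerivAt
    have hEn := (((((rp_deriv a1 a1).const_mul Ti).add ((rp_deriv a2 a2).const_mul Te)).add
      ((ip_deriv a3 a3).const_mul mi)).add ((ip_deriv a4 a4).const_mul me)).add
      (((ip_deriv a5 a5).add (ip_deriv a6 a6)).div_const (4 * π))
    have hG1 := ((ip_deriv a3 (gr_deriv k a1)).const_mul mi).add
      ((ip_deriv a4 (gr_deriv k a2)).const_mul me)
    have hG2 := ((ip_deriv a3 a5).const_mul mi).neg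
    have hG3 := (ip_deriv a5 (cross_deriv k a6)).neg
    exact (((hEn.const_mul N).add (hG1.const_mul (κ1 / (1 + ksq)))).add
      (hG2.const_mul (κ2 * ksq / (1 + ksq)^2))).add (hG3.const_mul (1 / (1 + ksq)^2))
  have key := gron (fun t => Ly mi me Ti Te N κ1 κ2 ksq k (ρi t) (ρe t) (ui t) (ue t) (E t) (B t))
    _ a hL (fun t => by
      refine (H N hN k _ _ _ _ _ _ _ _ _ _ _ _ (pw t)).trans ?_
      have hb := (HB k (ρi t) (ρe t) (ui t) (ue t) (E t) (B t)).2
      change -μ * (ksq / (1 + ksq)^2) * _ ≤ _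
      have w : 0 ≤ μ / c2 * (ksq / (1 + ksq)^2) := by positivity
      have := mul_le_mul_of_nonneg_left hb w
      have ee : μ / c2 * (ksq / (1 + ksq)^2) * (c2 * US (ρi t) (ρe t) (ui t) (ue t) (E t) (B t))
        = μ * (ksq / (1 + ksq)^2) * US (ρi t) (ρe t) (ui t) (ue t) (E t) (B t) := by
        field_simp
      rw [ee] at this
      rw [ha]
      linarith) t ht
  have b1 : Usq t ≤ Real.exp (-(a * t)) * (c2 * Usq 0) := by
    refine ((HB k (ρi t) (ρe t) (ui t) (ue t) (E t) (B t)).1.trans key).trans ?_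
    exact mul_le_mul_of_nonneg_left (HB k (ρi 0) (ρe 0) (ui 0) (ue 0) (E 0) (B 0)).2
      (Real.exp_pos _).le
  have b2 : Real.exp (-(a * t)) = Real.exp (-(μ / (2 * c2) * ksq * t) / (1 + ksq) ^ 2) ^ 2 := by
    rw [← Real.exp_nat_mul, ha]
    congr 1
    push_cast
    field_simp
  rw [b2] at b1
  refine (Real.sqrt_le_sqrt b1).trans (le_of_eq ?_)
  rw [Real.sqrt_mul (sq_nonneg _), Real.sqrt_sq (Real.exp_pos _).le, Real.sqrt_mul hc2.le]
  ring
end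

section
/- Let m_i, m_e, ν_i, ν_e, T_i, T_e, e, c > 0 with q_i = e, q_e = −e, and fix k ∈ ℝ³. There exist constants λ, C > 0, depending only on the physical constants (not on k), such that along every solution (ρ̂_i, ρ̂_e, û_i, û_e, Ê, B̂) of the Fourier-transformed linearized two-fluid Euler–Maxwell system at frequency k, for all t > 0: d/dt [ (1+|k|²)^{-1} Σ_{α=i,e} m_α Re( û_α(t)·conj(i k ρ̂_α(t)) ) ] + λ (|k|²/(1+|k|²)) Σ_{α=i,e} |ρ̂_α(t)|² + (4π/(1+|k|²)) |e ρ̂_i(t) − e ρ̂_e(t)|² ≤ C Σ_{α=i,e} |û_α(t)|². -/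
open Real Complex ComplexConjugate

lemma species_aux (m ν T : ℝ) (hm : 0 < m) (hT : 0 < T) (k : Fin 3 → ℝ)
    (r r' : ℂ) (u u' F : Fin 3 → ℂ)
    (h1 : r' + Complex.I * ∑ j, (k j : ℂ) * u j = 0)
    (h2 : ∀ j, (m : ℂ) * u' j + (T : ℂ) * (Complex.I * (k j : ℂ)) * r - F j
      + (m : ℂ) * (ν : ℂ) * u j = 0) :
    m * (hre u' (fun j => Complex.I * (k j : ℂ) * r)
        + hre u (fun j => Complex.I * (k j : ℂ) * r'))
      + T / 2 * (∑ j, (k j) ^ 2) * Complex.normSq r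
      ≤ hre F (fun j => Complex.I * (k j : ℂ) * r)
        + (m * (∑ j, (k j) ^ 2) + m ^ 2 * ν ^ 2 / (2 * T)) * hsq u := by
  have e1 := congrArg Complex.re h1
  have e2 := congrArg Complex.im h1
  have f1 := fun j => congrArg Complex.re (h2 j)
  have f2 := fun j => congrArg Complex.im (h2 j)
  simp [Fin.sum_univ_three] at e1 e2 f1 f2
  have young : ∀ j, -(m * ν * ((u j).im * (k j * r.re) - (u j).re * (k j * r.im)))
      ≤ T / 2 * (k j) ^ 2 * (r.re ^ 2 + r.im ^ 2)
        + m ^ 2 * ν ^ 2 / (2 * T) * ((u j).re ^ 2 + (u j).im ^ 2) := by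
    intro j
    have : T / 2 * (k j) ^ 2 * (r.re ^ 2 + r.im ^ 2)
        + m ^ 2 * ν ^ 2 / (2 * T) * ((u j).re ^ 2 + (u j).im ^ 2)
        + (m * ν * ((u j).im * (k j * r.re) - (u j).re * (k j * r.im)))
        = ((T * k j * r.re + m * ν * (u j).im) ^ 2
          + (T * k j * r.im - m * ν * (u j).re) ^ 2) / (2 * T) := by
      field_simp
      ring
    have h : 0 ≤ ((T * k j * r.re + m * ν * (u j).im) ^ 2
          + (T * k j * r.im - m * ν * (u j).re) ^ 2) / (2 * T) := by positivity
    linarith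
  have cs : ∀ a : Fin 3 → ℝ, (k 0 * a 0 + k 1 * a 1 + k 2 * a 2) ^ 2
      ≤ (k 0 ^ 2 + k 1 ^ 2 + k 2 ^ 2) * (a 0 ^ 2 + a 1 ^ 2 + a 2 ^ 2) := by
    intro a
    nlinarith [sq_nonneg (k 0 * a 1 - k 1 * a 0), sq_nonneg (k 0 * a 2 - k 2 * a 0),
      sq_nonneg (k 1 * a 2 - k 2 * a 1)]
  have c1 := mul_le_mul_of_nonneg_left (cs fun j => (u j).re) hm.le
  have c2 := mul_le_mul_of_nonneg_left (cs fun j => (u j).im) hm.le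
  have y0 := young 0
  have y1 := young 1
  have y2 := young 2
  have g1 : ∀ j, (F j).re = m * (u' j).re - T * k j * r.im + m * ν * (u j).re := by
    intro j; linarith [f1 j]
  have g2 : ∀ j, (F j).im = m * (u' j).im + T * k j * r.re + m * ν * (u j).im := by
    intro j; linarith [f2 j]
  have d1 : r'.re = k 0 * (u 0).im + k 1 * (u 1).im + k 2 * (u 2).im := by linarith
  have d2 : r'.im = -(k 0 * (u 0).re + k 1 * (u 1).re + k 2 * (u 2).re) := by linarith
  simp [hre, hsq, Fin.sum_univ_three, Complex.normSq_apply, g1, g2, d1, d2]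
  generalize m ^ 2 * ν ^ 2 / (2 * T) = Q at *
  linarith

lemma species_deriv (k : Fin 3 → ℝ) (ρ : ℝ → ℂ) (u : ℝ → Fin 3 → ℂ) (t : ℝ)
    (hρ : Differentiable ℝ ρ) (hu : Differentiable ℝ u) :
    HasDerivAt (fun t => hre (u t) (fun j => Complex.I * (k j : ℂ) * ρ t))
      (hre (deriv u t) (fun j => Complex.I * (k j : ℂ) * ρ t)
        + hre (u t) (fun j => Complex.I * (k j : ℂ) * deriv ρ t)) t := by
  have a := (hρ t).hasDerivAt
  have b := hasDerivAt_pi.1 (hu t).hasDerivAt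
  have key : HasDerivAt (fun t => ∑ j, u t j * conj (Complex.I * (k j : ℂ) * ρ t))
      (∑ j, (deriv u t j * conj (Complex.I * (k j : ℂ) * ρ t)
        + u t j * conj (Complex.I * (k j : ℂ) * deriv ρ t))) t := by
    refine HasDerivAt.fun_sum fun j _ => ?_
    refine (b j).mul ?_
    have := (a.const_mul (Complex.I * (k j : ℂ)))
    exact Complex.conjCLE.toContinuousLinearMap.hasFDerivAt.comp_hasDerivAt t this
  have := Complex.reCLM.hasFDerivAt.comp_hasDerivAt t key
  simp only [hre]
  rw [← Complex.add_re, ← Finset.sum_add_distrib]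
  exact this

/-- Dissipation of the densities through the interaction functional, with constants
depending only on the physical parameters (not on the frequency `k`), along solutions
of the Fourier-transformed linearized two-fluid Euler–Maxwell system. -/
theorem stmt_14 (mi me νi νe Ti Te e c : ℝ)
    (hmi : 0 < mi) (hme : 0 < me) (hνi : 0 < νi) (hνe : 0 < νe)
    (hTi : 0 < Ti) (hTe : 0 < Te) (he : 0 < e) (hc : 0 < c) :
    ∃ lam C : ℝ, 0 < lam ∧ 0 < C ∧
      ∀ (k : Fin 3 → ℝ) (ρi ρe : ℝ → ℂ) (ui ue E B : ℝ → Fin 3 → ℂ),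
        Differentiable ℝ ρi → Differentiable ℝ ρe →
        Differentiable ℝ ui → Differentiable ℝ ue →
        Differentiable ℝ E → Differentiable ℝ B →
        (∀ t : ℝ, deriv ρi t + Complex.I * ∑ j, (k j : ℂ) * ui t j = 0) →
        (∀ t : ℝ, deriv ρe t + Complex.I * ∑ j, (k j : ℂ) * ue t j = 0) →
        (∀ (t : ℝ) (j : Fin 3), (mi : ℂ) * deriv ui t j
          + (Ti : ℂ) * (Complex.I * (k j : ℂ)) * ρi t
          - (e : ℂ) * E t j + (mi : ℂ) * (νi : ℂ) * ui t j = 0) →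
        (∀ (t : ℝ) (j : Fin 3), (me : ℂ) * deriv ue t j
          + (Te : ℂ) * (Complex.I * (k j : ℂ)) * ρe t
          + (e : ℂ) * E t j + (me : ℂ) * (νe : ℂ) * ue t j = 0) →
        (∀ (t : ℝ) (j : Fin 3), deriv E t j - (c : ℂ) * cross3 (ikv k) (B t) j
          + 4 * (π : ℂ) * ((e : ℂ) * ui t j - (e : ℂ) * ue t j) = 0) →
        (∀ (t : ℝ) (j : Fin 3), deriv B t j + (c : ℂ) * cross3 (ikv k) (E t) j = 0) →
        (∀ t : ℝ, Complex.I * ∑ j, (k j : ℂ) * E t j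
          = 4 * (π : ℂ) * ((e : ℂ) * ρi t - (e : ℂ) * ρe t)) →
        (∀ t : ℝ, Complex.I * ∑ j, (k j : ℂ) * B t j = 0) →
        (let ksq : ℝ := ∑ j, (k j) ^ 2
         let If : ℝ → ℝ := fun t =>
           (1 + ksq)⁻¹ *
             (mi * hre (ui t) (fun j => Complex.I * (k j : ℂ) * ρi t)
               + me * hre (ue t) (fun j => Complex.I * (k j : ℂ) * ρe t))
         ∀ t : ℝ, 0 < t → ∃ d : ℝ, HasDerivAt If d t ∧
           d + lam * (ksq / (1 + ksq)) * (Complex.normSq (ρi t) + Complex.normSq (ρe t))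
             + (4 * π / (1 + ksq)) * Complex.normSq ((e : ℂ) * ρi t - (e : ℂ) * ρe t)
             ≤ C * (hsq (ui t) + hsq (ue t))) := by
  refine ⟨min Ti Te / 2, mi + mi ^ 2 * νi ^ 2 / (2 * Ti) + (me + me ^ 2 * νe ^ 2 / (2 * Te)),
    by positivity, by positivity, ?_⟩
  intro k ρi ρe ui ue E B hρi hρe hui hue _ _ h1 h2 h3 h4 _ _ h7 _
  intro ksq If t _
  have hk : 0 ≤ ksq := Finset.sum_nonneg fun j _ => sq_nonneg _
  refine ⟨_, (((species_deriv k ρi ui t hρi hui).const_mul mi).add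
    ((species_deriv k ρe ue t hρe hue).const_mul me)).const_mul (1 + ksq)⁻¹, ?_⟩
  have si := species_aux mi νi Ti hmi hTi k (ρi t) (deriv ρi t) (ui t) (deriv ui t)
    (fun j => (e : ℂ) * E t j) (h1 t) (h3 t)
  have se := species_aux me νe Te hme hTe k (ρe t) (deriv ρe t) (ue t) (deriv ue t)
    (fun j => -((e : ℂ) * E t j)) (h2 t) (fun j => by linear_combination h4 t j)
  have hE : hre (fun j => (e : ℂ) * E t j) (fun j => Complex.I * (k j : ℂ) * ρi t)
      + hre (fun j => -((e : ℂ) * E t j)) (fun j => Complex.I * (k j : ℂ) * ρe t)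
      = -(4 * π * Complex.normSq ((e : ℂ) * ρi t - (e : ℂ) * ρe t)) := by
    have e1 := congrArg Complex.re (h7 t)
    have e2 := congrArg Complex.im (h7 t)
    simp [Fin.sum_univ_three] at e1 e2
    simp [hre, Fin.sum_univ_three, Complex.normSq_apply]
    linear_combination (-(e * (ρi t).re - e * (ρe t).re)) * e1
      - (e * (ρi t).im - e * (ρe t).im) * e2
  have hksq : ∑ j, (k j) ^ 2 = ksq := rfl
  rw [hksq] at si se
  have ni : 0 ≤ hsq (ui t) := Finset.sum_nonneg fun j _ => Complex.normSq_nonneg _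
  have ne : 0 ≤ hsq (ue t) := Finset.sum_nonneg fun j _ => Complex.normSq_nonneg _
  have ri := Complex.normSq_nonneg (ρi t)
  have re := Complex.normSq_nonneg (ρe t)
  have hQi : 0 ≤ mi ^ 2 * νi ^ 2 / (2 * Ti) := by positivity
  have hQe : 0 ≤ me ^ 2 * νe ^ 2 / (2 * Te) := by positivity
  have li : min Ti Te / 2 * ksq * Complex.normSq (ρi t)
      ≤ Ti / 2 * ksq * Complex.normSq (ρi t) := by
    gcongr; exact min_le_left _ _
  have le : min Ti Te / 2 * ksq * Complex.normSq (ρe t)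
      ≤ Te / 2 * ksq * Complex.normSq (ρe t) := by
    gcongr; exact min_le_right _ _
  generalize mi ^ 2 * νi ^ 2 / (2 * Ti) = Qi at *
  generalize me ^ 2 * νe ^ 2 / (2 * Te) = Qe at *
  have bi : (mi * ksq + Qi) * hsq (ui t)
      ≤ (1 + ksq) * (mi + Qi + (me + Qe)) * hsq (ui t) := by
    gcongr
    have : 0 ≤ mi + ksq * Qi + (1 + ksq) * (me + Qe) := by positivity
    linarith
  have be : (me * ksq + Qe) * hsq (ue t)
      ≤ (1 + ksq) * (mi + Qi + (me + Qe)) * hsq (ue t) := by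
    gcongr
    have : 0 ≤ me + ksq * Qe + (1 + ksq) * (mi + Qi) := by positivity
    linarith
  have hp : 0 < 1 + ksq := by linarith
  refine le_of_mul_le_mul_left ?_ hp
  refine le_trans (le_of_eq (b := (mi * (hre (deriv ui t) (fun j => Complex.I * (k j : ℂ) * ρi t)
      + hre (ui t) (fun j => Complex.I * (k j : ℂ) * deriv ρi t))
    + me * (hre (deriv ue t) (fun j => Complex.I * (k j : ℂ) * ρe t)
      + hre (ue t) (fun j => Complex.I * (k j : ℂ) * deriv ρe t)))
    + min Ti Te / 2 * ksq * (Complex.normSq (ρi t) + Complex.normSq (ρe t))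
    + 4 * π * Complex.normSq ((e : ℂ) * ρi t - (e : ℂ) * ρe t)) ?_) ?_
  · generalize mi * (hre (deriv ui t) (fun j => Complex.I * (k j : ℂ) * ρi t)
      + hre (ui t) (fun j => Complex.I * (k j : ℂ) * deriv ρi t))
      + me * (hre (deriv ue t) (fun j => Complex.I * (k j : ℂ) * ρe t)
      + hre (ue t) (fun j => Complex.I * (k j : ℂ) * deriv ρe t)) = X
    field_simp
  · linarith
end

section
/- Fix k ∈ ℝ³ and positive constants m_i, m_e, ν_i, ν_e, e, c. Suppose û_i, û_e, Ê, B̂ : ℝ → ℂ³ are differentiable, k·B̂(t) = 0 for all t, and for all t: m_i û_i'(t) − e Ê(t) + m_iν_i û_i(t) = 0; m_e û_e'(t) + e Ê(t) + m_eν_e û_e(t) = 0; Ê'(t) − c (i k)×B̂(t) + 4π e (û_i(t) − û_e(t)) = 0; B̂'(t) + c (i k)×Ê(t) = 0. Then B̂ is four times differentiable and satisfies, for all t, the fourth-order linear ODE: B̂''''(t) + (ν_i + ν_e) B̂'''(t) + (c²|k|² + 4πe²/m_i + 4πe²/m_e + ν_iν_e) B̂''(t) + ((ν_i + ν_e) c²|k|²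 + 4π e²ν_e/m_i + 4π e²ν_i/m_e) B̂'(t) + ν_iν_e c²|k|² B̂(t) = 0. -/
open Real Complex

theorem cross3_hasDerivAt (a : Fin 3 → ℂ) {f : ℝ → Fin 3 → ℂ} {f' : Fin 3 → ℂ} {t : ℝ}
    (h : HasDerivAt f f' t) : HasDerivAt (fun s => cross3 a (f s)) (cross3 a f') t := by
  rw [hasDerivAt_pi] at h ⊢
  intro j
  fin_cases j
  · exact ((h 2).const_mul (a 1)).sub ((h 1).const_mul (a 2))
  · exact ((h 0).const_mul (a 2)).sub ((h 2).const_mul (a 0))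
  · exact ((h 1).const_mul (a 0)).sub ((h 0).const_mul (a 1))

theorem cross3_lin (a u v : Fin 3 → ℂ) (x y : ℂ) :
    cross3 a (x • u + y • v) = x • cross3 a u + y • cross3 a v := by
  ext j
  fin_cases j <;> simp [cross3] <;> ring

theorem cross3_ikv (k : Fin 3 → ℝ) (v : Fin 3 → ℂ) (h : ∑ j, (k j : ℂ) * v j = 0) :
    cross3 (ikv k) (cross3 (ikv k) v) = ((∑ j, (k j) ^ 2 : ℝ) : ℂ) • v := by
  rw [Fin.sum_univ_three] at h
  have hI := Complex.I_sq
  ext j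
  fin_cases j <;> simp [cross3, ikv, Fin.sum_univ_three]
  · linear_combination (-(k 0 : ℂ)) * h + ((k 0 : ℂ) * (k 1 * v 1 + k 2 * v 2) - (k 1 ^ 2 + k 2 ^ 2) * v 0) * hI
  · linear_combination (-(k 1 : ℂ)) * h + ((k 1 : ℂ) * (k 0 * v 0 + k 2 * v 2) - (k 0 ^ 2 + k 2 ^ 2) * v 1) * hI
  · linear_combination (-(k 2 : ℂ)) * h + ((k 2 : ℂ) * (k 1 * v 1 + k 0 * v 0) - (k 1 ^ 2 + k 0 ^ 2) * v 2) * hI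

/-- Reduction of the Fourier-transformed transverse electromagnetic subsystem of the
linearized two-fluid Euler–Maxwell system to a fourth-order linear ODE for the
magnetic field `B̂`. -/
theorem stmt_15 (k : Fin 3 → ℝ) (mi me νi νe e c : ℝ)
    (hmi : 0 < mi) (hme : 0 < me) (hνi : 0 < νi) (hνe : 0 < νe)
    (he : 0 < e) (hc : 0 < c)
    (ui ue E B : ℝ → Fin 3 → ℂ)
    (hui : Differentiable ℝ ui) (hue : Differentiable ℝ ue)
    (hE : Differentiable ℝ E) (hB : Differentiable ℝ B)
    (hBorth : ∀ t : ℝ, ∑ j, (k j : ℂ) * B t j = 0)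
    (h1 : ∀ (t : ℝ) (j : Fin 3), (mi : ℂ) * deriv ui t j - (e : ℂ) * E t j
      + (mi : ℂ) * (νi : ℂ) * ui t j = 0)
    (h2 : ∀ (t : ℝ) (j : Fin 3), (me : ℂ) * deriv ue t j + (e : ℂ) * E t j
      + (me : ℂ) * (νe : ℂ) * ue t j = 0)
    (h3 : ∀ (t : ℝ) (j : Fin 3), deriv E t j - (c : ℂ) * cross3 (ikv k) (B t) j
      + 4 * (π : ℂ) * (e : ℂ) * (ui t j - ue t j) = 0)
    (h4 : ∀ (t : ℝ) (j : Fin 3),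
      deriv B t j + (c : ℂ) * cross3 (ikv k) (E t) j = 0) :
    let ksq : ℝ := ∑ j, (k j) ^ 2
    Differentiable ℝ (deriv B) ∧ Differentiable ℝ (deriv (deriv B)) ∧
      Differentiable ℝ (deriv (deriv (deriv B))) ∧
      ∀ (t : ℝ) (j : Fin 3),
        deriv (deriv (deriv (deriv B))) t j
          + ((νi + νe : ℝ) : ℂ) * deriv (deriv (deriv B)) t j
          + ((c ^ 2 * ksq + 4 * π * e ^ 2 / mi + 4 * π * e ^ 2 / me + νi * νe : ℝ) : ℂ) *
              deriv (deriv B) t j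
          + (((νi + νe) * c ^ 2 * ksq + 4 * π * e ^ 2 * νe / mi
              + 4 * π * e ^ 2 * νi / me : ℝ) : ℂ) * deriv B t j
          + ((νi * νe * c ^ 2 * ksq : ℝ) : ℂ) * B t j = 0 := by
  intro ksq
  have hmi' : (mi : ℂ) ≠ 0 := by exact_mod_cast hmi.ne'
  have hme' : (me : ℂ) ≠ 0 := by exact_mod_cast hme.ne'
  have hc' : (c : ℂ) ≠ 0 := by exact_mod_cast hc.ne'
  obtain ⟨P, hP⟩ : ∃ P : ℝ → Fin 3 → ℂ, P = fun t => cross3 (ikv k) (ui t) := ⟨_, rfl⟩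
  obtain ⟨Q, hQ⟩ : ∃ Q : ℝ → Fin 3 → ℂ, Q = fun t => cross3 (ikv k) (ue t) := ⟨_, rfl⟩
  obtain ⟨A, hA⟩ : ∃ A : ℝ → Fin 3 → ℂ, A = deriv B := ⟨_, rfl⟩
  have hAE : A = fun t => (-(c : ℂ)) • cross3 (ikv k) (E t) := by
    ext t j
    have := h4 t j
    simp only [hA, Pi.smul_apply, smul_eq_mul]
    linear_combination this
  have dB : ∀ t, HasDerivAt B (A t) t := fun t => by
    rw [hA]; exact (hB t).hasDerivAt
  have dP : ∀ t, HasDerivAt P ((-(e : ℂ) / (mi * c)) • A t + (-(νi : ℂ)) • P t) t := fun t => by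
    have h := cross3_hasDerivAt (ikv k) (hui t).hasDerivAt
    have e1 : deriv ui t = ((e : ℂ) / mi) • E t + (-(νi : ℂ)) • ui t := by
      ext j
      have := h1 t j
      simp only [Pi.add_apply, Pi.smul_apply, smul_eq_mul]
      field_simp
      linear_combination this
    rw [e1, cross3_lin] at h
    rw [hP, hAE]
    convert h using 1
    ext j
    simp only [Pi.add_apply, Pi.smul_apply, smul_eq_mul]
    field_simp
  have dQ : ∀ t, HasDerivAt Q (((e : ℂ) / (me * c)) • A t + (-(νe : ℂ)) • Q t) t := fun t => by
    have h := cross3_hasDerivAt (ikv k) (hue t).hasDerivAt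
    have e1 : deriv ue t = (-(e : ℂ) / me) • E t + (-(νe : ℂ)) • ue t := by
      ext j
      have := h2 t j
      simp only [Pi.add_apply, Pi.smul_apply, smul_eq_mul]
      field_simp
      linear_combination this
    rw [e1, cross3_lin] at h
    rw [hQ, hAE]
    convert h using 1
    ext j
    simp only [Pi.add_apply, Pi.smul_apply, smul_eq_mul]
    field_simp
  have dA : ∀ t, HasDerivAt A ((-(c : ℂ) ^ 2 * ksq) • B t
      + (4 * (π : ℂ) * e * c) • (P t - Q t)) t := fun t => by
    have h := (cross3_hasDerivAt (ikv k) (hE t).hasDerivAt).const_smul (-(c : ℂ))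
    have e1 : deriv E t = (c : ℂ) • cross3 (ikv k) (B t)
        + (-(4 * (π : ℂ) * e)) • ((1 : ℂ) • ui t + (-1 : ℂ) • ue t) := by
      ext j
      have := h3 t j
      simp only [Pi.add_apply, Pi.smul_apply, smul_eq_mul]
      linear_combination this
    rw [e1, cross3_lin, cross3_lin, cross3_ikv k _ (hBorth t)] at h
    rw [hAE, hP, hQ]
    refine HasDerivAt.congr_deriv h ?_
    ext j
    simp only [Pi.add_apply, Pi.sub_apply, Pi.smul_apply, smul_eq_mul, ksq]
    ring
  have eA := funext fun t => (dA t).deriv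
  have d2 := fun t => ((dB t).const_smul (-(c : ℂ) ^ 2 * ksq)).add
    (((dP t).sub (dQ t)).const_smul (4 * (π : ℂ) * e * c))
  have d2' : ∀ t, HasDerivAt (deriv A) _ t := fun t => by rw [eA]; exact d2 t
  have eA2 := funext fun t => (d2' t).deriv
  have d3 := fun t => ((dA t).const_smul (-(c : ℂ) ^ 2 * ksq)).add
    (((((dA t).const_smul (-(e : ℂ) / (mi * c))).add ((dP t).const_smul (-(νi : ℂ)))).sub
      (((dA t).const_smul ((e : ℂ) / (me * c))).add ((dQ t).const_smul (-(νe : ℂ))))).const_smul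
        (4 * (π : ℂ) * e * c))
  have d3' : ∀ t, HasDerivAt (deriv (deriv A)) _ t := fun t => by rw [eA2]; exact d3 t
  rw [← hA]
  refine ⟨fun t => (dA t).differentiableAt, fun t => (d2' t).differentiableAt,
    fun t => (d3' t).differentiableAt, fun t j => ?_⟩
  rw [(d3' t).deriv, (d2' t).deriv, (dA t).deriv]
  simp only [Pi.add_apply, Pi.sub_apply, Pi.smul_apply, smul_eq_mul]
  push_cast
  field_simp
  ring
end

section
/- Let m_i, m_e, ν_i, ν_e, e, c > 0, set μ₂ = c²m_iν_im_eν_e/(4πe²(m_iν_i+m_eν_e)), and assume the cubic g(λ) = λ³ + (ν_i+ν_e)λ² + (ν_iν_e + 4π(e²/m_i+e²/m_e))λ + 4π(e²ν_e/m_i+e²ν_i/m_e) has three distinct complex roots. Then there exist constants r₀, C, λ > 0 such that for every k ∈ ℝ³ with 0 < |k| ≤ r₀ and every solution (û_i, û_e, Ê, B̂) of the Fourier-transformed transverse electromagnetic system at frequency k, one has for all t ≥ 0: |B̂(t) − e^{−μ₂|k|²t} B̂(0)| ≤ C(|k| e^{−λ|k|²t} + e^{−λt}) |Û_{0,⊥}|,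 where |Û_{0,⊥}|² = |û_i(0)|² + |û_e(0)|² + |Ê(0)|² + |B̂(0)|². -/
open Real Complex

/-- Hermitian norm on `ℂ³`. -/
noncomputable def hnorm (v : Fin 3 → ℂ) : ℝ := Real.sqrt (hsq v)

lemma aux_le_of_deriv (w w' : ℝ → ℝ) (hw : ∀ t, HasDerivAt w (w' t) t)
    (h : ∀ t, 0 ≤ t → w' t ≤ 0) (t : ℝ) (ht : 0 ≤ t) : w t ≤ w 0 := by
  have hanti : AntitoneOn w (Set.Ici 0) := by
    apply antitoneOn_of_deriv_nonpos (convex_Ici 0)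
    · exact fun x _ => (hw x).continuousAt.continuousWithinAt
    · exact fun x _ => (hw x).differentiableAt.differentiableWithinAt
    · intro x hx
      rw [interior_Ici] at hx
      rw [(hw x).deriv]
      exact h x (le_of_lt hx)
  exact hanti (by simp) (by simpa using ht) ht

set_option maxHeartbeats 1000000 in
/-- quadratic form lemma: lower bound of the dissipation. -/
lemma aux_quad (n1 n2 p c ν w : ℝ) (h1 : 0 < n1) (h2 : 0 < n2) (hp : 0 < p) (hc : 0 < c)
    (hν : 0 < ν) (hw : 0 < w) :
    ∃ s0 d : ℝ, 0 < s0 ∧ s0 ≤ 1 ∧ 0 < d ∧ ∀ s, 0 < s → s ≤ s0 → ∀ r, 0 < r → r ≤ 1 →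
      ∀ a b f B : ℝ,
      d * s ^ 6 * r ^ 2 * (a ^ 2 + b ^ 2 + f ^ 2 + B ^ 2) ≤
      n1 * a ^ 2 + n2 * b ^ 2 + s ^ 4 * (p * f ^ 2 - ν * a * f + a * (c * r * B - w * (a - b)))
        + s ^ 6 * r * (c * r * B ^ 2 - w * (a - b) * B - c * r * f ^ 2) := by
  set D := min (min n1 n2) (min p c) with hD
  have hDpos : 0 < D := by simp [hD, *]
  have d1 : D ≤ n1 := (min_le_left _ _).trans (min_le_left _ _)
  have d2 : D ≤ n2 := (min_le_left _ _).trans (min_le_right _ _)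
  have d3 : D ≤ p := (min_le_right _ _).trans (min_le_left _ _)
  have d4 : D ≤ c := (min_le_right _ _).trans (min_le_right _ _)
  set K := ν + 2 * c + 4 * w with hK
  have hKpos : 0 < K := by positivity
  refine ⟨min 1 (D / (2 * K)), D / 2, by positivity, min_le_left _ _, by positivity, ?_⟩
  intro s hs hs0 r hr hr1 a b f B
  have hs1 : s ≤ 1 := hs0.trans (min_le_left _ _)
  have hsK : s * K ≤ D / 2 := by
    have := hs0.trans (min_le_right _ _)
    rw [le_div_iff₀ (by positivity)] at this
    linarith
  set F := s ^ 2 * f with hF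
  set y := s ^ 3 * r * B with hy
  have e1 : n1 * a ^ 2 + n2 * b ^ 2 + s ^ 4 * (p * f ^ 2 - ν * a * f + a * (c * r * B - w * (a - b)))
        + s ^ 6 * r * (c * r * B ^ 2 - w * (a - b) * B - c * r * f ^ 2)
      = n1 * a ^ 2 + n2 * b ^ 2 + p * F ^ 2 + c * y ^ 2
        - s * (s * (ν * (a * F)) - c * (a * y) + s ^ 3 * (w * (a ^ 2 - a * b))
          + s ^ 2 * (w * (a - b) * y) + s * r ^ 2 * (c * F ^ 2)) := by
    rw [hF, hy]; ring
  rw [e1]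
  set N := a ^ 2 + b ^ 2 + F ^ 2 + y ^ 2 with hN
  have hNp : 0 ≤ N := by positivity
  have key : ∀ q x M : ℝ, 0 ≤ q → q ≤ 1 → x ≤ M → 0 ≤ M → q * x ≤ M := by
    intro q x M h0 h1 h2 h3
    nlinarith
  have t1 : s * (ν * (a * F)) ≤ ν * N := by
    apply key _ _ _ hs.le hs1 _ (by positivity)
    apply mul_le_mul_of_nonneg_left _ hν.le
    nlinarith [sq_nonneg (a - F), sq_nonneg (a + F), sq_nonneg b, sq_nonneg y]
  have t2 : - (c * (a * y)) ≤ c * N := by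
    rw [← mul_neg]
    apply mul_le_mul_of_nonneg_left _ hc.le
    nlinarith [sq_nonneg (a - y), sq_nonneg (a + y), sq_nonneg b, sq_nonneg F]
  have t3 : s ^ 3 * (w * (a ^ 2 - a * b)) ≤ 2 * w * N := by
    apply key _ _ _ (by positivity) (pow_le_one₀ hs.le hs1) _ (by positivity)
    have : a ^ 2 - a * b ≤ 2 * N := by
      rw [hN]
      nlinarith [sq_nonneg (a + b), sq_nonneg F, sq_nonneg y, sq_nonneg a, sq_nonneg b]
    have := mul_le_mul_of_nonneg_left this hw.le
    linarith
  have t4 : s ^ 2 * (w * (a - b) * y) ≤ 2 * w * N := by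
    apply key _ _ _ (by positivity) (pow_le_one₀ hs.le hs1) _ (by positivity)
    have : (a - b) * y ≤ 2 * N := by
      rw [hN]
      linarith [sq_nonneg (a - y), sq_nonneg (b + y), sq_nonneg F, sq_nonneg y, sq_nonneg a, sq_nonneg b,
        show (a - y) ^ 2 = a ^ 2 - 2 * (a * y) + y ^ 2 by ring,
        show (b + y) ^ 2 = b ^ 2 + 2 * (b * y) + y ^ 2 by ring,
        show (a - b) * y = a * y - b * y by ring]
    have := mul_le_mul_of_nonneg_left this hw.le
    linarith
  have t5 : s * r ^ 2 * (c * F ^ 2) ≤ c * N := by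
    apply key _ _ _ (by positivity) (mul_le_one₀ hs1 (by positivity) (pow_le_one₀ hr.le hr1)) _ (by positivity)
    apply mul_le_mul_of_nonneg_left _ hc.le
    nlinarith [sq_nonneg a, sq_nonneg b, sq_nonneg y]
  have t6 : s * (s * (ν * (a * F)) - c * (a * y) + s ^ 3 * (w * (a ^ 2 - a * b))
          + s ^ 2 * (w * (a - b) * y) + s * r ^ 2 * (c * F ^ 2)) ≤ s * (K * N) := by
    apply mul_le_mul_of_nonneg_left _ hs.le
    have : K * N = ν * N + 2 * (c * N) + 2 * (2 * w * N) := by rw [hK]; ring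
    linarith
  have t7 : s * (K * N) ≤ D / 2 * N := by
    rw [← mul_assoc]; exact mul_le_mul_of_nonneg_right hsK hNp
  have t8 : D * N ≤ n1 * a ^ 2 + n2 * b ^ 2 + p * F ^ 2 + c * y ^ 2 := by
    rw [hN]
    nlinarith [mul_le_mul_of_nonneg_right d1 (sq_nonneg a), mul_le_mul_of_nonneg_right d2 (sq_nonneg b),
      mul_le_mul_of_nonneg_right d3 (sq_nonneg F), mul_le_mul_of_nonneg_right d4 (sq_nonneg y)]
  have t9 : s ^ 6 * r ^ 2 * (a ^ 2 + b ^ 2 + f ^ 2 + B ^ 2) ≤ N := by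
    have g1 : s ^ 6 * r ^ 2 ≤ 1 :=
      mul_le_one₀ (pow_le_one₀ hs.le hs1) (by positivity) (pow_le_one₀ hr.le hr1)
    have g2 : s ^ 2 * r ^ 2 ≤ 1 :=
      mul_le_one₀ (pow_le_one₀ hs.le hs1) (by positivity) (pow_le_one₀ hr.le hr1)
    have i1 := key _ _ _ (by positivity) g1 (le_refl (a ^ 2)) (by positivity)
    have i2 := key _ _ _ (by positivity) g1 (le_refl (b ^ 2)) (by positivity)
    have i3 := key _ _ _ (by positivity) g2 (le_refl (F ^ 2)) (by positivity)
    have i3' : s ^ 2 * r ^ 2 * F ^ 2 = s ^ 6 * r ^ 2 * f ^ 2 := by rw [hF]; ring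
    have i4 : y ^ 2 = s ^ 6 * r ^ 2 * B ^ 2 := by rw [hy]; ring
    rw [hN]; nlinarith
  have t10 : D / 2 * s ^ 6 * r ^ 2 * (a ^ 2 + b ^ 2 + f ^ 2 + B ^ 2) ≤ D / 2 * N := by
    calc _ = D / 2 * (s ^ 6 * r ^ 2 * (a ^ 2 + b ^ 2 + f ^ 2 + B ^ 2)) := by ring
      _ ≤ _ := mul_le_mul_of_nonneg_left t9 (by positivity)
  linarith

/-- coercivity of the Lyapunov functional. -/
lemma aux_coer (m1 m2 q : ℝ) (h1 : 0 < m1) (h2 : 0 < m2) (hq : 0 < q) :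
    ∃ s0 l M : ℝ, 0 < s0 ∧ 0 < l ∧ 0 < M ∧ ∀ s, 0 < s → s ≤ s0 → s ≤ 1 → ∀ r, 0 < r → r ≤ 1 →
      ∀ a b f B : ℝ,
      l * (a ^ 2 + b ^ 2 + f ^ 2 + B ^ 2) ≤
        m1 * a ^ 2 + m2 * b ^ 2 + q * (f ^ 2 + B ^ 2) - 2 * s ^ 4 * (a * f) - 2 * (s ^ 6 * r) * (f * B) ∧
      m1 * a ^ 2 + m2 * b ^ 2 + q * (f ^ 2 + B ^ 2) - 2 * s ^ 4 * (a * f) - 2 * (s ^ 6 * r) * (f * B)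
        ≤ M * (a ^ 2 + b ^ 2 + f ^ 2 + B ^ 2) := by
  set D := min (min m1 m2) q with hD
  have hDpos : 0 < D := by simp [hD, *]
  have d1 : D ≤ m1 := (min_le_left _ _).trans (min_le_left _ _)
  have d2 : D ≤ m2 := (min_le_left _ _).trans (min_le_right _ _)
  have d3 : D ≤ q := min_le_right _ _
  refine ⟨D / 4, D / 2, m1 + m2 + q + 2, by positivity, by positivity, by positivity, ?_⟩
  intro s hs hs0 hs1 r hr hr1 a b f B
  have k1 : s ^ 4 ≤ s := by
    calc s ^ 4 = s * s ^ 3 := by ring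
      _ ≤ s * 1 := mul_le_mul_of_nonneg_left (pow_le_one₀ hs.le hs1) hs.le
      _ = s := by ring
  have k2 : s ^ 6 * r ≤ s := by
    calc s ^ 6 * r = s * (s ^ 5 * r) := by ring
      _ ≤ s * 1 := mul_le_mul_of_nonneg_left (mul_le_one₀ (pow_le_one₀ hs.le hs1) hr.le hr1) hs.le
      _ = s := by ring
  have key : ∀ z x y : ℝ, 0 ≤ z → z ≤ s → |2 * z * (x * y)| ≤ s * (x ^ 2 + y ^ 2) := by
    intro z x y hz hzs
    have : z * (x ^ 2 + y ^ 2) ≤ s * (x ^ 2 + y ^ 2) :=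
      mul_le_mul_of_nonneg_right hzs (by positivity)
    rw [abs_le]
    constructor
    · nlinarith [mul_nonneg hz (sq_nonneg (x + y))]
    · nlinarith [mul_nonneg hz (sq_nonneg (x - y))]
  have i1 := abs_le.1 (key (s ^ 4) a f (by positivity) k1)
  have i2 := abs_le.1 (key (s ^ 6 * r) f B (by positivity) k2)
  have j : s * (a ^ 2 + f ^ 2) + s * (f ^ 2 + B ^ 2) ≤ 2 * s * (a ^ 2 + b ^ 2 + f ^ 2 + B ^ 2) := by
    nlinarith [mul_nonneg hs.le (sq_nonneg a), mul_nonneg hs.le (sq_nonneg b), mul_nonneg hs.le (sq_nonneg B)]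
  have hN : 0 ≤ a ^ 2 + b ^ 2 + f ^ 2 + B ^ 2 := by positivity
  have u1 : s * (a ^ 2 + b ^ 2 + f ^ 2 + B ^ 2) ≤ D / 4 * (a ^ 2 + b ^ 2 + f ^ 2 + B ^ 2) :=
    mul_le_mul_of_nonneg_right hs0 hN
  have u2 : s * (a ^ 2 + b ^ 2 + f ^ 2 + B ^ 2) ≤ 1 * (a ^ 2 + b ^ 2 + f ^ 2 + B ^ 2) :=
    mul_le_mul_of_nonneg_right hs1 hN
  constructor
  · nlinarith [mul_le_mul_of_nonneg_right d1 (sq_nonneg a), mul_le_mul_of_nonneg_right d2 (sq_nonneg b),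
      mul_le_mul_of_nonneg_right d3 (sq_nonneg f), mul_le_mul_of_nonneg_right d3 (sq_nonneg B)]
  · have : m1 * a ^ 2 + m2 * b ^ 2 + q * (f ^ 2 + B ^ 2) ≤ (m1 + m2 + q) * (a ^ 2 + b ^ 2 + f ^ 2 + B ^ 2) := by
      have x1 : 0 ≤ (m2 + q) * a ^ 2 := by positivity
      have x2 : 0 ≤ (m1 + q) * b ^ 2 := by positivity
      have x3 : 0 ≤ (m1 + m2) * (f ^ 2 + B ^ 2) := by positivity
      nlinarith
    nlinarith

set_option maxHeartbeats 1000000 in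
/-- decay of the real scalar system. -/
lemma aux_decay (mi me νi νe e c : ℝ)
    (hmi : 0 < mi) (hme : 0 < me) (hνi : 0 < νi) (hνe : 0 < νe)
    (he : 0 < e) (hc : 0 < c) :
    ∃ K θ : ℝ, 0 < K ∧ 0 < θ ∧ ∀ r : ℝ, 0 < r → r ≤ 1 → ∀ a b f B : ℝ → ℝ,
      (∀ t, HasDerivAt a (e / mi * f t - νi * a t) t) →
      (∀ t, HasDerivAt b (-(e / me) * f t - νe * b t) t) →
      (∀ t, HasDerivAt f (c * r * B t - 4 * π * e * (a t - b t)) t) →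
      (∀ t, HasDerivAt B (-(c * r) * f t) t) →
      ∀ t, 0 ≤ t → a t ^ 2 + b t ^ 2 + f t ^ 2 + B t ^ 2 ≤
        K * Real.exp (-(θ * r ^ 2 * t)) * (a 0 ^ 2 + b 0 ^ 2 + f 0 ^ 2 + B 0 ^ 2) := by
  have hpi := Real.pi_pos
  obtain ⟨s1, d, hs1, hs11, hd, H1⟩ := aux_quad (mi * νi) (me * νe) (e / mi) c νi (4 * π * e)
    (by positivity) (by positivity) (by positivity) hc hνi (by positivity)
  obtain ⟨s2, l, M, hs2, hl, hM, H2⟩ := aux_coer mi me (1 / (4 * π)) hmi hme (by positivity)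
  set s := min s1 s2 with hs
  have hspos : 0 < s := lt_min hs1 hs2
  have hsa : s ≤ s1 := min_le_left _ _
  have hsb : s ≤ s2 := min_le_right _ _
  set θ := 2 * (d * s ^ 6) / M with hθ
  have hθpos : 0 < θ := by positivity
  refine ⟨M / l, θ, by positivity, hθpos, ?_⟩
  intro r hr hr1 a b f B ha hb hf hB t ht
  have H1' := H1 s hspos hsa r hr hr1
  have H2' := H2 s hspos hsb (hsa.trans hs11) r hr hr1
  set L : ℝ → ℝ := fun t => mi * a t ^ 2 + me * b t ^ 2 + 1 / (4 * π) * (f t ^ 2 + B t ^ 2)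
    - 2 * s ^ 4 * (a t * f t) - 2 * (s ^ 6 * r) * (f t * B t) with hL
  set Q : ℝ → ℝ := fun t => mi * νi * a t ^ 2 + me * νe * b t ^ 2
    + s ^ 4 * (e / mi * f t ^ 2 - νi * a t * f t + a t * (c * r * B t - 4 * π * e * (a t - b t)))
    + s ^ 6 * r * (c * r * B t ^ 2 - 4 * π * e * (a t - b t) * B t - c * r * f t ^ 2) with hQ
  have dL : ∀ t, HasDerivAt L (-2 * Q t) t := by
    intro t
    have h := ((((((ha t).pow 2).const_mul mi).add (((hb t).pow 2).const_mul me)).add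
      ((((hf t).pow 2).add ((hB t).pow 2)).const_mul (1 / (4 * π)))).sub
      (((ha t).mul (hf t)).const_mul (2 * s ^ 4))).sub
      (((hf t).mul (hB t)).const_mul (2 * (s ^ 6 * r)))
    refine h.congr_deriv ?_
    simp only [hQ]
    field_simp
    ring
  have hexp : ∀ t, HasDerivAt (fun t => Real.exp (θ * r ^ 2 * t)) (Real.exp (θ * r ^ 2 * t) * (θ * r ^ 2)) t := by
    intro t
    have h := ((hasDerivAt_id t).const_mul (θ * r ^ 2)).exp
    simpa using h
  have main := aux_le_of_deriv (fun t => Real.exp (θ * r ^ 2 * t) * L t) _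
    (fun t => (hexp t).mul (dL t)) (by
      intro x _
      have q1 := H1' (a x) (b x) (f x) (B x)
      have q2 := (H2' (a x) (b x) (f x) (B x)).2
      have q3 : θ * r ^ 2 * L x ≤ 2 * Q x := by
        calc θ * r ^ 2 * L x ≤ θ * r ^ 2 * (M * (a x ^ 2 + b x ^ 2 + f x ^ 2 + B x ^ 2)) :=
              mul_le_mul_of_nonneg_left q2 (by positivity)
          _ = 2 * (d * s ^ 6 * r ^ 2 * (a x ^ 2 + b x ^ 2 + f x ^ 2 + B x ^ 2)) := by
              rw [hθ]; field_simp
          _ ≤ 2 * Q x := by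
              apply mul_le_mul_of_nonneg_left q1 (by norm_num)
      have := mul_le_mul_of_nonneg_left q3 (Real.exp_pos (θ * r ^ 2 * x)).le
      nlinarith) t ht
  simp only [mul_zero, Real.exp_zero, one_mul] at main
  have q1 := (H2' (a t) (b t) (f t) (B t)).1
  have q2 := (H2' (a 0) (b 0) (f 0) (B 0)).2
  have q3 : L t ≤ Real.exp (-(θ * r ^ 2 * t)) * L 0 := by
    rw [Real.exp_neg, ← div_eq_inv_mul, le_div_iff₀ (Real.exp_pos _), mul_comm]
    exact main
  have q4 : l * (a t ^ 2 + b t ^ 2 + f t ^ 2 + B t ^ 2) ≤ Real.exp (-(θ * r ^ 2 * t)) *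
      (M * (a 0 ^ 2 + b 0 ^ 2 + f 0 ^ 2 + B 0 ^ 2)) :=
    q1.trans (q3.trans (mul_le_mul_of_nonneg_left q2 (Real.exp_pos _).le))
  rw [← sub_nonneg] at q4 ⊢
  have := div_nonneg q4 hl.le
  refine this.trans (le_of_eq ?_)
  field_simp

set_option maxHeartbeats 1000000 in
/-- error estimate for the real scalar system. -/
lemma aux_real (mi me νi νe e c : ℝ)
    (hmi : 0 < mi) (hme : 0 < me) (hνi : 0 < νi) (hνe : 0 < νe)
    (he : 0 < e) (hc : 0 < c) :
    ∃ C lam : ℝ, 0 < C ∧ 0 < lam ∧ ∀ r : ℝ, 0 < r → r ≤ 1 → ∀ a b f B : ℝ → ℝ,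
      (∀ t, HasDerivAt a (e / mi * f t - νi * a t) t) →
      (∀ t, HasDerivAt b (-(e / me) * f t - νe * b t) t) →
      (∀ t, HasDerivAt f (c * r * B t - 4 * π * e * (a t - b t)) t) →
      (∀ t, HasDerivAt B (-(c * r) * f t) t) →
      ∀ t, 0 ≤ t →
        (B t - Real.exp (-(c ^ 2 * mi * νi * me * νe / (4 * π * e ^ 2 * (mi * νi + me * νe))
          * r ^ 2 * t)) * B 0) ^ 2 ≤
        (C * (r * Real.exp (-(lam * r ^ 2 * t)))) ^ 2 * (a 0 ^ 2 + b 0 ^ 2 + f 0 ^ 2 + B 0 ^ 2) := by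
  have hpi := Real.pi_pos
  obtain ⟨K, θ, hK, hθ, H⟩ := aux_decay mi me νi νe e c hmi hme hνi hνe he hc
  set μ := c ^ 2 * mi * νi * me * νe / (4 * π * e ^ 2 * (mi * νi + me * νe)) with hμ
  have hμpos : 0 < μ := by positivity
  set lam := min (θ / 2) (μ / 2) with hlam
  have hlampos : 0 < lam := by positivity
  have hlμ : lam ≤ μ / 2 := min_le_right _ _
  have hlθ : lam ≤ θ / 2 := min_le_left _ _
  set α := 4 * π * e * μ / (c * νi) with hα
  set β := -(4 * π * e * μ / (c * νe)) with hβ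
  set γ := -(μ / c) with hγ
  set A := |α| + |β| + |γ| with hA
  have hA0 : 0 ≤ A := by positivity
  set G := A * Real.sqrt K with hG
  have hG0 : 0 ≤ G := by positivity
  set C := G + A + μ * G / (μ - lam) + 1 with hC
  have hml : 0 < μ - lam := by linarith
  refine ⟨C, lam, by positivity, hlampos, ?_⟩
  intro r hr hr1 a b f B ha hb hf hB t ht
  set S := a 0 ^ 2 + b 0 ^ 2 + f 0 ^ 2 + B 0 ^ 2 with hS
  have hS0 : 0 ≤ S := by positivity
  set U := Real.sqrt S with hU
  have hU0 : 0 ≤ U := Real.sqrt_nonneg _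
  set X : ℝ → ℝ := fun t => α * a t + β * b t + γ * f t with hX
  have linb : ∀ t N, 0 ≤ N → a t ^ 2 + b t ^ 2 + f t ^ 2 + B t ^ 2 ≤ N ^ 2 → |X t| ≤ A * N := by
    intro t N hN h
    have h1 : |a t| ≤ N := abs_le_of_sq_le_sq (by nlinarith [sq_nonneg (b t), sq_nonneg (f t), sq_nonneg (B t)]) hN
    have h2 : |b t| ≤ N := abs_le_of_sq_le_sq (by nlinarith [sq_nonneg (a t), sq_nonneg (f t), sq_nonneg (B t)]) hN
    have h3 : |f t| ≤ N := abs_le_of_sq_le_sq (by nlinarith [sq_nonneg (b t), sq_nonneg (a t), sq_nonneg (B t)]) hN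
    calc |X t| ≤ |α * a t| + |β * b t| + |γ * f t| := abs_add_three _ _ _
      _ = |α| * |a t| + |β| * |b t| + |γ| * |f t| := by simp [abs_mul]
      _ ≤ |α| * N + |β| * N + |γ| * N := by gcongr
      _ = A * N := by rw [hA]; ring
  have X0 : |X 0| ≤ A * U := linb 0 U hU0 (by rw [hU, Real.sq_sqrt hS0])
  have Xt : ∀ t, 0 ≤ t → |X t| ≤ G * U * Real.exp (-(lam * r ^ 2 * t)) := by
    intro t ht
    have h := linb t (Real.sqrt K * Real.exp (-(lam * r ^ 2 * t)) * U) (by positivity) ?_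
    · refine h.trans (le_of_eq ?_)
      rw [hG]; ring
    · refine (H r hr hr1 a b f B ha hb hf hB t ht).trans ?_
      rw [mul_pow, mul_pow, Real.sq_sqrt hK.le, hU, Real.sq_sqrt hS0, ← Real.exp_nat_mul]
      apply mul_le_mul_of_nonneg_right _ hS0
      apply mul_le_mul_of_nonneg_left _ hK.le
      apply Real.exp_le_exp.2
      have : 0 ≤ r ^ 2 * t := by positivity
      push_cast
      nlinarith
  set W : ℝ → ℝ := fun t => B t + r * X t with hW
  have dW : ∀ t, HasDerivAt W (-(μ * r ^ 2) * B t) t := by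
    intro t
    have h := (hB t).add (((((ha t).const_mul α).add ((hb t).const_mul β)).add
      ((hf t).const_mul γ)).const_mul r)
    refine h.congr_deriv ?_
    have hne : mi * νi + me * νe ≠ 0 := by positivity
    rw [hα, hβ, hγ, hμ]
    field_simp
    ring
  have hexp : ∀ q t : ℝ, HasDerivAt (fun t => Real.exp (q * t)) (Real.exp (q * t) * q) t := by
    intro q t
    have h := ((hasDerivAt_id t).const_mul q).exp
    simpa using h
  set w : ℝ → ℝ := fun t => Real.exp (μ * r ^ 2 * t) * W t with hw
  have dw : ∀ t, HasDerivAt w (Real.exp (μ * r ^ 2 * t) * (μ * r ^ 3 * X t)) t := by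
    intro t
    refine ((hexp (μ * r ^ 2) t).mul (dW t)).congr_deriv ?_
    simp only [hW]; ring
  set P := μ * G / (μ - lam) * r * U with hP
  have hP0 : 0 ≤ P := by positivity
  set h : ℝ → ℝ := fun t => P * Real.exp ((μ - lam) * r ^ 2 * t) with hh
  have dh : ∀ t, HasDerivAt h (Real.exp (μ * r ^ 2 * t) * (μ * r ^ 3 * (G * U * Real.exp (-(lam * r ^ 2 * t))))) t := by
    intro t
    refine ((hexp ((μ - lam) * r ^ 2) t).const_mul P).congr_deriv ?_
    have : Real.exp ((μ - lam) * r ^ 2 * t) = Real.exp (μ * r ^ 2 * t) * Real.exp (-(lam * r ^ 2 * t)) := by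
      rw [← Real.exp_add]; congr 1; ring
    rw [this, hP]
    field_simp
  have B1 := aux_le_of_deriv (fun t => w t - h t) _ (fun t => (dw t).sub (dh t)) (by
    intro x hx
    rw [← mul_sub, ← mul_sub]
    have := (abs_le.1 (Xt x hx)).2
    apply mul_nonpos_of_nonneg_of_nonpos (Real.exp_pos _).le
    apply mul_nonpos_of_nonneg_of_nonpos (by positivity)
    linarith) t ht
  have B2 := aux_le_of_deriv (fun t => -w t - h t) _ (fun t => (dw t).neg.sub (dh t)) (by
    intro x hx
    have := (abs_le.1 (Xt x hx)).1
    have : 0 ≤ Real.exp (μ * r ^ 2 * x) * (μ * r ^ 3 * (X x + (G * U * Real.exp (-(lam * r ^ 2 * x))))) := by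
      apply mul_nonneg (Real.exp_pos _).le
      apply mul_nonneg (by positivity)
      linarith
    linarith) t ht
  have h0 : h 0 = P := by simp [hh]
  have w0 : w 0 = W 0 := by simp [hw]
  simp only [h0, w0] at B1 B2
  set Em := Real.exp (-(μ * r ^ 2 * t)) with hEm
  set El := Real.exp (-(lam * r ^ 2 * t)) with hEl
  have hEm0 : 0 < Em := Real.exp_pos _
  have hEl0 : 0 < El := Real.exp_pos _
  have hEmw : Em * w t = W t := by
    simp only [hw]
    rw [← mul_assoc, hEm, ← Real.exp_add]; simp
  have hEmh : Em * h t = P * El := by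
    simp only [hh]
    rw [mul_left_comm, hEm, ← Real.exp_add, hEl]; congr 2; ring
  have hEmEl : Em ≤ El := by
    apply Real.exp_le_exp.2
    have : 0 ≤ r ^ 2 * t := by positivity
    nlinarith
  have hWd : |W t - Em * W 0| ≤ P * El := by
    have c1 := mul_le_mul_of_nonneg_left B1 hEm0.le
    have c2 := mul_le_mul_of_nonneg_left B2 hEm0.le
    have : 0 ≤ Em * P := by positivity
    rw [mul_sub, mul_sub, hEmw, hEmh] at c1
    rw [mul_sub, mul_sub, mul_neg, mul_neg, hEmw, hEmh] at c2
    rw [abs_le]; constructor <;> linarith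
  have fin : |B t - Em * B 0| ≤ C * (r * El) * U := by
    have e1 : B t - Em * B 0 = (W t - Em * W 0) + (-(r * X t)) + Em * (r * X 0) := by
      simp only [hW]; ring
    rw [e1]
    refine (abs_add_three _ _ _).trans ?_
    rw [abs_neg, abs_mul, abs_mul, abs_mul, abs_of_pos hr, abs_of_pos hEm0]
    have g1 : r * |X t| ≤ r * (G * U * El) := mul_le_mul_of_nonneg_left (Xt t ht) hr.le
    have g2 : Em * (r * |X 0|) ≤ El * (r * (A * U)) := by gcongr
    have g3 : C * (r * El) * U = P * El + r * (G * U * El) + El * (r * (A * U)) + r * El * U := by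
      rw [hC, hP]; ring
    have g4 : 0 ≤ r * El * U := by positivity
    rw [g3]; linarith
  have : (B t - Em * B 0) ^ 2 ≤ (C * (r * El) * U) ^ 2 := by
    rw [← sq_abs]; gcongr
  rw [mul_pow _ U, hU, Real.sq_sqrt hS0] at this
  exact this

lemma aux_complex (mi me νi νe e c : ℝ)
    (hmi : 0 < mi) (hme : 0 < me) (hνi : 0 < νi) (hνe : 0 < νe)
    (he : 0 < e) (hc : 0 < c) :
    ∃ C lam : ℝ, 0 < C ∧ 0 < lam ∧ ∀ r : ℝ, 0 < r → r ≤ 1 → ∀ a b f B : ℝ → ℂ,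
      (∀ t, HasDerivAt a (((e / mi : ℝ) : ℂ) * f t - (νi : ℂ) * a t) t) →
      (∀ t, HasDerivAt b (((-(e / me) : ℝ) : ℂ) * f t - (νe : ℂ) * b t) t) →
      (∀ t, HasDerivAt f (((c * r : ℝ) : ℂ) * B t - ((4 * π * e : ℝ) : ℂ) * (a t - b t)) t) →
      (∀ t, HasDerivAt B (((-(c * r) : ℝ) : ℂ) * f t) t) →
      ∀ t, 0 ≤ t →
        Complex.normSq (B t - ((Real.exp (-(c ^ 2 * mi * νi * me * νe / (4 * π * e ^ 2 * (mi * νi + me * νe))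
          * r ^ 2 * t)) : ℝ) : ℂ) * B 0) ≤
        (C * (r * Real.exp (-(lam * r ^ 2 * t)))) ^ 2 *
          (Complex.normSq (a 0) + Complex.normSq (b 0) + Complex.normSq (f 0) + Complex.normSq (B 0)) := by
  obtain ⟨C, lam, hC, hl, H⟩ := aux_real mi me νi νe e c hmi hme hνi hνe he hc
  refine ⟨C, lam, hC, hl, ?_⟩
  intro r hr hr1 a b f B ha hb hf hB t ht
  have hre : ∀ (g : ℝ → ℂ) (g' : ℂ) (t : ℝ), HasDerivAt g g' t → HasDerivAt (fun t => (g t).re) g'.re t := by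
    intro g g' t h
    exact (Complex.reCLM.hasFDerivAt.comp_hasDerivAt t h)
  have him : ∀ (g : ℝ → ℂ) (g' : ℂ) (t : ℝ), HasDerivAt g g' t → HasDerivAt (fun t => (g t).im) g'.im t := by
    intro g g' t h
    exact (Complex.imCLM.hasFDerivAt.comp_hasDerivAt t h)
  have R := H r hr hr1 (fun t => (a t).re) (fun t => (b t).re) (fun t => (f t).re) (fun t => (B t).re)
    (fun t => (hre _ _ t (ha t)).congr_deriv (by
      simp only [Complex.sub_re, Complex.re_ofReal_mul]))
    (fun t => (hre _ _ t (hb t)).congr_deriv (by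
      simp only [Complex.sub_re, Complex.re_ofReal_mul]))
    (fun t => (hre _ _ t (hf t)).congr_deriv (by
      simp only [Complex.sub_re, Complex.re_ofReal_mul]))
    (fun t => (hre _ _ t (hB t)).congr_deriv (by
      simp only [Complex.re_ofReal_mul])) t ht
  have I := H r hr hr1 (fun t => (a t).im) (fun t => (b t).im) (fun t => (f t).im) (fun t => (B t).im)
    (fun t => (him _ _ t (ha t)).congr_deriv (by
      simp only [Complex.sub_im, Complex.im_ofReal_mul]))
    (fun t => (him _ _ t (hb t)).congr_deriv (by
      simp only [Complex.sub_im, Complex.im_ofReal_mul]))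
    (fun t => (him _ _ t (hf t)).congr_deriv (by
      simp only [Complex.sub_im, Complex.im_ofReal_mul]))
    (fun t => (him _ _ t (hB t)).congr_deriv (by
      simp only [Complex.im_ofReal_mul])) t ht
  simp only [Complex.normSq_apply, Complex.sub_re, Complex.sub_im, Complex.re_ofReal_mul,
    Complex.im_ofReal_mul]
  refine le_trans (le_of_eq ?_) ((add_le_add R I).trans (le_of_eq ?_)) <;> ring

lemma aux_cross_deriv (k : Fin 3 → ℝ) (u : ℝ → Fin 3 → ℂ) (u' : Fin 3 → ℂ) (t : ℝ)
    (h : ∀ j, HasDerivAt (fun t => u t j) (u' j) t) (j : Fin 3) :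
    HasDerivAt (fun t => cross3 (ikv k) (u t) j) (cross3 (ikv k) u' j) t := by
  fin_cases j
  · exact ((h 2).const_mul (ikv k 1)).sub ((h 1).const_mul (ikv k 2))
  · exact ((h 0).const_mul (ikv k 2)).sub ((h 2).const_mul (ikv k 0))
  · exact ((h 1).const_mul (ikv k 0)).sub ((h 0).const_mul (ikv k 1))

lemma aux_cross_lin (k : Fin 3 → ℝ) (x y : ℂ) (u v : Fin 3 → ℂ) (j : Fin 3) :
    cross3 (ikv k) (fun j => x * u j - y * v j) j
      = x * cross3 (ikv k) u j - y * cross3 (ikv k) v j := by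
  fin_cases j <;> simp [cross3] <;> ring

lemma aux_cross_sub (k : Fin 3 → ℝ) (u v : Fin 3 → ℂ) (j : Fin 3) :
    cross3 (ikv k) (fun j => u j - v j) j
      = cross3 (ikv k) u j - cross3 (ikv k) v j := by
  fin_cases j <;> simp [cross3] <;> ring

lemma aux_cross_cross (k : Fin 3 → ℝ) (u : Fin 3 → ℂ) (h : ∑ j, (k j : ℂ) * u j = 0) (j : Fin 3) :
    cross3 (ikv k) (cross3 (ikv k) u) j = ((∑ j, (k j) ^ 2 : ℝ) : ℂ) * u j := by
  have hI : Complex.I ^ 2 = -1 := Complex.I_sq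
  simp only [Fin.sum_univ_three] at h ⊢
  push_cast
  fin_cases j
  · simp [cross3, ikv]
    linear_combination ((k 1 : ℂ) * k 0 * u 1 - k 1 ^ 2 * u 0 - k 2 ^ 2 * u 0 + k 2 * k 0 * u 2) * hI - (k 0 : ℂ) * h
  · simp [cross3, ikv]
    linear_combination ((k 2 : ℂ) * k 1 * u 2 - k 2 ^ 2 * u 1 - k 0 ^ 2 * u 1 + k 0 * k 1 * u 0) * hI - (k 1 : ℂ) * h
  · simp [cross3, ikv]
    linear_combination ((k 0 : ℂ) * k 2 * u 0 - k 0 ^ 2 * u 2 - k 1 ^ 2 * u 2 + k 1 * k 2 * u 1) * hI - (k 2 : ℂ) * h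

lemma aux_cross_norm (k : Fin 3 → ℝ) (u : Fin 3 → ℂ) :
    hsq (cross3 (ikv k) u) ≤ (∑ j, (k j) ^ 2) * hsq u := by
  simp only [hsq, Fin.sum_univ_three, cross3, ikv, Complex.normSq_apply]
  simp
  nlinarith [sq_nonneg (k 0 * (u 0).re + k 1 * (u 1).re + k 2 * (u 2).re),
    sq_nonneg (k 0 * (u 0).im + k 1 * (u 1).im + k 2 * (u 2).im)]

/-- Low-frequency error estimate between the magnetic field of the Fourier-transformed
transverse electromagnetic system and the magnetic diffusion wave, assuming the
zero-frequency cubic has three distinct roots. -/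
theorem stmt_18 (mi me νi νe e c : ℝ)
    (hmi : 0 < mi) (hme : 0 < me) (hνi : 0 < νi) (hνe : 0 < νe)
    (he : 0 < e) (hc : 0 < c)
    (hdisc : ∃ σ₂ σ₃ σ₄ : ℂ, σ₂ ≠ σ₃ ∧ σ₂ ≠ σ₄ ∧ σ₃ ≠ σ₄ ∧ ∀ z : ℂ,
      z ^ 3 + ((νi + νe : ℝ) : ℂ) * z ^ 2
        + ((νi * νe + 4 * π * (e ^ 2 / mi + e ^ 2 / me) : ℝ) : ℂ) * z
        + ((4 * π * (e ^ 2 * νe / mi + e ^ 2 * νi / me) : ℝ) : ℂ)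
        = (z - σ₂) * (z - σ₃) * (z - σ₄)) :
    ∃ r₀ C lam : ℝ, 0 < r₀ ∧ 0 < C ∧ 0 < lam ∧
      ∀ (k : Fin 3 → ℝ), k ≠ 0 → Real.sqrt (∑ j, (k j) ^ 2) ≤ r₀ →
      ∀ (ui ue E B : ℝ → Fin 3 → ℂ),
        Differentiable ℝ ui → Differentiable ℝ ue →
        Differentiable ℝ E → Differentiable ℝ B →
        (∀ t : ℝ, ∑ j, (k j : ℂ) * ui t j = 0) →
        (∀ t : ℝ, ∑ j, (k j : ℂ) * ue t j = 0) →
        (∀ t : ℝ, ∑ j, (k j : ℂ) * E t j = 0) →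
        (∀ t : ℝ, ∑ j, (k j : ℂ) * B t j = 0) →
        (∀ (t : ℝ) (j : Fin 3), (mi : ℂ) * deriv ui t j - (e : ℂ) * E t j
          + (mi : ℂ) * (νi : ℂ) * ui t j = 0) →
        (∀ (t : ℝ) (j : Fin 3), (me : ℂ) * deriv ue t j + (e : ℂ) * E t j
          + (me : ℂ) * (νe : ℂ) * ue t j = 0) →
        (∀ (t : ℝ) (j : Fin 3), deriv E t j - (c : ℂ) * cross3 (ikv k) (B t) j
          + 4 * (π : ℂ) * (e : ℂ) * (ui t j - ue t j) = 0) →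
        (∀ (t : ℝ) (j : Fin 3), deriv B t j + (c : ℂ) * cross3 (ikv k) (E t) j = 0) →
        (let ksq : ℝ := ∑ j, (k j) ^ 2
         let μ₂ : ℝ := c ^ 2 * mi * νi * me * νe / (4 * π * e ^ 2 * (mi * νi + me * νe))
         let U0 : ℝ := Real.sqrt (hsq (ui 0) + hsq (ue 0) + hsq (E 0) + hsq (B 0))
         ∀ t : ℝ, 0 ≤ t →
           hnorm (fun j => B t j - Complex.exp (-((μ₂ * ksq * t : ℝ) : ℂ)) * B 0 j) ≤
             C * (Real.sqrt ksq * Real.exp (-(lam * ksq * t)) + Real.exp (-(lam * t))) * U0) := by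
  obtain ⟨C, lam, hC, hl, H⟩ := aux_complex mi me νi νe e c hmi hme hνi hνe he hc
  refine ⟨1, C, lam, one_pos, hC, hl, ?_⟩
  intro k hk hk1 ui ue E B dui due dE dB _ _ _ hB0 eui eue eE eB ksq μ₂ U0 t ht
  have hksq : 0 < ksq := by
    obtain ⟨j, hj⟩ := Function.ne_iff.1 hk
    refine Finset.sum_pos' (fun i _ => sq_nonneg _) ⟨j, Finset.mem_univ _, ?_⟩
    have : k j ≠ 0 := hj
    positivity
  set r := Real.sqrt ksq with hr
  have hrpos : 0 < r := Real.sqrt_pos.2 hksq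
  have hr2 : r ^ 2 = ksq := Real.sq_sqrt hksq.le
  have hr1 : r ≤ 1 := hk1
  have hrc : (r : ℂ) ≠ 0 := by exact_mod_cast hrpos.ne'
  have hmic : (mi : ℂ) ≠ 0 := by exact_mod_cast hmi.ne'
  have hmec : (me : ℂ) ≠ 0 := by exact_mod_cast hme.ne'
  have hcoord : ∀ (u : ℝ → Fin 3 → ℂ), Differentiable ℝ u → ∀ t j,
      HasDerivAt (fun t => u t j) (deriv u t j) t := by
    intro u hu t
    exact hasDerivAt_pi.1 (hu t).hasDerivAt
  have Dui : ∀ t, deriv ui t = fun j => ((e / mi : ℝ) : ℂ) * E t j - (νi : ℂ) * ui t j := by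
    intro t; funext j
    have := eui t j
    push_cast
    field_simp
    linear_combination this
  have Due : ∀ t, deriv ue t = fun j => ((-(e / me) : ℝ) : ℂ) * E t j - (νe : ℂ) * ue t j := by
    intro t; funext j
    have := eue t j
    push_cast
    field_simp
    linear_combination this
  have DE : ∀ t, deriv E t = fun j => (c : ℂ) * cross3 (ikv k) (B t) j
      - ((4 * π * e : ℝ) : ℂ) * (fun j => ui t j - ue t j) j := by
    intro t; funext j
    have := eE t j
    push_cast
    linear_combination this
  have DB : ∀ t j, deriv B t j = - ((c : ℂ) * cross3 (ikv k) (E t) j) := by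
    intro t j
    linear_combination eB t j
  have main : ∀ j, Complex.normSq (B t j - Complex.exp (-((μ₂ * ksq * t : ℝ) : ℂ)) * B 0 j) ≤
      (C * (r * Real.exp (-(lam * ksq * t)))) ^ 2 *
      (Complex.normSq (((r⁻¹ : ℝ) : ℂ) * cross3 (ikv k) (ui 0) j)
        + Complex.normSq (((r⁻¹ : ℝ) : ℂ) * cross3 (ikv k) (ue 0) j)
        + Complex.normSq (((r⁻¹ : ℝ) : ℂ) * cross3 (ikv k) (E 0) j) + Complex.normSq (B 0 j)) := by
    intro j
    have h := H r hrpos hr1 (fun t => ((r⁻¹ : ℝ) : ℂ) * cross3 (ikv k) (ui t) j)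
      (fun t => ((r⁻¹ : ℝ) : ℂ) * cross3 (ikv k) (ue t) j)
      (fun t => ((r⁻¹ : ℝ) : ℂ) * cross3 (ikv k) (E t) j) (fun t => B t j)
      (fun t => ((aux_cross_deriv k ui _ t (hcoord ui dui t) j).const_mul _).congr_deriv (by
        rw [Dui, aux_cross_lin]; ring))
      (fun t => ((aux_cross_deriv k ue _ t (hcoord ue due t) j).const_mul _).congr_deriv (by
        rw [Due, aux_cross_lin]; ring))
      (fun t => ((aux_cross_deriv k E _ t (hcoord E dE t) j).const_mul _).congr_deriv (by
        rw [DE, aux_cross_lin, aux_cross_sub, aux_cross_cross k _ (hB0 t)]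
        rw [show (∑ j, (k j) ^ 2 : ℝ) = r ^ 2 from hr2.symm]
        push_cast
        field_simp))
      (fun t => (hcoord B dB t j).congr_deriv (by
        rw [DB]
        push_cast
        field_simp)) t ht
    rw [hr2] at h
    have hex : Complex.exp (-((μ₂ * ksq * t : ℝ) : ℂ)) = ((Real.exp (-(μ₂ * ksq * t)) : ℝ) : ℂ) := by
      push_cast; rfl
    rw [hex]
    exact h
  have hred : ∀ u : Fin 3 → ℂ, ∑ j, Complex.normSq (((r⁻¹ : ℝ) : ℂ) * cross3 (ikv k) u j) ≤ hsq u := by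
    intro u
    simp only [Complex.normSq_mul, Complex.normSq_ofReal]
    rw [← Finset.mul_sum]
    have h := aux_cross_norm k u
    rw [show (∑ j, (k j) ^ 2 : ℝ) = r ^ 2 from hr2.symm] at h
    calc r⁻¹ * r⁻¹ * ∑ j, Complex.normSq (cross3 (ikv k) u j) ≤ r⁻¹ * r⁻¹ * (r ^ 2 * hsq u) :=
          mul_le_mul_of_nonneg_left h (by positivity)
      _ = hsq u := by field_simp
  have hsum : hsq (fun j => B t j - Complex.exp (-((μ₂ * ksq * t : ℝ) : ℂ)) * B 0 j) ≤
      (C * (r * Real.exp (-(lam * ksq * t)))) ^ 2 *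
        (hsq (ui 0) + hsq (ue 0) + hsq (E 0) + hsq (B 0)) := by
    refine (Finset.sum_le_sum (fun j _ => main j)).trans ?_
    rw [← Finset.mul_sum]
    apply mul_le_mul_of_nonneg_left _ (sq_nonneg _)
    simp only [Finset.sum_add_distrib]
    exact add_le_add (add_le_add (add_le_add (hred _) (hred _)) (hred _)) le_rfl
  have hfin := Real.sqrt_le_sqrt hsum
  rw [Real.sqrt_mul (sq_nonneg _), Real.sqrt_sq (by positivity)] at hfin
  refine hfin.trans ?_
  apply mul_le_mul_of_nonneg_right _ (Real.sqrt_nonneg _)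
  apply mul_le_mul_of_nonneg_left _ hC.le
  have := Real.exp_pos (-(lam * t))
  linarith
end
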